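/- The set of pairs (α, β) ∈ ℝ² for which liminf_{n→∞} n · ‖nα‖ · ‖nβ‖ > 0 (i.e. the set of exceptions to Littlewood's conjecture) has Hausdorff dimension zero. -/

import Mathlib

open Filter

/-- The distance from a real number to the nearest integer. -/
noncomputable def distToInt (x : ℝ) : ℝ := |x - round x|

namespace LW
open Topology MeasureTheory Matrix

abbrev Mat := Matrix (Fin 3) (Fin 3) ℝ
abbrev IMat := Matrix (Fin 3) (Fin 3) ℤ

def cst (v : Fin 3 → ℤ) : Fin 3 → ℝ := fun i => (v i : ℝ)
def ic (P : IMat) : Mat := P.map (fun z : ℤ => (z : ℝ))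

lemma ic_eq (P : IMat) : ic P = (Int.castRingHom ℝ).mapMatrix P := rfl
lemma ic_mul (P Q : IMat) : ic (P * Q) = ic P * ic Q := by rw [ic_eq, ic_eq, ic_eq, map_mul]
lemma ic_one : ic 1 = 1 := by simp [ic_eq]
lemma ic_neg (P : IMat) : ic (-P) = - ic P := by rw [ic_eq, ic_eq, map_neg]
lemma ic_det (P : IMat) : (ic P).det = (P.det : ℝ) := by
  rw [ic_eq, ← RingHom.map_det]; rfl
lemma ic_mulVec (P : IMat) (v : Fin 3 → ℤ) : ic P *ᵥ cst v = cst (P *ᵥ v) := by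
  ext i; simp [ic, cst, Matrix.mulVec, dotProduct]
lemma cst_ne {v : Fin 3 → ℤ} (h : v ≠ 0) : cst v ≠ 0 := by
  intro h0; apply h; ext i; have := congrFun h0 i; simpa [cst] using this

def XX (ε : ℝ) : Set Mat :=
  {g | |g.det| = 1 ∧ ∀ v : Fin 3 → ℤ, v ≠ 0 → ε ≤ |∏ i, (g *ᵥ cst v) i|}

lemma isClosed_XX (ε : ℝ) : IsClosed (XX ε) := by
  have h1 : IsClosed {g : Mat | |g.det| = 1} :=
    isClosed_eq (continuous_id.matrix_det.abs) continuous_const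
  have : XX ε = {g : Mat | |g.det| = 1} ∩
      ⋂ v : Fin 3 → ℤ, ⋂ _ : v ≠ 0, {g : Mat | ε ≤ |∏ i, (g *ᵥ cst v) i|} := by
    ext g; simp [XX]
  rw [this]
  refine h1.inter (isClosed_iInter fun v => isClosed_iInter fun _ => ?_)
  refine isClosed_le continuous_const (Continuous.abs (continuous_finsetProd _ fun i _ => ?_))
  have : Continuous fun g : Mat => g *ᵥ cst v := Continuous.matrix_mulVec continuous_id continuous_const
  exact (continuous_apply i).comp this

/-- lattice equivalence -/
def Rel (B x : Mat) : Prop := |B.det| = 1 ∧ ∃ P : IMat, |P.det| = 1 ∧ x = B * ic P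

lemma abs_one_inv {d : ℝ} (h : |d| = 1) : d * d = 1 := by
  rw [← abs_mul_abs_self, h]; norm_num

lemma abs_one_inv_int {d : ℤ} (h : |d| = 1) : d * d = 1 := by
  rw [← abs_mul_abs_self, h]; norm_num

lemma Rel.det {B x : Mat} (h : Rel B x) : |x.det| = 1 := by
  obtain ⟨hB, P, hP, rfl⟩ := h
  rw [det_mul, abs_mul, hB, ic_det, ← Int.cast_abs, hP]; simp

lemma Rel.refl {B : Mat} (h : |B.det| = 1) : Rel B B := ⟨h, 1, by simp, by simp [ic_one]⟩

lemma Rel.trans {a b c : Mat} (h : Rel a b) (h' : Rel b c) : Rel a c := by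
  obtain ⟨ha, P, hP, rfl⟩ := h
  obtain ⟨-, Q, hQ, rfl⟩ := h'
  exact ⟨ha, P * Q, by rw [det_mul, abs_mul, hP, hQ]; simp, by rw [ic_mul, Matrix.mul_assoc]⟩

lemma int_inv {P : IMat} (hP : |P.det| = 1) : ∃ Q : IMat, |Q.det| = 1 ∧ P * Q = 1 ∧ Q * P = 1 := by
  have hu : IsUnit P.det := Int.isUnit_iff_abs_eq.2 hP
  refine ⟨P⁻¹, ?_, P.mul_nonsing_inv hu, P.nonsing_inv_mul hu⟩
  have : P.det * P⁻¹.det = 1 := by rw [← det_mul, P.mul_nonsing_inv hu, det_one]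
  have h2 := congrArg abs this
  rw [abs_mul, hP] at h2; simpa using h2

lemma Rel.symm {a b : Mat} (h : Rel a b) : Rel b a := by
  have hd := h.det
  obtain ⟨ha, P, hP, rfl⟩ := h
  obtain ⟨Q, hQ, hPQ, -⟩ := int_inv hP
  exact ⟨hd, Q, hQ, by rw [Matrix.mul_assoc, ← ic_mul, hPQ, ic_one, Matrix.mul_one]⟩

lemma Rel.lmul {a b : Mat} (h : Rel a b) {g : Mat} (hg : |g.det| = 1) : Rel (g * a) (g * b) := by
  obtain ⟨ha, P, hP, rfl⟩ := h
  exact ⟨by rw [det_mul, abs_mul, hg, ha, one_mul], P, hP, by rw [Matrix.mul_assoc]⟩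

lemma Rel.mem {ε : ℝ} {a b : Mat} (h : Rel a b) (hx : a ∈ XX ε) : b ∈ XX ε := by
  refine ⟨h.det, fun v hv => ?_⟩
  obtain ⟨ha, P, hP, rfl⟩ := h
  obtain ⟨Q, hQ, hPQ, hQP⟩ := int_inv hP
  rw [← Matrix.mulVec_mulVec, ic_mulVec]
  refine hx.2 _ fun h0 => hv ?_
  have := congrArg (fun w => Q *ᵥ w) h0
  simpa [Matrix.mulVec_mulVec, hQP] using this

lemma Rel.iff_adj {B x : Mat} : Rel B x ↔
    |B.det| = 1 ∧ |x.det| = 1 ∧ ∀ i j, (B.adjugate * x) i j ∈ Set.range (fun z : ℤ => (z : ℝ)) := by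
  constructor
  · intro h
    refine ⟨h.1, h.det, fun i j => ?_⟩
    obtain ⟨ha, P, hP, rfl⟩ := h
    rw [← Matrix.mul_assoc, adjugate_mul, Matrix.smul_mul, Matrix.one_mul]
    rcases eq_or_eq_neg_of_abs_eq ha with h | h <;> rw [h]
    · exact ⟨P i j, by simp [ic]⟩
    · exact ⟨-P i j, by simp [ic]⟩
  · rintro ⟨hB, hx, hi⟩
    choose Q hQ using hi
    have hQ' : B.adjugate * x = ic (Matrix.of Q) := by ext i j; simp [ic, hQ]
    have h1 : B * ic (Matrix.of Q) = B.det • x := by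
      rw [← hQ', ← Matrix.mul_assoc, mul_adjugate, Matrix.smul_mul, Matrix.one_mul]
    have hx2 : ∃ P : IMat, x = B * ic P := by
      rcases eq_or_eq_neg_of_abs_eq hB with h | h
      · exact ⟨Matrix.of Q, by rw [h1, h, one_smul]⟩
      · exact ⟨-Matrix.of Q, by rw [ic_neg, Matrix.mul_neg, h1, h]; simp⟩
    obtain ⟨P, rfl⟩ := hx2
    refine ⟨hB, P, ?_, rfl⟩
    rw [det_mul, abs_mul, hB, ic_det, one_mul] at hx
    exact_mod_cast hx

lemma isClosed_Rel : IsClosed {p : Mat × Mat | Rel p.1 p.2} := by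
  have : {p : Mat × Mat | Rel p.1 p.2} = {p : Mat × Mat | |p.1.det| = 1} ∩
    ({p : Mat × Mat | |p.2.det| = 1} ∩ ⋂ i, ⋂ j,
      {p : Mat × Mat | (p.1.adjugate * p.2) i j ∈ Set.range (fun z : ℤ => (z : ℝ))}) := by
    ext p; simp [Rel.iff_adj]
  rw [this]
  refine (isClosed_eq continuous_fst.matrix_det.abs continuous_const).inter
    ((isClosed_eq continuous_snd.matrix_det.abs continuous_const).inter
    (isClosed_iInter fun i => isClosed_iInter fun j => ?_))
  refine IsClosed.preimage ?_ Int.isClosedEmbedding_coe_real.isClosed_range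
  exact (continuous_fst.matrix_adjugate.matrix_mul continuous_snd).matrix_elem i j

/-- Minkowski -/
lemma minkowski (g : Mat) (hg : |g.det| = 1) (r : Fin 3 → ℝ) (hr : ∀ i, 0 < r i)
    (hp : 1 < ∏ i, r i) : ∃ v : Fin 3 → ℤ, v ≠ 0 ∧ ∀ i, |(g *ᵥ cst v) i| ≤ r i := by
  classical
  set b := Pi.basisFun ℝ (Fin 3)
  set s : Set (Fin 3 → ℝ) := (Matrix.toLin' g) ⁻¹' (Set.univ.pi fun i => Set.Icc (- r i) (r i))
  have fund := ZSpan.isAddFundamentalDomain b (volume : Measure (Fin 3 → ℝ))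
  have hconv : Convex ℝ s := by
    apply Convex.linear_preimage
    exact convex_pi fun i _ => convex_Icc _ _
  have hsymm : ∀ x ∈ s, -x ∈ s := by
    intro x hx
    simp only [s, Set.mem_preimage, Set.mem_pi, Set.mem_Icc, map_neg, Pi.neg_apply] at hx ⊢
    intro i _; have := hx i trivial; constructor <;> linarith [this.1, this.2]
  have hvol : volume (ZSpan.fundamentalDomain b) * 2 ^ Module.finrank ℝ (Fin 3 → ℝ) < volume s := by
    have h1 : volume (ZSpan.fundamentalDomain b) = 1 := by
      rw [ZSpan.volume_fundamentalDomain]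
      have : (Matrix.of b : Mat) = 1 := by
        ext i j; simp [b, Matrix.one_apply, Pi.single_apply, eq_comm]
      rw [this]; simp
    have hdet : LinearMap.det (Matrix.toLin' g) = g.det := LinearMap.det_toLin' g
    have h2 : volume s = ENNReal.ofReal (∏ i, (2 * r i)) := by
      rw [Measure.addHaar_preimage_linearMap _ (by
        rw [hdet]; intro h; rw [h] at hg; simp at hg), hdet, abs_inv, hg,
        volume_pi, Measure.pi_pi]
      simp only [Real.volume_Icc, inv_one, ENNReal.ofReal_one, one_mul]
      rw [ENNReal.ofReal_prod_of_nonneg (fun i _ => by have := hr i; positivity)]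
      congr 1; ext i; congr 1; ring
    rw [h1, h2, one_mul]
    simp only [Module.finrank_fintype_fun_eq_card, Fintype.card_fin]
    have : ∏ i, (2 * r i) = 8 * ∏ i, r i := by rw [Finset.prod_mul_distrib]; norm_num
    rw [this, show (2:ENNReal)^3 = ENNReal.ofReal 8 by norm_num]
    exact ENNReal.ofReal_lt_ofReal_iff_of_nonneg (by norm_num) |>.2 (by linarith)
  have := fund
  have : Countable (Submodule.span ℤ (Set.range b)).toAddSubgroup := by
    have : Countable (Submodule.span ℤ (Set.range b)) := inferInstance
    exact this
  obtain ⟨x, hx0, hxs⟩ := exists_ne_zero_mem_lattice_of_measure_mul_two_pow_lt_measure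
    (L := (Submodule.span ℤ (Set.range b)).toAddSubgroup) fund hsymm hconv hvol
  have hxm : (x : Fin 3 → ℝ) ∈ Submodule.span ℤ (Set.range b) := x.2
  have := (b.mem_span_iff_repr_mem ℤ (x : Fin 3 → ℝ)).1 hxm
  choose v hv using this
  have hxv : (x : Fin 3 → ℝ) = cst v := by
    ext i; simpa [b, cst] using (hv i).symm
  refine ⟨v, ?_, fun i => ?_⟩
  · rintro rfl
    apply hx0; ext i; rw [hxv]; simp [cst]
  · rw [hxv] at hxs
    simp only [s, Set.mem_preimage, Set.mem_pi, Set.mem_Icc] at hxs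
    have := hxs i trivial
    rw [Matrix.toLin'_apply] at this
    exact abs_le.2 this

end LW

namespace LW
open Topology MeasureTheory Matrix

lemma descent (g : Mat) (hg : |g.det| = 1) : ∀ n : ℕ, ∀ V : IMat, V.det.natAbs = n → n ≠ 0 →
    ∀ B : ℝ, 0 ≤ B → (∀ i j, |(g * ic V) i j| ≤ B) →
    ∃ x, Rel g x ∧ ∀ i j, |x i j| ≤ B * (3/2)^n := by
  intro n
  induction n using Nat.strong_induction_on with
  | _ n ih =>
  intro V hV hn B hB hb
  by_cases h1 : n = 1
  · refine ⟨g * ic V, ⟨hg, V, ?_, rfl⟩, fun i j => (hb i j).trans ?_⟩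
    · rw [Int.abs_eq_natAbs, hV, h1]; rfl
    · exact le_mul_of_one_le_right hB (one_le_pow₀ (by norm_num))
  · have hd : V.det ≠ 0 := by intro h; rw [h] at hV; simp at hV; exact hn hV.symm
    have hdR : (ic V).det ≠ 0 := by rw [ic_det]; exact_mod_cast hd
    have hu : IsUnit (ic V).det := isUnit_iff_ne_zero.2 hdR
    -- some noninteger entry
    have : ∃ j k, ∀ z : ℤ, (z : ℝ) ≠ ((ic V)⁻¹) k j := by
      by_contra hcon
      push Not at hcon
      choose Q hQ using hcon
      have hQ' : (ic V)⁻¹ = ic (Matrix.of fun k j => Q j k) := by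
        ext k j; simp [ic, hQ]
      have h2 : ic V * ic (Matrix.of fun k j => Q j k) = 1 := by
        rw [← hQ']; exact Matrix.mul_nonsing_inv _ hu
      have h3 := congrArg Matrix.det h2
      rw [det_mul, ic_det, ic_det, det_one] at h3
      have h4 : V.det * (Matrix.of fun k j => Q j k).det = 1 := by exact_mod_cast h3
      have := Int.natAbs_of_isUnit (IsUnit.of_mul_eq_one _ h4)
      omega
    obtain ⟨j, k, hjk⟩ := this
    set q : Fin 3 → ℝ := fun i => (ic V)⁻¹ i j with hq
    set c : Fin 3 → ℝ := fun i => q i - round (q i) with hc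
    have hc2 : ∀ i, |c i| ≤ 1/2 := fun i => abs_sub_round _
    have hck : c k ≠ 0 := by
      intro h; apply hjk (round (q k)); simp only [hc] at h; linarith
    set e : Fin 3 → ℤ := Pi.single j 1 - V *ᵥ (fun i => round (q i)) with he
    have hVc : ic V *ᵥ c = cst e := by
      have hqv : ic V *ᵥ q = cst (Pi.single j 1) := by
        have : q = (ic V)⁻¹ *ᵥ cst (Pi.single j 1) := by
          ext i; simp [hq, cst, Matrix.mulVec, dotProduct, Pi.single_apply]
        rw [this, Matrix.mulVec_mulVec, Matrix.mul_nonsing_inv _ hu, Matrix.one_mulVec]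
      have : c = q - cst (fun i => round (q i)) := by ext i; simp [hc, cst]
      rw [this, Matrix.mulVec_sub, hqv, ic_mulVec]
      ext i; simp [cst, he]
    set V' : IMat := V.updateCol k e with hV'
    have hicV' : ic V' = (ic V).updateCol k (cst e) := by
      ext a b; simp only [ic, hV', Matrix.map_apply, Matrix.updateCol_apply, cst]
      split_ifs <;> rfl
    have hdet' : (V'.det : ℝ) = V.det * c k := by
      rw [← ic_det, hicV', ← Matrix.cramer_apply, cramer_eq_adjugate_mulVec, ← hVc,
        Matrix.mulVec_mulVec, adjugate_mul, ic_det, smul_mulVec, one_mulVec]; rfl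
    have habs : |(V'.det : ℝ)| ≤ |(V.det:ℝ)| / 2 := by
      rw [hdet', abs_mul]; have := hc2 k; nlinarith [abs_nonneg (V.det:ℝ)]
    have hnR : |(V.det : ℝ)| = n := by
      rw [← hV]; simp [Nat.cast_natAbs]
    have hlt : V'.det.natAbs < n := by
      have : ((V'.det.natAbs : ℕ) : ℝ) = |(V'.det : ℝ)| := by simp [Nat.cast_natAbs]
      have hnpos : (0:ℝ) < n := by exact_mod_cast Nat.pos_of_ne_zero hn
      have : ((V'.det.natAbs : ℕ) : ℝ) < n := by rw [this]; linarith
      exact_mod_cast this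
    have hne : V'.det.natAbs ≠ 0 := by
      intro h
      have h0 : V'.det = 0 := by omega
      rw [h0] at hdet'
      have hVR : (V.det : ℝ) ≠ 0 := by exact_mod_cast hd
      simp only [Int.cast_zero] at hdet'
      exact mul_ne_zero hVR hck hdet'.symm
    obtain ⟨x, hx, hxb⟩ := ih _ hlt V' rfl hne (B * (3/2)) (by positivity) (by
      intro i l
      rw [hicV']
      by_cases hl : l = k
      · subst hl
        have : (g * (ic V).updateCol l (cst e)) i l = ∑ m, (g * ic V) i m * c m := by
          have h5 : (g * (ic V).updateCol l (cst e)) i l = (g *ᵥ (cst e)) i := by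
            simp [Matrix.mul_apply, Matrix.mulVec, dotProduct]
          rw [h5, ← hVc, Matrix.mulVec_mulVec]; rfl
        rw [this, Fin.sum_univ_three]
        have a1 := hb i 0; have a2 := hb i 1; have a3 := hb i 2
        have b1 := hc2 0; have b2 := hc2 1; have b3 := hc2 2
        have key : ∀ u w : ℝ, |u| ≤ B → |w| ≤ 1/2 → |u * w| ≤ B * (1/2) := by
          intro u w h1 h2; rw [abs_mul]; exact mul_le_mul h1 h2 (abs_nonneg _) hB
        have := key _ _ a1 b1; have := key _ _ a2 b2; have := key _ _ a3 b3
        refine (abs_add_three _ _ _).trans ?_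
        linarith
      · have : (g * (ic V).updateCol k (cst e)) i l = (g * ic V) i l := by
          simp [Matrix.mul_apply, Matrix.updateCol_apply, hl]
        rw [this]; have := hb i l; linarith)
    refine ⟨x, hx, fun i j => (hxb i j).trans ?_⟩
    rw [mul_assoc, ← pow_succ']
    exact mul_le_mul_of_nonneg_left (pow_le_pow_right₀ (by norm_num) hlt) hB

lemma reduction (ε : ℝ) (hε : 0 < ε) : ∃ K C : ℝ, ∀ g : Mat, |g.det| = 1 →
    (∀ v : Fin 3 → ℤ, v ≠ 0 → (∀ i, |(g *ᵥ cst v) i| ≤ K) → ε ≤ |∏ i, (g *ᵥ cst v) i|) →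
    ∃ x, Rel g x ∧ ∀ i j, |x i j| ≤ C := by
  obtain ⟨k, hk1, hk2⟩ : ∃ k : ℝ, 1 ≤ k ∧ 2 < ε * k := by
    refine ⟨max 1 (3/ε), le_max_left _ _, ?_⟩
    have : 3/ε ≤ max 1 (3/ε) := le_max_right _ _
    have h3 : ε * (3/ε) = 3 := by field_simp
    nlinarith
  have hk0 : 0 < k := by linarith
  set B : ℝ := 2 * k^2 with hBdef
  have hB1 : 1 ≤ B := by nlinarith
  set Nn : ℕ := ⌈6 * B^3⌉₊
  refine ⟨B, B * (3/2)^Nn, fun g hg hgap => ?_⟩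
  have hinv : 1/k ≤ 1 := by rw [div_le_one hk0]; exact hk1
  have hvec : ∀ m : Fin 3, ∃ v : Fin 3 → ℤ, v ≠ 0 ∧
      ∀ i, |(g *ᵥ cst v) i| ≤ if i = m then B else 1/k := by
    intro m
    apply minkowski g hg
    · intro i; split_ifs <;> positivity
    · have : ∏ i : Fin 3, (if i = m then B else 1/k) = 2 := by
        fin_cases m <;> simp [Fin.prod_univ_three, hBdef] <;> field_simp
      rw [this]; norm_num
  choose v hv0 hvb using hvec
  have hdiag : ∀ m, ε * k^2 ≤ |(g *ᵥ cst (v m)) m| := by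
    intro m
    have h := hgap (v m) (hv0 m) (fun i => (hvb m i).trans (by split_ifs <;> linarith))
    rw [Finset.abs_prod, Fin.prod_univ_three] at h
    have h0 := hvb m 0; have h1 := hvb m 1; have h2 := hvb m 2
    have hkk : (1/k)*(1/k) * k^2 = 1 := by field_simp
    have key : ∀ a b c : ℝ, 0 ≤ a → 0 ≤ b → 0 ≤ c → a ≤ 1/k → b ≤ 1/k → ε ≤ a * b * c → ε * k^2 ≤ c := by
      intro a b c ha hb hc h1 h2 h3
      have : a * b ≤ (1/k)*(1/k) := mul_le_mul h1 h2 hb (by positivity)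
      have : a * b * c ≤ (1/k)*(1/k) * c := mul_le_mul_of_nonneg_right this hc
      calc ε * k^2 ≤ ((1/k)*(1/k) * c) * k^2 := by gcongr; linarith
        _ = ((1/k)*(1/k) * k^2) * c := by ring
        _ = c := by rw [hkk, one_mul]
    fin_cases m <;> simp at h0 h1 h2 ⊢
    · exact key _ _ _ (abs_nonneg _) (abs_nonneg _) (abs_nonneg _) (by simpa using h1) (by simpa using h2) (h.trans_eq (by simp; ring))
    · exact key _ _ _ (abs_nonneg _) (abs_nonneg _) (abs_nonneg _) (by simpa using h0) (by simpa using h2) (h.trans_eq (by simp; ring))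
    · exact key _ _ _ (abs_nonneg _) (abs_nonneg _) (abs_nonneg _) (by simpa using h0) (by simpa using h1) (h.trans_eq (by simp))
  set V : IMat := Matrix.of fun i m => v m i with hVdef
  have hW : ∀ i m, (g * ic V) i m = (g *ᵥ cst (v m)) i := by
    intro i m; simp [Matrix.mul_apply, Matrix.mulVec, dotProduct, ic, V, cst]
  have hWb : ∀ i m, |(g * ic V) i m| ≤ B := fun i m => by
    rw [hW]; exact (hvb m i).trans (by split_ifs <;> linarith)
  have hdet0 : (g * ic V).det ≠ 0 := by
    apply det_ne_zero_of_sum_col_lt_diag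
    intro m
    calc ∑ i ∈ Finset.univ.erase m, ‖(g * ic V) i m‖ ≤ ∑ i ∈ Finset.univ.erase m, (1/k) := by
          apply Finset.sum_le_sum; intro i hi
          have := hvb m i
          rw [if_neg (Finset.ne_of_mem_erase hi)] at this
          rw [Real.norm_eq_abs, hW]; exact this
      _ = 2 * (1/k) := by rw [Finset.sum_const, Finset.card_erase_of_mem (Finset.mem_univ _)]; simp
      _ ≤ 2 := by linarith
      _ < ε * k^2 := by nlinarith
      _ ≤ _ := by rw [Real.norm_eq_abs, hW]; exact hdiag m
  have hdetle : |(g * ic V).det| ≤ 6 * B^3 := by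
    have := Matrix.det_le (A := g * ic V) (abv := AbsoluteValue.abs) (x := B) (fun i j => hWb i j)
    simpa [Nat.factorial] using this
  have hdV : |(g * ic V).det| = V.det.natAbs := by
    rw [det_mul, abs_mul, hg, one_mul, ic_det]; simp [Nat.cast_natAbs]
  have hn0 : V.det.natAbs ≠ 0 := by
    intro h; rw [h] at hdV; simp only [Nat.cast_zero, abs_eq_zero] at hdV; exact hdet0 hdV
  obtain ⟨x, hx, hxb⟩ := descent g hg _ V rfl hn0 B (by linarith) hWb
  refine ⟨x, hx, fun i j => (hxb i j).trans ?_⟩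
  apply mul_le_mul_of_nonneg_left _ (by linarith)
  apply pow_le_pow_right₀ (by norm_num)
  rw [hdV] at hdetle
  exact_mod_cast hdetle.trans (Nat.le_ceil _)

end LW

namespace LW
open Topology MeasureTheory Matrix

def U (i j : Fin 3) (t : ℝ) : Mat := Matrix.transvection i j t

lemma U_det {i j : Fin 3} (h : i ≠ j) (t : ℝ) : (U i j t).det = 1 := det_transvection_of_ne i j h t
lemma U_absdet {i j : Fin 3} (h : i ≠ j) (t : ℝ) : |(U i j t).det| = 1 := by rw [U_det h]; simp
lemma U_add {i j : Fin 3} (h : i ≠ j) (s t : ℝ) : U i j s * U i j t = U i j (s + t) :=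
  transvection_mul_transvection_same i j h s t
lemma U_zero (i j : Fin 3) : U i j 0 = 1 := transvection_zero i j
lemma U_mulVec (i j : Fin 3) (t : ℝ) (w : Fin 3 → ℝ) (k : Fin 3) :
    (U i j t *ᵥ w) k = w k + if k = i then t * w j else 0 := by
  rw [U, transvection, add_mulVec, one_mulVec, Pi.add_apply]
  congr 1
  simp [Matrix.mulVec, dotProduct, Matrix.single_apply, eq_comm, ite_and]
lemma U_cont (i j : Fin 3) : Continuous (U i j) := by
  refine continuous_matrix fun a b => ?_
  simp only [U, transvection, Matrix.add_apply, Matrix.single_apply]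
  split_ifs <;> fun_prop

def S (ε : ℝ) (i j : Fin 3) (g : Mat) : Set ℝ := {w | U i j w * g ∈ XX ε}

lemma S_rel {ε : ℝ} {i j : Fin 3} (hij : i ≠ j) {g g' : Mat} (h : Rel g g') {w : ℝ}
    (hw : w ∈ S ε i j g) : w ∈ S ε i j g' :=
  (h.lmul (U_absdet hij w)).mem hw

lemma S_shift {ε : ℝ} {i j : Fin 3} (hij : i ≠ j) {g : Mat} {w b : ℝ} :
    w ∈ S ε i j (U i j b * g) ↔ w + b ∈ S ε i j g := by
  simp only [S, Set.mem_ofPred_eq]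
  rw [← Matrix.mul_assoc, U_add hij]

lemma S_closed (ε : ℝ) (i j : Fin 3) : IsClosed {p : Mat × ℝ | p.2 ∈ S ε i j p.1} := by
  have : Continuous fun p : Mat × ℝ => U i j p.2 * p.1 :=
    ((U_cont i j).comp continuous_snd).matrix_mul continuous_fst
  exact (isClosed_XX ε).preimage this

lemma third {i j : Fin 3} (hij : i ≠ j) : ∃ l, l ≠ i ∧ l ≠ j ∧
    ∀ f : Fin 3 → ℝ, ∏ k, f k = f i * f j * f l := by
  fin_cases i <;> fin_cases j <;> first | exact absurd rfl hij | skip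
  · exact ⟨2, by decide, by decide, fun f => by simp [Fin.prod_univ_three]⟩
  · exact ⟨1, by decide, by decide, fun f => by rw [Fin.prod_univ_three]; show _ = f _ * f _ * f _; simp only [Fin.zero_eta, Fin.mk_one, Fin.reduceFinMk]; ring⟩
  · exact ⟨2, by decide, by decide, fun f => by rw [Fin.prod_univ_three]; show _ = f _ * f _ * f _; simp only [Fin.zero_eta, Fin.mk_one, Fin.reduceFinMk]; ring⟩
  · exact ⟨0, by decide, by decide, fun f => by rw [Fin.prod_univ_three]; show _ = f _ * f _ * f _; simp only [Fin.zero_eta, Fin.mk_one, Fin.reduceFinMk]; ring⟩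
  · exact ⟨1, by decide, by decide, fun f => by rw [Fin.prod_univ_three]; show _ = f _ * f _ * f _; simp only [Fin.zero_eta, Fin.mk_one, Fin.reduceFinMk]; ring⟩
  · exact ⟨0, by decide, by decide, fun f => by rw [Fin.prod_univ_three]; show _ = f _ * f _ * f _; simp only [Fin.zero_eta, Fin.mk_one, Fin.reduceFinMk]; ring⟩

lemma no_period {ε : ℝ} (hε : 0 < ε) {i j : Fin 3} (hij : i ≠ j) {z : Mat} (hz : z ∈ XX ε) {b : ℝ}
    (hb : b ≠ 0) (h : ∀ w ∈ S ε i j z, w + b ∈ S ε i j z) : False := by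
  obtain ⟨l, hli, hlj, hprod⟩ := third hij
  have hmem : ∀ n : ℕ, U i j (n * b) * z ∈ XX ε := by
    intro n
    induction n with
    | zero => simpa [U_zero] using hz
    | succ n ih =>
      have := h _ ih
      simp only [S, Set.mem_ofPred_eq] at this
      convert this using 3; push_cast; ring
  have hb0 : 0 < |b| := abs_pos.2 hb
  obtain ⟨δ, hδ0, hδ1, hδ⟩ : ∃ δ : ℝ, 0 < δ ∧ δ ≤ 1 ∧ δ * |b| < ε := by
    refine ⟨min 1 (ε / (2 * |b|)), by positivity, min_le_left _ _, ?_⟩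
    have h1 : min 1 (ε / (2 * |b|)) ≤ ε / (2 * |b|) := min_le_right _ _
    have h2 : ε / (2 * |b|) * |b| = ε / 2 := by field_simp
    nlinarith
  obtain ⟨n, hn⟩ := exists_nat_ge ((2 / δ) / (|b| * (ε * δ / 2)) + 1)
  have hz' := hmem n
  obtain ⟨v, hv0, hvb⟩ := minkowski (U i j (n * b) * z) hz'.1
    (fun k => if k = i then 2/δ else if k = j then δ else 1)
    (fun k => by split_ifs <;> positivity) (by
      rw [hprod]; simp [hli, hlj, hij.symm]
      rw [div_mul_cancel₀ _ hδ0.ne']; norm_num)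
  have hge := hz'.2 v hv0
  set w := (U i j (n * b) * z) *ᵥ cst v with hw
  have hwi := hvb i; have hwj := hvb j; have hwl := hvb l
  simp only [if_true, hij.symm, if_false, hli, hlj] at hwi hwj hwl
  rw [Finset.abs_prod, hprod] at hge
  have hwjlow : ε * δ / 2 ≤ |w j| := by
    have h1 : |w i| * |w j| * |w l| ≤ 2/δ * |w j| * 1 := by gcongr
    have h2 : ε ≤ 2 / δ * |w j| := by linarith
    rw [div_mul_eq_mul_div, le_div_iff₀ hδ0] at h2
    linarith
  have hwj0 : 0 < |w j| := lt_of_lt_of_le (by positivity) hwjlow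
  have hwjne : w j ≠ 0 := abs_pos.1 hwj0
  set k : ℤ := round (-(w i) / (b * w j)) with hk
  have hkr : |-(w i) / (b * w j) - k| ≤ 1/2 := abs_sub_round _
  have hk1 : |w i + k * b * w j| ≤ |b| * |w j| := by
    have : w i + k * b * w j = -((-(w i) / (b * w j) - k) * (b * w j)) := by field_simp; ring
    rw [this, abs_neg, abs_mul, abs_mul b]
    have : 0 ≤ |b| * |w j| := by positivity
    nlinarith
  have hkn : -(n:ℝ) ≤ k := by
    have h1 : |-(w i) / (b * w j)| ≤ (2/δ) / (|b| * (ε * δ / 2)) := by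
      rw [abs_div, abs_neg, abs_mul]
      gcongr
    have h2 := (abs_le.1 h1).1
    have h3 := (abs_le.1 hkr).2
    linarith
  have hkn' : 0 ≤ (n:ℤ) + k := by
    have : (-(n:ℤ):ℝ) ≤ (k:ℝ) := by simpa using hkn
    have : -(n:ℤ) ≤ k := by exact_mod_cast this
    linarith
  obtain ⟨m, hm⟩ := Int.eq_ofNat_of_zero_le hkn'
  have hfin := (hmem m).2 v hv0
  have hUm : (U i j (m * b) * z) *ᵥ cst v = U i j (k * b) *ᵥ w := by
    rw [hw, Matrix.mulVec_mulVec, ← Matrix.mul_assoc, U_add hij]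
    congr 3
    have : (m:ℝ) = n + k := by
      have := congrArg (fun z : ℤ => (z:ℝ)) hm
      simp at this; linarith
    rw [this]; ring
  rw [hUm, Finset.abs_prod, hprod, U_mulVec, U_mulVec, U_mulVec] at hfin
  simp only [if_true, hij.symm, hli, if_false, add_zero] at hfin
  have : |w i + k * b * w j| * |w j| * |w l| ≤ (|b| * δ) * δ * 1 := by
    have : |b| * |w j| ≤ |b| * δ := by gcongr
    gcongr
    exact hk1.trans this
  nlinarith

/-- diagonal -/
noncomputable def A (M : ℝ) (a b : ℤ) : Mat := Matrix.diagonal ![M ^ (a + b), M ^ (a - 2 * b), M ^ (b - 2 * a)]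

lemma A_add {M : ℝ} (hM : M ≠ 0) (a b a' b' : ℤ) : A M a b * A M a' b' = A M (a + a') (b + b') := by
  simp only [A, diagonal_mul_diagonal]
  congr 1; ext k; fin_cases k <;> simp [← zpow_add₀ hM] <;> congr 1 <;> ring
lemma A_zero (M : ℝ) : A M 0 0 = 1 := by
  ext i j; fin_cases i <;> fin_cases j <;> simp [A]
lemma A_det {M : ℝ} (hM : M ≠ 0) (a b : ℤ) : (A M a b).det = 1 := by
  simp only [A, det_diagonal, Fin.prod_univ_three]
  simp only [cons_val, ← zpow_add₀ hM]
  rw [show a + b + (a - 2 * b) + (b - 2 * a) = 0 by ring, zpow_zero]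
lemma A_absdet {M : ℝ} (hM : M ≠ 0) (a b : ℤ) : |(A M a b).det| = 1 := by rw [A_det hM]; simp

lemma diag_mem {ε : ℝ} {g : Mat} (hg : g ∈ XX ε) (d : Fin 3 → ℝ) (hd : |∏ i, d i| = 1) :
    Matrix.diagonal d * g ∈ XX ε := by
  refine ⟨by rw [det_mul, abs_mul, det_diagonal, hd, hg.1, one_mul], fun v hv => ?_⟩
  have : ∏ i, ((Matrix.diagonal d * g) *ᵥ cst v) i = (∏ i, d i) * ∏ i, (g *ᵥ cst v) i := by
    rw [← Finset.prod_mul_distrib]; congr 1; ext i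
    rw [← Matrix.mulVec_mulVec, Matrix.mulVec_diagonal]
  rw [this, abs_mul, hd, one_mul]; exact hg.2 v hv

lemma A_mem {ε M : ℝ} (hM : M ≠ 0) {g : Mat} (hg : g ∈ XX ε) (a b : ℤ) : A M a b * g ∈ XX ε := by
  apply diag_mem hg
  have := A_absdet hM a b
  rwa [A, det_diagonal] at this

lemma A_conj {M : ℝ} (hM : M ≠ 0) (a b : ℤ) (g : Mat) : A M a b * g =
    !![g 0 0, M ^ (3 * b) * g 0 1, M ^ (3 * a) * g 0 2;
       M ^ (-3 * b) * g 1 0, g 1 1, M ^ (3 * a - 3 * b) * g 1 2;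
       M ^ (-3 * a) * g 2 0, M ^ (3 * b - 3 * a) * g 2 1, g 2 2] * A M a b := by
  ext i j
  simp only [A, diagonal_mul, mul_diagonal]
  have key : ∀ p q r : ℤ, p = q + r → ∀ x, M ^ p * x = M ^ q * x * M ^ r := by
    intro p q r h x; rw [h, zpow_add₀ hM]; ring
  fin_cases i <;> fin_cases j <;> first | exact mul_comm _ _ | exact key _ _ _ (by ring) _

lemma A_U01 {M : ℝ} (hM : M ≠ 0) (a b : ℤ) (t : ℝ) :
    A M a b * U 0 1 t = U 0 1 (M ^ (3 * b) * t) * A M a b := by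
  rw [A_conj hM]; congr 1
  ext i j; fin_cases i <;> fin_cases j <;> simp [U, transvection]
lemma A_U02 {M : ℝ} (hM : M ≠ 0) (a b : ℤ) (t : ℝ) :
    A M a b * U 0 2 t = U 0 2 (M ^ (3 * a) * t) * A M a b := by
  rw [A_conj hM]; congr 1
  ext i j; fin_cases i <;> fin_cases j <;> simp [U, transvection]
lemma A_U21 {M : ℝ} (hM : M ≠ 0) (a b : ℤ) (t : ℝ) :
    A M a b * U 2 1 t = U 2 1 (M ^ (3 * b - 3 * a) * t) * A M a b := by
  rw [A_conj hM]; congr 1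
  ext i j; fin_cases i <;> fin_cases j <;> simp [U, transvection]

end LW

namespace LW
open Topology MeasureTheory Matrix

structure Par where
  ε : ℝ
  C : ℝ
  M : ℕ
  hε : 0 < ε
  hM : 2 ≤ M
  red : ∀ g ∈ XX ε, ∃ x, Rel g x ∧ ∀ i j, |x i j| ≤ C

namespace Par
variable (P : Par)
lemma M0 : (P.M : ℝ) ≠ 0 := by have := P.hM; positivity
lemma M1 : (1:ℝ) < P.M := by have := P.hM; exact_mod_cast (by omega : 1 < P.M)
noncomputable def q (l : ℤ) : ℝ := (P.M : ℝ) ^ (3 * l)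
lemma q_pos (l : ℤ) : 0 < P.q l := by have := P.M1; unfold q; positivity
lemma q_zero : P.q 0 = 1 := by simp [q]
lemma q_add (a b : ℤ) : P.q (a + b) = P.q a * P.q b := by
  rw [q, mul_add, zpow_add₀ P.M0]; rfl
lemma q_mono {a b : ℤ} (h : a ≤ b) : P.q a ≤ P.q b :=
  zpow_le_zpow_right₀ P.M1.le (by omega)
lemma q_neg (a : ℤ) : P.q (-a) * P.q a = 1 := by rw [← q_add]; simp [q_zero]
lemma q_one : 8 ≤ P.q 1 := by
  have h : (2:ℝ) ≤ P.M := by exact_mod_cast P.hM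
  have : P.q 1 = (P.M:ℝ)^3 := by simp [q]; try norm_cast
  rw [this]; nlinarith [sq_nonneg ((P.M:ℝ) - 2), mul_le_mul h h (by norm_num) (by linarith)]
lemma q_nat (n : ℕ) : P.q n = (P.q 1) ^ n := by
  induction n with
  | zero => simp [q_zero]
  | succ n ih => push_cast; rw [q_add, ih, pow_succ]
lemma q_tendsto : Tendsto (fun n : ℕ => P.q (-(n:ℤ))) atTop (𝓝 0) := by
  have h : ∀ n : ℕ, P.q (-(n:ℤ)) = (P.q 1)⁻¹ ^ n := fun n => by
    rw [inv_pow, ← q_nat]; exact eq_inv_of_mul_eq_one_left (P.q_neg n)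
  simp only [h]
  have := P.q_one
  exact tendsto_pow_atTop_nhds_zero_of_lt_one (by positivity) (inv_lt_one_of_one_lt₀ (by linarith))

noncomputable def a (i j : ℤ) : Mat := A P.M i j
lemma a_add (i j i' j' : ℤ) : P.a i j * P.a i' j' = P.a (i + i') (j + j') := A_add P.M0 _ _ _ _
lemma a_zero : P.a 0 0 = 1 := A_zero _
lemma a_absdet (i j : ℤ) : |(P.a i j).det| = 1 := A_absdet P.M0 _ _
lemma a_mem {g : Mat} (hg : g ∈ XX P.ε) (i j : ℤ) : P.a i j * g ∈ XX P.ε := A_mem P.M0 hg _ _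
lemma a_U01 (i j : ℤ) (t : ℝ) : P.a i j * U 0 1 t = U 0 1 (P.q j * t) * P.a i j := A_U01 P.M0 _ _ _
lemma a_U02 (i j : ℤ) (t : ℝ) : P.a i j * U 0 2 t = U 0 2 (P.q i * t) * P.a i j := A_U02 P.M0 _ _ _
lemma a_U21 (i j : ℤ) (t : ℝ) : P.a i j * U 2 1 t = U 2 1 (P.q (j - i) * t) * P.a i j := by
  rw [q, mul_sub]; exact A_U21 P.M0 _ _ _
lemma a_conj (i j : ℤ) (g : Mat) : P.a i j * g =
    !![g 0 0, P.q j * g 0 1, P.q i * g 0 2;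
       P.q (-j) * g 1 0, g 1 1, P.q (i - j) * g 1 2;
       P.q (-i) * g 2 0, P.q (j - i) * g 2 1, g 2 2] * P.a i j := by
  rw [a, A_conj P.M0]; simp only [q, mul_sub, mul_neg, neg_mul]

def D : Set Mat := XX P.ε ∩ {g | ∀ i j, |g i j| ≤ P.C}

lemma isCompact_D : IsCompact P.D := by
  have h1 : IsCompact (Set.univ.pi fun _ : Fin 3 => Set.univ.pi fun _ : Fin 3 => Set.Icc (-P.C) P.C) :=
    isCompact_univ_pi fun _ => isCompact_univ_pi fun _ => isCompact_Icc
  have h2 : IsCompact {g : Mat | ∀ i j, |g i j| ≤ P.C} := by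
    have : {g : Mat | ∀ i j, |g i j| ≤ P.C} =
      (Set.univ.pi fun _ : Fin 3 => Set.univ.pi fun _ : Fin 3 => Set.Icc (-P.C) P.C) := by
      apply Set.ext; intro g
      constructor
      · intro h i _ j _; exact abs_le.1 (h i j)
      · intro h i j; exact abs_le.2 (h i trivial j trivial)
    rw [this]; exact h1
  exact h2.inter_left (isClosed_XX _)

lemma red' {g : Mat} (hg : g ∈ XX P.ε) : ∃ x ∈ P.D, Rel g x := by
  obtain ⟨x, hx, hb⟩ := P.red g hg
  exact ⟨x, ⟨hx.mem hg, hb⟩, hx⟩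
end Par

abbrev F := ℤ →₀ ZMod 3
def sh (l : ℤ) (f : F) : F := Finsupp.equivMapDomain (Equiv.addRight l) f
@[simp] lemma sh_apply (l : ℤ) (f : F) (i : ℤ) : sh l f i = f (i - l) := by
  simp [sh, Finsupp.equivMapDomain_apply, sub_eq_add_neg]
@[simp] lemma sh_zero' (l : ℤ) : sh l 0 = 0 := by ext i; simp
lemma sh_add (l : ℤ) (f g : F) : sh l (f + g) = sh l f + sh l g := by ext i; simp
lemma sh_sh (l m : ℤ) (f : F) : sh l (sh m f) = sh (l + m) f := by
  ext i; simp [sub_sub]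
@[simp] lemma sh_nul (f : F) : sh 0 f = f := by ext i; simp

abbrev Raw := (ℤ × ℤ × F → Mat) × (F → ℝ) × (ℤ → Bool)

structure IsCfg (P : Par) (ξ : Raw) : Prop where
  mem : ∀ c, ξ.1 c ∈ P.D
  rel : ∀ i j f, Rel (P.a i j * (U 0 1 (ξ.2.1 f) * ξ.1 0)) (ξ.1 (i, j, f))
  t0 : ξ.2.1 0 = 0
  up : ∀ l : ℤ, ∀ f f' : F, (∀ k, l < k → f k = f' k) → |ξ.2.1 f - ξ.2.1 f'| ≤ P.q (l + 1)
  lo : ∀ l : ℤ, ∀ f f' : F, (∀ k, l < k → f k = f' k) → f l ≠ f' l → ξ.2.2 l = true →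
    P.q l ≤ |ξ.2.1 f - ξ.2.1 f'|

lemma F_bdd (f : F) : ∃ l : ℤ, ∀ k, l < k → f k = 0 := by
  obtain ⟨l, hl⟩ := f.support.bddAbove
  refine ⟨l, fun k hk => ?_⟩
  by_contra h
  exact absurd (hl (Finset.mem_coe.2 (Finsupp.mem_support_iff.2 h))) (not_le.2 hk)

lemma isClosed_cfg (P : Par) : IsClosed {ξ : Raw | IsCfg P ξ} := by
  have e : {ξ : Raw | IsCfg P ξ} = (⋂ c, {ξ : Raw | ξ.1 c ∈ P.D}) ∩
    ((⋂ i, ⋂ j, ⋂ f, {ξ : Raw | Rel (P.a i j * (U 0 1 (ξ.2.1 f) * ξ.1 0)) (ξ.1 (i, j, f))}) ∩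
    ({ξ : Raw | ξ.2.1 0 = 0} ∩
    ((⋂ l : ℤ, ⋂ f : F, ⋂ f' : F, ⋂ _ : (∀ k, l < k → f k = f' k),
      {ξ : Raw | |ξ.2.1 f - ξ.2.1 f'| ≤ P.q (l + 1)}) ∩
    (⋂ l : ℤ, ⋂ f : F, ⋂ f' : F, ⋂ _ : (∀ k, l < k → f k = f' k), ⋂ _ : f l ≠ f' l,
      {ξ : Raw | ξ.2.2 l = true → P.q l ≤ |ξ.2.1 f - ξ.2.1 f'|})))) := by
    ext ξ
    simp only [Set.mem_inter_iff, Set.mem_iInter, Set.mem_ofPred_eq]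
    exact ⟨fun h => ⟨h.1, h.2, h.3, h.4, h.5⟩, fun h => ⟨h.1, h.2.1, h.2.2.1, h.2.2.2.1, h.2.2.2.2⟩⟩
  have ct : ∀ f : F, Continuous fun ξ : Raw => ξ.2.1 f := fun f => by fun_prop
  have cx : ∀ c, Continuous fun ξ : Raw => ξ.1 c := fun c => by fun_prop
  rw [e]
  refine IsClosed.inter (isClosed_iInter fun c => P.isCompact_D.isClosed.preimage (cx c)) ?_
  refine IsClosed.inter (isClosed_iInter fun i => isClosed_iInter fun j => isClosed_iInter fun f => ?_) ?_
  · have : Continuous fun ξ : Raw =>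
        ((P.a i j * (U 0 1 (ξ.2.1 f) * ξ.1 0), ξ.1 (i, j, f)) : Mat × Mat) :=
      (continuous_const.matrix_mul (((U_cont 0 1).comp (ct f)).matrix_mul (cx 0))).prodMk (cx _)
    exact isClosed_Rel.preimage this
  refine IsClosed.inter (isClosed_eq (ct 0) continuous_const) ?_
  refine IsClosed.inter (isClosed_iInter fun l => isClosed_iInter fun f => isClosed_iInter fun f' =>
    isClosed_iInter fun _ => ?_) (isClosed_iInter fun l => isClosed_iInter fun f => isClosed_iInter fun f' =>
    isClosed_iInter fun _ => isClosed_iInter fun _ => ?_)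
  · exact isClosed_le ((ct f).sub (ct f')).abs continuous_const
  · have h1 : IsClosed {ξ : Raw | ξ.2.2 l = false} :=
      isClosed_eq (by fun_prop) continuous_const
    have h2 : IsClosed {ξ : Raw | P.q l ≤ |ξ.2.1 f - ξ.2.1 f'|} :=
      isClosed_le continuous_const ((ct f).sub (ct f')).abs
    convert h1.union h2 using 1
    ext ξ
    simp only [Set.mem_ofPred_eq, Set.mem_union]
    cases ξ.2.2 l <;> simp

lemma isCompact_cfg (P : Par) : IsCompact {ξ : Raw | IsCfg P ξ} := by
  choose L hL using F_bdd
  have h1 : IsCompact ((Set.univ.pi fun _ : ℤ × ℤ × F => P.D) ×ˢ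
    ((Set.univ.pi fun f : F => Set.Icc (-P.q (L f + 1)) (P.q (L f + 1))) ×ˢ
      (Set.univ : Set (ℤ → Bool)))) :=
    (isCompact_univ_pi fun _ => P.isCompact_D).prod
      ((isCompact_univ_pi fun _ => isCompact_Icc).prod isCompact_univ)
  refine h1.of_isClosed_subset (isClosed_cfg P) fun ξ hξ => ?_
  refine ⟨fun c _ => hξ.mem c, fun f _ => ?_, trivial⟩
  have := hξ.up (L f) f 0 (fun k hk => by simpa using hL f k hk)
  rw [hξ.t0, sub_zero] at this
  exact abs_le.1 this

def E (P : Par) : Type := {ξ : Raw // IsCfg P ξ}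
variable {P : Par}
instance : TopologicalSpace (E P) := inferInstanceAs (TopologicalSpace {ξ : Raw // IsCfg P ξ})
instance : CompactSpace (E P) := isCompact_iff_compactSpace.1 (isCompact_cfg P)
instance : T2Space Mat := inferInstanceAs (T2Space (Fin 3 → Fin 3 → ℝ))
instance : SecondCountableTopology Mat := inferInstanceAs (SecondCountableTopology (Fin 3 → Fin 3 → ℝ))
instance : T2Space (E P) := inferInstanceAs (T2Space {ξ : Raw // IsCfg P ξ})
instance : SecondCountableTopology (E P) :=
  (IsEmbedding.subtypeVal : IsEmbedding (Subtype.val : {ξ : Raw // IsCfg P ξ} → Raw)).secondCountableTopology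
instance : MeasurableSpace (E P) := borel _
instance : BorelSpace (E P) := ⟨rfl⟩
instance : TopologicalSpace.MetrizableSpace (E P) := inferInstance

namespace E
def x (ξ : E P) (i j : ℤ) (f : F) : Mat := ξ.1.1 (i, j, f)
def x0 (ξ : E P) : Mat := ξ.1.1 0
def t (ξ : E P) (f : F) : ℝ := ξ.1.2.1 f
def β (ξ : E P) (l : ℤ) : Bool := ξ.1.2.2 l
lemma cont_x (i j : ℤ) (f : F) : Continuous fun ξ : E P => ξ.x i j f :=
  (continuous_apply (i, j, f)).comp (continuous_fst.comp continuous_subtype_val)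
lemma cont_x0 : Continuous fun ξ : E P => ξ.x0 := cont_x 0 0 0
lemma cont_β (l : ℤ) : Continuous fun ξ : E P => ξ.β l :=
  (continuous_apply l).comp (continuous_snd.comp (continuous_snd.comp continuous_subtype_val))
lemma x_mem (ξ : E P) (i j f) : ξ.x i j f ∈ P.D := ξ.2.mem _
lemma x0_mem (ξ : E P) : ξ.x0 ∈ P.D := ξ.2.mem _
lemma rel (ξ : E P) (i j f) : Rel (P.a i j * (U 0 1 (ξ.t f) * ξ.x0)) (ξ.x i j f) := ξ.2.rel i j f
lemma t0 (ξ : E P) : ξ.t 0 = 0 := ξ.2.t0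
lemma rel0 (ξ : E P) (i j) : Rel (P.a i j * ξ.x0) (ξ.x i j 0) := by
  have := ξ.rel i j 0; rwa [t0, U_zero, one_mul] at this
lemma rele (ξ : E P) (f) : Rel (U 0 1 (ξ.t f) * ξ.x0) (ξ.x 0 0 f) := by
  have := ξ.rel 0 0 f; rwa [P.a_zero, one_mul] at this
end E

lemma h01 : (0 : Fin 3) ≠ 1 := by decide
lemma h02 : (0 : Fin 3) ≠ 2 := by decide
lemma h21 : (2 : Fin 3) ≠ 1 := by decide

/-- ℤ² action -/
noncomputable def TTr (P : Par) (k l : ℤ) (ξ : Raw) : Raw :=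
  (fun c => ξ.1 (c.1 + k, c.2.1 + l, sh (-l) c.2.2), fun f => P.q l * ξ.2.1 (sh (-l) f),
    fun i => ξ.2.2 (i - l))

lemma TTr_cfg (k l : ℤ) (ξ : E P) : IsCfg P (TTr P k l ξ.1) := by
  refine ⟨fun c => ξ.2.mem _, fun i j f => ?_, ?_, fun m f f' h => ?_, fun m f f' h h1 h2 => ?_⟩
  · have h1 : Rel (P.a k l * ξ.x0) ((TTr P k l ξ.1).1 0) := by
      have := ξ.rel0 k l
      simpa [TTr, E.x] using this
    refine ((h1.symm.lmul (U_absdet h01 _)).lmul (P.a_absdet i j)).trans ?_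
    have h2 := ξ.rel (i + k) (j + l) (sh (-l) f)
    refine (congrArg (fun z => Rel z _) ?_).mpr h2
    simp only [TTr]
    rw [← Matrix.mul_assoc (U 0 1 _), ← P.a_U01, Matrix.mul_assoc, ← Matrix.mul_assoc, P.a_add]
    rfl
  · simp [TTr, ξ.2.t0]
  · simp only [TTr]
    rw [← mul_sub, abs_mul, abs_of_pos (P.q_pos l), show m + 1 = l + (m - l + 1) by ring, P.q_add]
    refine mul_le_mul_of_nonneg_left (ξ.2.up (m - l) _ _ fun k hk => ?_) (P.q_pos l).le
    simp only [sh_apply]; exact h _ (by omega)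
  · simp only [TTr]
    rw [← mul_sub, abs_mul, abs_of_pos (P.q_pos l)]
    have : P.q m = P.q l * P.q (m - l) := by rw [← P.q_add]; congr 1; ring
    rw [this]
    refine mul_le_mul_of_nonneg_left (ξ.2.lo (m - l) _ _ (fun k hk => ?_) ?_ h2) (P.q_pos l).le
    · simp only [sh_apply]; exact h _ (by omega)
    · simp only [sh_apply]; convert h1 using 2 <;> ring_nf

noncomputable def TT (k l : ℤ) (ξ : E P) : E P := ⟨TTr P k l ξ.1, TTr_cfg k l ξ⟩

lemma TT_x (k l : ℤ) (ξ : E P) (i j f) : (TT k l ξ).x i j f = ξ.x (i + k) (j + l) (sh (-l) f) := rfl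
lemma TT_x0 (k l : ℤ) (ξ : E P) : (TT k l ξ).x0 = ξ.x k l 0 := by
  have := TT_x k l ξ 0 0 0; rw [zero_add, zero_add, sh_zero'] at this; exact this
lemma TT_t (k l : ℤ) (ξ : E P) (f) : (TT k l ξ).t f = P.q l * ξ.t (sh (-l) f) := rfl
lemma TT_β (k l : ℤ) (ξ : E P) (i) : (TT k l ξ).β i = ξ.β (i - l) := rfl

lemma cont_TT (k l : ℤ) : Continuous (TT k l : E P → E P) := by
  refine Continuous.subtype_mk ?_ _
  have : Continuous (TTr P k l) := by unfold TTr; fun_prop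
  exact this.comp continuous_subtype_val

@[ext] lemma E.ext {ξ η : E P} (h1 : ∀ i j f, ξ.x i j f = η.x i j f) (h2 : ∀ f, ξ.t f = η.t f)
    (h3 : ∀ l, ξ.β l = η.β l) : ξ = η := by
  apply Subtype.ext
  refine Prod.ext (funext fun c => h1 c.1 c.2.1 c.2.2) (Prod.ext (funext h2) (funext h3))

lemma TT_TT (k l k' l' : ℤ) (ξ : E P) : TT k l (TT k' l' ξ) = TT (k + k') (l + l') ξ := by
  ext1
  · simp only [TT_x, sh_sh]; congr 1 <;> ring_nf
  · simp only [TT_t, sh_sh, P.q_add, mul_assoc]; ring_nf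
  · simp only [TT_β]; congr 1; ring
lemma TT_zero (ξ : E P) : TT 0 0 ξ = ξ := by
  ext1
  · simp [TT_x]
  · simp [TT_t, P.q_zero]
  · simp [TT_β]
lemma TT_iter (k l : ℤ) (n : ℕ) (ξ : E P) : (TT k l)^[n] ξ = TT (n * k) (n * l) ξ := by
  induction n with
  | zero => simp [TT_zero]
  | succ n ih => rw [Function.iterate_succ_apply', ih, TT_TT]; congr 1 <;> push_cast <;> ring

noncomputable def TEr (e : F) (ξ : Raw) : Raw :=
  (fun c => ξ.1 (c.1, c.2.1, c.2.2 + e), fun f => ξ.2.1 (f + e) - ξ.2.1 e, ξ.2.2)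

lemma TEr_cfg (e : F) (ξ : E P) : IsCfg P (TEr e ξ.1) := by
  refine ⟨fun c => ξ.2.mem _, fun i j f => ?_, ?_, fun m f f' h => ?_, fun m f f' h h1 h2 => ?_⟩
  · have h1 : Rel (U 0 1 (ξ.t e) * ξ.x0) ((TEr e ξ.1).1 0) := by
      have := ξ.rele e
      simpa [TEr, E.x] using this
    refine ((h1.symm.lmul (U_absdet h01 _)).lmul (P.a_absdet i j)).trans ?_
    have h2 := ξ.rel i j (f + e)
    refine (congrArg (fun z => Rel z _) ?_).mpr h2
    simp only [TEr]
    rw [← Matrix.mul_assoc (U 0 1 _), U_add h01]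
    congr 3
    show ξ.t (f + e) - ξ.t e + ξ.t e = _
    ring
  · simp [TEr]
  · simp only [TEr]
    rw [sub_sub_sub_cancel_right]
    exact ξ.2.up m _ _ fun k hk => by simp [h k hk]
  · simp only [TEr]
    rw [sub_sub_sub_cancel_right]
    exact ξ.2.lo m _ _ (fun k hk => by simp [h k hk]) (by simpa using h1) h2

noncomputable def TE (e : F) (ξ : E P) : E P := ⟨TEr e ξ.1, TEr_cfg e ξ⟩
lemma TE_x (e : F) (ξ : E P) (i j f) : (TE e ξ).x i j f = ξ.x i j (f + e) := rfl
lemma TE_x0 (e : F) (ξ : E P) : (TE e ξ).x0 = ξ.x 0 0 e := by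
  have := TE_x e ξ 0 0 0; rw [zero_add] at this; exact this
lemma TE_t (e : F) (ξ : E P) (f) : (TE e ξ).t f = ξ.t (f + e) - ξ.t e := rfl
lemma TE_β (e : F) (ξ : E P) (i) : (TE e ξ).β i = ξ.β i := rfl
lemma cont_TE (e : F) : Continuous (TE e : E P → E P) := by
  refine Continuous.subtype_mk ?_ _
  have : Continuous (TEr e) := by unfold TEr; fun_prop
  exact this.comp continuous_subtype_val
lemma TE_TE (e f : F) (ξ : E P) : TE e (TE f ξ) = TE (e + f) ξ := by
  ext1
  · simp only [TE_x, add_assoc]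
  · simp only [TE_t, add_assoc]; ring
  · simp only [TE_β]
lemma TE_zero (ξ : E P) : TE 0 ξ = ξ := by
  ext1
  · simp [TE_x]
  · simp [TE_t, E.t0]
  · simp [TE_β]
lemma TE_TT (e : F) (k l : ℤ) (ξ : E P) : TE e (TT k l ξ) = TT k l (TE (sh (-l) e) ξ) := by
  ext1
  · simp only [TE_x, TT_x, sh_add]
  · simp only [TE_t, TT_t, sh_add, mul_sub]
  · simp only [TE_β, TT_β]

end LW

namespace LW
open Topology MeasureTheory Matrix
variable {P : Par}

def LC (i j : Fin 3) (K : Set (E P)) : Prop :=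
  ∀ ζ ∈ K, ∀ w ∈ S P.ε i j ζ.x0, ∀ δ > 0, ∀ᶠ η in 𝓝 ζ, η ∈ K → ∃ w' ∈ S P.ε i j η.x0, |w' - w| < δ

lemma ultra_lim {ι X : Type*} [TopologicalSpace X] [CompactSpace X] (u : Ultrafilter ι) (f : ι → X) :
    ∃ x, Tendsto f u (𝓝 x) := by
  obtain ⟨x, -, hx⟩ := isCompact_univ.ultrafilter_le_nhds (u.map f) (by simp)
  exact ⟨x, hx⟩

lemma ultra_limK {ι X : Type*} [TopologicalSpace X] {K : Set X} (hK : IsCompact K) (u : Ultrafilter ι)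
    (f : ι → X) (h : ∀ᶠ i in (u : Filter ι), f i ∈ K) : ∃ x ∈ K, Tendsto f u (𝓝 x) := by
  obtain ⟨x, hx, hx'⟩ := hK.ultrafilter_le_nhds (u.map f) (le_principal_iff.2 h)
  exact ⟨x, hx, hx'⟩

lemma S_isClosed (ε : ℝ) (i j : Fin 3) (g : Mat) : IsClosed (S ε i j g) := by
  have : Continuous fun w : ℝ => ((g, w) : Mat × ℝ) := by fun_prop
  exact (S_closed ε i j).preimage this

lemma S_lim {ι : Type*} {u : Filter ι} [u.NeBot] {ε : ℝ} {i j : Fin 3} {g : ι → Mat} {g' : Mat}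
    (hg : Tendsto g u (𝓝 g')) {w : ℝ}
    (h : ∀ δ > 0, ∀ᶠ n in u, ∃ w' ∈ S ε i j (g n), |w' - w| < δ) : w ∈ S ε i j g' := by
  by_contra hw
  have ho : {p : Mat × ℝ | p.2 ∈ S ε i j p.1}ᶜ ∈ 𝓝 (g', w) :=
    (S_closed ε i j).isOpen_compl.mem_nhds hw
  rw [nhds_prod_eq, mem_prod_iff] at ho
  obtain ⟨t1, ht1, t2, ht2, ht⟩ := ho
  obtain ⟨δ, hδ, hb⟩ := Metric.mem_nhds_iff.1 ht2
  obtain ⟨n, ⟨w', hw', hd⟩, hn⟩ := ((h δ hδ).and (hg ht1)).exists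
  exact ht (Set.mk_mem_prod hn (hb (by rwa [Metric.mem_ball, Real.dist_eq]))) hw'

lemma Rel_lim {ι : Type*} {u : Filter ι} [u.NeBot] {f g : ι → Mat} {a b : Mat} (hf : Tendsto f u (𝓝 a))
    (hg : Tendsto g u (𝓝 b)) (h : ∀ n, Rel (f n) (g n)) : Rel a b :=
  isClosed_Rel.mem_of_tendsto (hf.prodMk_nhds hg) (Eventually.of_forall h)
lemma mul_lim {ι : Type*} {u : Filter ι} {f g : ι → Mat} {a b : Mat} (hf : Tendsto f u (𝓝 a))
    (hg : Tendsto g u (𝓝 b)) : Tendsto (fun n => f n * g n) u (𝓝 (a * b)) := by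
  have hc : Continuous fun p : Mat × Mat => p.1 * p.2 := continuous_fst.matrix_mul continuous_snd
  exact (hc.tendsto (a, b)).comp (hf.prodMk_nhds hg)

lemma hopf {i j : Fin 3} (hij : i ≠ j) {K : Set (E P)} (hK : IsClosed K) (hLC : LC i j K)
    (ξ : E P) (k l : ℤ) (hrec : ∃ᶠ n : ℕ in atTop, TT (-(n * k)) (-(n * l)) ξ ∈ K)
    (hcomm : ∀ n : ℕ, ∀ w, P.a (-(n * k)) (-(n * l)) * U i j w = U i j w * P.a (-(n * k)) (-(n * l)))
    (h : Mat) (hn : ℕ → Mat)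
    (hhn : ∀ n : ℕ, P.a (-(n * k)) (-(n * l)) * h = hn n * P.a (-(n * k)) (-(n * l)))
    (hdet : |h.det| = 1)
    (b : ℝ) (hlim : Tendsto hn atTop (𝓝 (U i j b))) {w : ℝ} (hw : w ∈ S P.ε i j (h * ξ.x0)) :
    w + b ∈ S P.ε i j ξ.x0 := by
  set Φ : ℕ → E P := fun n => TT (-(n * k)) (-(n * l)) ξ with hΦ
  have : (atTop ⊓ 𝓟 {n : ℕ | Φ n ∈ K}).NeBot := frequently_iff_neBot.1 hrec
  set u := Ultrafilter.of (atTop ⊓ 𝓟 {n : ℕ | Φ n ∈ K})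
  have hu : (u : Filter ℕ) ≤ atTop ⊓ 𝓟 {n : ℕ | Φ n ∈ K} := Ultrafilter.of_le _
  have hu1 : (u : Filter ℕ) ≤ atTop := hu.trans inf_le_left
  have hu2 : ∀ᶠ n in (u : Filter ℕ), Φ n ∈ K := hu (mem_inf_of_right (mem_principal_self _))
  obtain ⟨ζ, hζK, hζ⟩ := ultra_limK hK.isCompact u Φ hu2
  have hrel : ∀ n : ℕ, Rel (P.a (-(n * k)) (-(n * l)) * ξ.x0) (Φ n).x0 := fun n => by
    rw [hΦ]; simp only [TT_x0]; exact ξ.rel0 _ _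
  have hx0 : Tendsto (fun n => (Φ n).x0) u (𝓝 ζ.x0) := (E.cont_x0.tendsto ζ).comp hζ
  have hdn : ∀ n, |(hn n).det| = 1 := fun n => by
    have := congrArg (fun z : Mat => |z.det|) (hhn n)
    simp only [det_mul, abs_mul, P.a_absdet, hdet] at this
    simpa using this.symm
  have h1 : w + b ∈ S P.ε i j ζ.x0 := by
    rw [← S_shift hij]
    refine S_lim (u := u) (g := fun n => hn n * (Φ n).x0) ?_ fun δ hδ => Eventually.of_forall fun n =>
      ⟨w, ?_, by simpa using hδ⟩
    · exact mul_lim (hlim.mono_left hu1) hx0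
    · apply S_rel hij ((hrel n).lmul (hdn n))
      have := P.a_mem hw (-(n * k)) (-(n * l))
      simp only [S, Set.mem_ofPred_eq]
      rw [← Matrix.mul_assoc, ← Matrix.mul_assoc, Matrix.mul_assoc (U i j w), ← hhn, ← Matrix.mul_assoc,
        ← hcomm]
      simpa only [Matrix.mul_assoc] using this
  have h2 : ∀ δ > 0, ∃ w' ∈ S P.ε i j ξ.x0, |w' - (w + b)| < δ := by
    intro δ hδ
    obtain ⟨n, hn1, hn2⟩ := ((hζ.eventually (hLC ζ hζK _ h1 δ hδ)).and hu2).exists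
    obtain ⟨w', hw', hd⟩ := hn1 hn2
    refine ⟨w', ?_, hd⟩
    have h3 := S_rel hij (hrel n).symm hw'
    have h4 := P.a_mem h3 (n * k) (n * l)
    simp only [S, Set.mem_ofPred_eq]
    rw [← Matrix.mul_assoc (U i j w'), ← hcomm, Matrix.mul_assoc, ← Matrix.mul_assoc, P.a_add,
      add_neg_cancel, add_neg_cancel, P.a_zero, Matrix.one_mul] at h4
    exact h4
  rw [← (S_isClosed P.ε i j ξ.x0).closure_eq, Metric.mem_closure_iff]
  intro δ hδ
  obtain ⟨w', hw', hd⟩ := h2 δ hδ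
  exact ⟨w', hw', by rw [dist_comm, Real.dist_eq]; exact hd⟩

def Hm (s b c : ℝ) : Mat := !![1, s, b; 0, 1, 0; 0, c, 1]
lemma Hm_det (s b c : ℝ) : |(Hm s b c).det| = 1 := by
  rw [Hm, det_fin_three]; simp
lemma Hm_cont : Continuous fun p : ℝ × ℝ × ℝ => Hm p.1 p.2.1 p.2.2 := by
  refine continuous_matrix fun i j => ?_
  fin_cases i <;> fin_cases j <;> simp [Hm] <;> fun_prop
lemma Hm_lim {ι : Type*} {u : Filter ι} {f : ι → ℝ × ℝ × ℝ} {p : ℝ × ℝ × ℝ} (h : Tendsto f u (𝓝 p)) :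
    Tendsto (fun n => Hm (f n).1 (f n).2.1 (f n).2.2) u (𝓝 (Hm p.1 p.2.1 p.2.2)) :=
  (Hm_cont.tendsto p).comp h
lemma Hm_U01 (s : ℝ) : Hm s 0 0 = U 0 1 s := by
  ext i j; fin_cases i <;> fin_cases j <;> simp [Hm, U, transvection]
lemma Hm_U02 (s : ℝ) : Hm 0 s 0 = U 0 2 s := by
  ext i j; fin_cases i <;> fin_cases j <;> simp [Hm, U, transvection]
lemma Hm_U21 (s : ℝ) : Hm 0 0 s = U 2 1 s := by
  ext i j; fin_cases i <;> fin_cases j <;> simp [Hm, U, transvection]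
lemma a_Hm (i j : ℤ) (s b c : ℝ) :
    P.a i j * Hm s b c = Hm (P.q j * s) (P.q i * b) (P.q (j - i) * c) * P.a i j := by
  rw [P.a_conj]; congr 1
  ext i j; fin_cases i <;> fin_cases j <;> simp [Hm]

/-- good recurrence -/
def Rec (K : Set (E P)) (ξ : E P) : Prop :=
  (∃ᶠ n : ℕ in atTop, TT (-(n * 0)) (-(n * 1)) ξ ∈ K) ∧
  (∃ᶠ n : ℕ in atTop, TT (-(n * 1)) (-(n * 1)) ξ ∈ K)

lemma hopf02 {K : Set (E P)} (hK : IsClosed K) (hLC : LC 0 2 K) (ξ : E P) (hr : Rec K ξ)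
    (s b c : ℝ) {w : ℝ} (hw : w ∈ S P.ε 0 2 (Hm s b c * ξ.x0)) : w + b ∈ S P.ε 0 2 ξ.x0 := by
  refine hopf h02 hK hLC ξ 0 1 hr.1 (fun n w => ?_) (Hm s b c)
    (fun n => Hm (P.q (-n) * s) b (P.q (-n) * c)) (fun n => ?_) (Hm_det _ _ _) b ?_ hw
  · rw [P.a_U02]; simp [P.q_zero]
  · rw [a_Hm]; simp [P.q_zero]
  · rw [← Hm_U02]
    have h1 : Tendsto (fun n : ℕ => ((P.q (-n) * s, b, P.q (-n) * c) : ℝ × ℝ × ℝ)) atTop (𝓝 (0, b, 0)) := by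
      refine Tendsto.prodMk_nhds ?_ (Tendsto.prodMk_nhds tendsto_const_nhds ?_)
      · simpa using P.q_tendsto.mul_const s
      · simpa using P.q_tendsto.mul_const c
    exact Hm_lim h1

lemma hopf21 {K : Set (E P)} (hK : IsClosed K) (hLC : LC 2 1 K) (ξ : E P) (hr : Rec K ξ)
    (s b c : ℝ) {w : ℝ} (hw : w ∈ S P.ε 2 1 (Hm s b c * ξ.x0)) : w + c ∈ S P.ε 2 1 ξ.x0 := by
  refine hopf h21 hK hLC ξ 1 1 hr.2 (fun n w => ?_) (Hm s b c)
    (fun n => Hm (P.q (-n) * s) (P.q (-n) * b) c) (fun n => ?_) (Hm_det _ _ _) c ?_ hw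
  · rw [P.a_U21]; simp [P.q_zero]
  · rw [a_Hm]; simp [P.q_zero]
  · rw [← Hm_U21]
    have h1 : Tendsto (fun n : ℕ => ((P.q (-n) * s, P.q (-n) * b, c) : ℝ × ℝ × ℝ)) atTop (𝓝 (0, 0, c)) := by
      refine Tendsto.prodMk_nhds ?_ (Tendsto.prodMk_nhds ?_ tendsto_const_nhds)
      · simpa using P.q_tendsto.mul_const s
      · simpa using P.q_tendsto.mul_const b
    exact Hm_lim h1

/-- final contradiction: u an ultrafilter along which everything converges -/
lemma contra {ι : Type*} (u : Filter ι) [u.NeBot] {K 𝒦 : Set (E P)} (hK : IsClosed K)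
    (hLC1 : LC 0 1 K) (hLC2 : LC 0 2 K) (hLC3 : LC 2 1 K)
    (h𝒦 : IsClosed 𝒦) (hsub : 𝒦 ⊆ K) (hrec : ∀ ξ ∈ 𝒦, Rec K ξ)
    (υ υ' : ι → E P) (f : ι → F) (y y' z z' : E P)
    (hy : Tendsto υ u (𝓝 y)) (hy' : Tendsto υ' u (𝓝 y'))
    (hz : Tendsto (fun n => TE (f n) (υ n)) u (𝓝 z)) (hz' : Tendsto (fun n => TE (f n) (υ' n)) u (𝓝 z'))
    (mυ : ∀ n, υ n ∈ 𝒦) (mυ' : ∀ n, υ' n ∈ 𝒦)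
    (mp : ∀ n, TE (f n) (υ n) ∈ 𝒦) (mp' : ∀ n, TE (f n) (υ' n) ∈ 𝒦)
    (ht : ∀ n, (υ n).t (f n) = (υ' n).t (f n))
    (hS : ∀ n, S P.ε 0 1 (υ n).x0 = S P.ε 0 1 (υ' n).x0)
    (g : ι → Mat) (hg : Tendsto g u (𝓝 1)) (hgr : ∀ n, Rel (g n * (υ n).x0) (υ' n).x0)
    (s b c : ℝ) (hh : Tendsto (fun n => U 0 1 ((υ n).t (f n)) * g n * U 0 1 (-(υ n).t (f n))) u (𝓝 (Hm s b c)))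
    (hne : ¬ (s = 0 ∧ b = 0 ∧ c = 0)) : False := by
  have mz : z ∈ 𝒦 := h𝒦.mem_of_tendsto hz (Eventually.of_forall mp)
  have mz' : z' ∈ 𝒦 := h𝒦.mem_of_tendsto hz' (Eventually.of_forall mp')
  have my : y ∈ 𝒦 := h𝒦.mem_of_tendsto hy (Eventually.of_forall mυ)
  have my' : y' ∈ 𝒦 := h𝒦.mem_of_tendsto hy' (Eventually.of_forall mυ')
  have x0t : ∀ {φ : ι → E P} {a : E P}, Tendsto φ u (𝓝 a) → Tendsto (fun n => (φ n).x0) u (𝓝 a.x0) :=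
    fun h => (E.cont_x0.tendsto _).comp h
  have rp : ∀ n, Rel (U 0 1 ((υ n).t (f n)) * (υ n).x0) (TE (f n) (υ n)).x0 := fun n => by
    rw [TE_x0]; exact E.rele _ _
  have rp' : ∀ n, Rel (U 0 1 ((υ n).t (f n)) * (υ' n).x0) (TE (f n) (υ' n)).x0 := fun n => by
    rw [TE_x0, ht]; exact E.rele _ _
  have rp'' : ∀ n, Rel (U 0 1 (-(υ n).t (f n)) * (TE (f n) (υ' n)).x0) (υ' n).x0 := fun n => by
    have := ((rp' n).lmul (U_absdet h01 (-(υ n).t (f n)))).symm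
    rwa [← Matrix.mul_assoc, U_add h01, neg_add_cancel, U_zero, Matrix.one_mul] at this
  have rpp : ∀ n, Rel (U 0 1 (-(υ n).t (f n)) * (TE (f n) (υ n)).x0) (υ n).x0 := fun n => by
    have := ((rp n).lmul (U_absdet h01 (-(υ n).t (f n)))).symm
    rwa [← Matrix.mul_assoc, U_add h01, neg_add_cancel, U_zero, Matrix.one_mul] at this
  have gdet : ∀ n, |(g n).det| = 1 := fun n => by
    have := (hgr n).1
    rwa [det_mul, abs_mul, (υ n).x0_mem.1.1, mul_one] at this
  have rh : Rel (Hm s b c * z.x0) z'.x0 := by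
    refine Rel_lim (mul_lim hh (x0t hz)) (x0t hz') fun n => ?_
    have h1 := (rpp n).lmul (gdet n)
    have h2 := ((h1.trans (hgr n)).lmul (U_absdet h01 ((υ n).t (f n)))).trans (rp' n)
    simpa only [Matrix.mul_assoc] using h2
  have ry : Rel y.x0 y'.x0 := by
    have := Rel_lim (mul_lim hg (x0t hy)) (x0t hy') hgr
    simpa using this
  -- generic chain
  have chain : ∀ (i j : Fin 3) (hij : i ≠ j), LC i j K →
      (∀ ξ ∈ 𝒦, ∀ r w, w ∈ S P.ε i j (U 0 1 r * ξ.x0) → w ∈ S P.ε i j ξ.x0) →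
      ∀ w ∈ S P.ε i j z.x0, w ∈ S P.ε i j z'.x0 := by
    intro i j hij hL hH w hw
    have h1 : w ∈ S P.ε i j y.x0 := by
      refine S_lim (x0t hy) fun δ hδ => ?_
      filter_upwards [hz.eventually (hL z (hsub mz) w hw δ hδ)] with n hn
      obtain ⟨w', hw', hd⟩ := hn (hsub (mp n))
      exact ⟨w', hH _ (mυ n) _ _ (S_rel hij (rp n).symm hw'), hd⟩
    have h2 : w ∈ S P.ε i j y'.x0 := S_rel hij ry h1
    refine S_lim (x0t hz') fun δ hδ => ?_
    filter_upwards [hy'.eventually (hL y' (hsub my') w h2 δ hδ)] with n hn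
    obtain ⟨w', hw', hd⟩ := hn (hsub (mυ' n))
    exact ⟨w', hH _ (mp' n) _ _ (S_rel hij (rp'' n).symm hw'), hd⟩
  by_cases hb : b = 0
  · by_cases hc : c = 0
    · subst hb hc
      have hs : s ≠ 0 := fun h => hne ⟨h, rfl, rfl⟩
      refine no_period P.hε h01 z.x0_mem.1 hs fun w hw => ?_
      rw [← S_shift h01, ← Hm_U01]
      refine S_rel h01 rh.symm ?_
      refine S_lim (x0t hz') fun δ hδ => ?_
      filter_upwards [hz.eventually (hLC1 z (hsub mz) w hw δ hδ)] with n hn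
      obtain ⟨w', hw', hd⟩ := hn (hsub (mp n))
      refine ⟨w', S_rel h01 (rp' n) ?_, hd⟩
      have := S_rel h01 (rp n).symm hw'
      rw [S_shift h01] at this ⊢
      rwa [← hS]
    · refine no_period P.hε h21 z.x0_mem.1 hc fun w hw => ?_
      refine hopf21 hK hLC3 z (hrec z mz) s b c (S_rel h21 rh.symm ?_)
      refine chain 2 1 h21 hLC3 (fun ξ hξ r w h => ?_) w hw
      have := hopf21 hK hLC3 ξ (hrec ξ hξ) r 0 0 (w := w) (by rwa [Hm_U01])
      simpa using this
  · refine no_period P.hε h02 z.x0_mem.1 hb fun w hw => ?_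
    refine hopf02 hK hLC2 z (hrec z mz) s b c (S_rel h02 rh.symm ?_)
    refine chain 0 2 h02 hLC2 (fun ξ hξ r w h => ?_) w hw
    have := hopf02 hK hLC2 ξ (hrec ξ hξ) r 0 0 (w := w) (by rwa [Hm_U01])
    simpa using this

end LW

namespace LW
open Topology MeasureTheory Matrix ENNReal

noncomputable def ind {X : Type*} (B : Set X) (x : X) : ℝ≥0∞ := B.indicator (fun _ => 1) x
lemma ind_le {X : Type*} (B : Set X) (x : X) : ind B x ≤ 1 := by
  by_cases h : x ∈ B <;> simp [ind, h]
lemma ind_meas {X : Type*} [MeasurableSpace X] {B : Set X} (hB : MeasurableSet B) : Measurable (ind B) :=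
  measurable_const.indicator hB
lemma ind_int {X : Type*} [MeasurableSpace X] (μ : Measure X) {B : Set X} (hB : MeasurableSet B) :
    ∫⁻ x, ind B x ∂μ = μ B := lintegral_indicator_one hB
lemma ind_sum {X ι : Type*} (B : Set X) (s : Finset ι) (φ : ι → X) [DecidablePred fun i => φ i ∈ B] :
    ∑ i ∈ s, ind B (φ i) = ((s.filter fun i => φ i ∈ B).card : ℝ≥0∞) := by
  rw [Finset.card_filter]; push_cast
  refine Finset.sum_congr rfl fun i _ => ?_
  by_cases h : φ i ∈ B <;> simp [ind, h]

lemma max_F {X G : Type*} [MeasurableSpace X] (μ : Measure X) [IsFiniteMeasure μ] [AddCommGroup G]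
    (T : G → X → X) (hT : ∀ e, MeasurePreserving (T e) μ μ) (hTT : ∀ e f x, T e (T f x) = T (e + f) x)
    (H : ℕ → Finset G) (hmono : Monotone H) (hne : ∀ m, 0 ∈ H m)
    (hadd : ∀ m, ∀ e ∈ H m, ∀ f, f + e ∈ H m ↔ f ∈ H m)
    {B : Set X} (hB : MeasurableSet B) (k : ℝ≥0∞) :
    μ {x | ∃ m, ((H m).card : ℝ≥0∞) < k * ∑ f ∈ H m, ind B (T f x)} ≤ k * μ B := by
  set cnt : ℕ → X → ℝ≥0∞ := fun m x => ∑ f ∈ H m, ind B (T f x) with hcnt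
  have mcnt : ∀ m, Measurable (cnt m) := fun m =>
    Finset.measurable_sum _ fun f _ => (ind_meas hB).comp (hT f).measurable
  have inv : ∀ m m', m ≤ m' → ∀ e ∈ H m, ∀ x, cnt m' (T e x) = cnt m' x := by
    intro m m' hm e he x
    simp only [hcnt, hTT]
    refine Finset.sum_bij (fun f _ => f + e) ?_ ?_ ?_ ?_
    · intro f hf; exact (hadd m' e (hmono hm he) f).2 hf
    · intro a _ b _ h; exact add_right_cancel h
    · intro b hb
      refine ⟨b - e, ?_, by simp⟩
      rw [← hadd m' e (hmono hm he)]; simpa using hb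
    · intro f hf; rfl
  set bad : ℕ → Set X := fun m => {x | ((H m).card : ℝ≥0∞) < k * cnt m x} with hbad
  have mbad : ∀ m, MeasurableSet (bad m) := fun m =>
    measurableSet_lt measurable_const ((mcnt m).const_mul k)
  have fin : ∀ Mx : ℕ, μ (⋃ m ∈ Finset.range Mx, bad m) ≤ k * μ B := by
    intro Mx
    set A : ℕ → Set X := fun m => bad m \ ⋃ m' ∈ Finset.Ioo m Mx, bad m' with hA
    have mA : ∀ m, MeasurableSet (A m) := fun m =>
      (mbad m).diff (Finset.measurableSet_biUnion _ fun m' _ => mbad m')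
    have Ainv : ∀ m, ∀ e ∈ H m, T e ⁻¹' (A m) = A m := by
      intro m e he; ext x
      simp only [hA, hbad, Set.mem_preimage, Set.mem_sdiff, Set.mem_ofPred_eq, Set.mem_iUnion, not_exists,
        Finset.mem_Ioo, inv m m le_rfl e he]
      refine and_congr_right fun _ => forall_congr' fun m' => forall_congr' fun hm' => ?_
      rw [inv m m' hm'.1.le e he]
    have hAm : ∀ m, μ (A m) ≤ k * μ (A m ∩ B) := by
      intro m
      have c0 : ((H m).card : ℝ≥0∞) ≠ 0 := by
        simp [Finset.card_eq_zero]; exact Finset.ne_empty_of_mem (hne m)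
      have c1 : ((H m).card : ℝ≥0∞) ≠ ∞ := by simp
      have h1 : ((H m).card : ℝ≥0∞) * μ (A m) ≤ ((H m).card : ℝ≥0∞) * (k * μ (A m ∩ B)) := by
        calc ((H m).card : ℝ≥0∞) * μ (A m) = ∫⁻ x in A m, ((H m).card : ℝ≥0∞) ∂μ := by simp
          _ ≤ ∫⁻ x in A m, k * cnt m x ∂μ := by
              refine setLIntegral_mono ((mcnt m).const_mul k) fun x hx => ?_
              exact le_of_lt hx.1
          _ = k * ∑ f ∈ H m, μ (A m ∩ B) := by
              rw [lintegral_const_mul _ (mcnt m)]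
              congr 1
              show ∫⁻ x in A m, ∑ f ∈ H m, ind B (T f x) ∂μ = _
              rw [lintegral_finsetSum _ fun f _ => (show Measurable fun x => ind B (T f x) from (ind_meas hB).comp (hT f).measurable)]
              refine Finset.sum_congr rfl fun f hf => ?_
              have h2 : (fun x => ind B (T f x)) = ind (T f ⁻¹' B) := by
                ext x; rfl
              rw [h2, ind_int _ ((hT f).measurable hB), Measure.restrict_apply ((hT f).measurable hB)]
              rw [← (hT f).measure_preimage ((mA m).inter hB).nullMeasurableSet, Set.preimage_inter,
                Ainv m f hf, Set.inter_comm]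
          _ = _ := by rw [Finset.sum_const, nsmul_eq_mul]; ring
      exact (ENNReal.mul_le_mul_iff_right c0 c1).1 h1
    have hcover : (⋃ m ∈ Finset.range Mx, bad m) ⊆ ⋃ m ∈ Finset.range Mx, A m := by
      intro x hx
      simp only [Set.mem_iUnion, Finset.mem_range, exists_prop] at hx ⊢
      classical
      set s := (Finset.range Mx).filter fun m => x ∈ bad m with hs
      have hsne : s.Nonempty := by
        obtain ⟨m, h1, h2⟩ := hx; exact ⟨m, by simp [hs, h1, h2]⟩
      have hm := Finset.mem_filter.1 (s.max'_mem hsne)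
      refine ⟨_, Finset.mem_range.1 hm.1, hm.2, ?_⟩
      simp only [Set.mem_iUnion, not_exists, Finset.mem_Ioo]
      intro m' hm' hb
      have : m' ∈ s := by simp [hs, hm'.2, hb]
      exact absurd (s.le_max' m' this) (not_le.2 hm'.1)
    have hdisj : (↑(Finset.range Mx) : Set ℕ).PairwiseDisjoint A := by
      have key : ∀ m m', m < m' → m' < Mx → Disjoint (A m) (A m') := by
        intro m m' h h'
        rw [Set.disjoint_left]
        intro x hx hx'
        exact hx.2 (Set.mem_biUnion (Finset.mem_coe.2 (Finset.mem_Ioo.2 ⟨h, h'⟩)) hx'.1)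
      intro m hm m' hm' hne
      simp only [Finset.coe_range, Set.mem_Iio] at hm hm'
      rcases lt_or_gt_of_ne hne with h | h
      · exact key _ _ h hm'
      · exact (key _ _ h hm).symm
    calc μ (⋃ m ∈ Finset.range Mx, bad m) ≤ μ (⋃ m ∈ Finset.range Mx, A m) := measure_mono hcover
      _ ≤ ∑ m ∈ Finset.range Mx, μ (A m) := measure_biUnion_finset_le _ _
      _ ≤ ∑ m ∈ Finset.range Mx, k * μ (A m ∩ B) := Finset.sum_le_sum fun m _ => hAm m
      _ = k * ∑ m ∈ Finset.range Mx, μ (A m ∩ B) := by rw [Finset.mul_sum]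
      _ = k * μ (⋃ m ∈ Finset.range Mx, A m ∩ B) := by
          rw [measure_biUnion_finset (fun m hm m' hm' h => (hdisj hm hm' h).mono Set.inter_subset_left Set.inter_subset_left)
            fun m _ => (mA m).inter hB]
      _ ≤ k * μ B := by
          gcongr
          exact Set.iUnion₂_subset fun m _ => Set.inter_subset_right
  have heq : {x | ∃ m, ((H m).card : ℝ≥0∞) < k * ∑ f ∈ H m, ind B (T f x)} =
      ⋃ Mx : ℕ, ⋃ m ∈ Finset.range Mx, bad m := by
    ext x
    simp only [Set.mem_ofPred_eq, Set.mem_iUnion, Finset.mem_range, exists_prop]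
    constructor
    · rintro ⟨m, hm⟩; exact ⟨m + 1, m, by omega, hm⟩
    · rintro ⟨_, m, _, hm⟩; exact ⟨m, hm⟩
  rw [heq, Monotone.measure_iUnion]
  · exact iSup_le fin
  · intro a b hab
    exact Set.biUnion_subset_biUnion_left fun m hm => by simp at hm ⊢; omega

lemma greedy (c : ℕ → ℝ≥0∞) (k : ℝ≥0∞) (N : ℕ) (e : Set ℕ)
    (he : ∀ j ∈ e, ∃ l : ℕ, 1 ≤ l ∧ l ≤ N ∧ (l : ℝ≥0∞) ≤ k * ∑ i ∈ Finset.range l, c (j + i)) :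
    ∀ L a : ℕ, ∑ j ∈ Finset.range L, ind e (a + j) ≤ k * ∑ j ∈ Finset.range (L + N), c (a + j) := by
  have le_card : ∀ l a : ℕ, ∑ j ∈ Finset.range l, ind e (a + j) ≤ l := fun l a => by
    refine (Finset.sum_le_sum fun j _ => ind_le e (a + j)).trans ?_
    simp
  intro L
  induction L using Nat.strong_induction_on with
  | _ L ih =>
  intro a
  rcases Nat.eq_zero_or_pos L with rfl | hL
  · simp
  by_cases ha : a ∈ e
  · obtain ⟨l, h1, h2, h3⟩ := he a ha
    by_cases hlL : l ≤ L
    · obtain ⟨r, rfl⟩ := Nat.exists_eq_add_of_le hlL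
      have h4 := ih r (by omega) (a + l)
      rw [Finset.sum_range_add, show l + r + N = l + (r + N) by ring, Finset.sum_range_add, mul_add]
      simp only [add_assoc] at h4 ⊢
      exact add_le_add ((le_card l a).trans h3) h4
    · push Not at hlL
      refine (le_card L a).trans (le_trans (by exact_mod_cast hlL.le) (h3.trans ?_))
      gcongr
      omega
  · obtain ⟨r, rfl⟩ := Nat.exists_eq_add_of_le' hL
    have h4 := ih r (by omega) (a + 1)
    rw [Finset.sum_range_succ']
    have : ind e (a + 0) = 0 := by simp [ind, ha]
    rw [this, add_zero]
    have h5 : ∀ j, a + (j + 1) = a + 1 + j := fun j => by ring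
    rw [Finset.sum_congr rfl fun j _ => by rw [h5 j]]
    refine h4.trans ?_
    gcongr
    rw [show r + 1 + N = (r + N) + 1 by ring, Finset.sum_range_succ']
    rw [Finset.sum_congr rfl fun j _ => by rw [← h5 j]]
    exact le_self_add

lemma arch_enn {x y : ℝ≥0∞} {N : ℕ} (hy : y ≠ ∞) (h : ∀ L : ℕ, (L : ℝ≥0∞) * x ≤ (L + N : ℕ) * y) : x ≤ y := by
  have hx : x ≠ ∞ := by
    have := h 1
    intro hx; rw [hx] at this
    simp only [Nat.cast_one, one_mul, top_le_iff] at this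
    exact (ENNReal.mul_ne_top (by simp) hy) this
  by_contra hlt
  push Not at hlt
  rw [← ENNReal.toReal_lt_toReal hy hx] at hlt
  obtain ⟨L, hL⟩ := exists_nat_gt (N * y.toReal / (x.toReal - y.toReal))
  rw [div_lt_iff₀ (by linarith)] at hL
  have := ENNReal.toReal_mono (ENNReal.mul_ne_top (by simp) hy) (h L)
  simp only [ENNReal.toReal_mul, ENNReal.toReal_natCast] at this
  push_cast at this
  nlinarith

lemma max_Z {X : Type*} [MeasurableSpace X] (μ : Measure X) [IsFiniteMeasure μ]
    (T : X → X) (hT : MeasurePreserving T μ μ) {B : Set X} (hB : MeasurableSet B) (k : ℝ≥0∞) (hk : k ≠ ∞) :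
    μ {x | ∃ l : ℕ, (l : ℝ≥0∞) < k * ∑ j ∈ Finset.range l, ind B (T^[j] x)} ≤ k * μ B := by
  have mi : ∀ j, Measurable fun x => ind B (T^[j] x) := fun j =>
    (ind_meas hB).comp (hT.measurable.iterate j)
  have ii : ∀ {A : Set X} (hA : MeasurableSet A) j, ∫⁻ x, ind A (T^[j] x) ∂μ = μ A := fun {A} hA j => by
    rw [(hT.iterate j).lintegral_comp (ind_meas hA), ind_int _ hA]
  set bad : ℕ → Set X := fun N => ⋃ l ∈ Finset.range (N+1),
    {x | (l : ℝ≥0∞) < k * ∑ j ∈ Finset.range l, ind B (T^[j] x)} with hbad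
  have mbad : ∀ N, MeasurableSet (bad N) := fun N => Finset.measurableSet_biUnion _ fun l _ =>
    measurableSet_lt measurable_const ((Finset.measurable_sum _ fun j _ => mi j).const_mul k)
  have fin : ∀ N, μ (bad N) ≤ k * μ B := by
    intro N
    refine arch_enn (N := N) (ENNReal.mul_ne_top hk (measure_ne_top _ _)) fun L => ?_
    calc (L : ℝ≥0∞) * μ (bad N) = ∫⁻ x, ∑ j ∈ Finset.range L, ind (bad N) (T^[j] x) ∂μ := by
          rw [lintegral_finsetSum _ fun j _ => (show Measurable fun x => ind (bad N) (T^[j] x) from (ind_meas (mbad N)).comp (hT.measurable.iterate j))]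
          simp [ii (mbad N)]
      _ ≤ ∫⁻ x, k * ∑ j ∈ Finset.range (L + N), ind B (T^[j] x) ∂μ := by
          refine lintegral_mono fun x => ?_
          have := greedy (fun j => ind B (T^[j] x)) k N {j | T^[j] x ∈ bad N} (by
            intro j hj
            simp only [Set.mem_ofPred_eq, hbad, Set.mem_iUnion, Finset.mem_range, exists_prop] at hj
            obtain ⟨l, hl, hlt⟩ := hj
            refine ⟨l, ?_, by omega, ?_⟩
            · rcases Nat.eq_zero_or_pos l with rfl | h
              · simp at hlt
              · exact h
            · refine hlt.le.trans_eq ?_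
              congr 1
              refine Finset.sum_congr rfl fun i _ => ?_
              rw [← Function.iterate_add_apply, add_comm]) L 0
          simp only [zero_add] at this
          exact this
      _ = _ := by
          rw [lintegral_const_mul _ (Finset.measurable_sum _ fun j _ => mi j),
            lintegral_finsetSum _ fun j _ => mi j]
          simp [ii hB]; ring
  have heq : {x | ∃ l : ℕ, (l : ℝ≥0∞) < k * ∑ j ∈ Finset.range l, ind B (T^[j] x)} = ⋃ N, bad N := by
    ext x
    simp only [hbad, Set.mem_ofPred_eq, Set.mem_iUnion, Finset.mem_range, exists_prop]
    constructor
    · rintro ⟨m, hm⟩; exact ⟨m, m, by omega, hm⟩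
    · rintro ⟨_, m, _, hm⟩; exact ⟨m, hm⟩
  rw [heq, Monotone.measure_iUnion]
  · exact iSup_le fin
  · intro a b hab
    exact Set.biUnion_subset_biUnion_left fun m hm => by simp at hm ⊢; omega

end LW

namespace LW
open Topology MeasureTheory Matrix ENNReal
variable {P : Par}

lemma LC.mono {i j : Fin 3} {K K' : Set (E P)} (h : LC i j K) (hs : K' ⊆ K) : LC i j K' :=
  fun ζ hζ w hw δ hδ => (h ζ (hs hζ) w hw δ hδ).mono fun η hη hK => hη (hs hK)

lemma lusin1 (μ : Measure (E P)) [IsFiniteMeasure μ] (i j : Fin 3) {η : ℝ≥0∞} (hη : η ≠ 0) :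
    ∃ K : Set (E P), IsClosed K ∧ LC i j K ∧ μ Kᶜ < η := by
  set Ej : ℚ × ℚ → Set (E P) := fun p => {ξ | ∃ w ∈ Set.Icc (p.1 : ℝ) p.2, w ∈ S P.ε i j ξ.x0} with hE
  have cE : ∀ p, IsClosed (Ej p) := by
    intro p
    have h1 : IsClosed {q : E P × ℝ | q.2 ∈ S P.ε i j q.1.x0} := by
      have hc : Continuous fun q : E P × ℝ => ((q.1.x0, q.2) : Mat × ℝ) :=
        (E.cont_x0.comp continuous_fst).prodMk continuous_snd
      exact (S_closed P.ε i j).preimage hc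
    have h2 : IsCompact (((Set.univ : Set (E P)) ×ˢ Set.Icc (p.1 : ℝ) p.2) ∩ {q : E P × ℝ | q.2 ∈ S P.ε i j q.1.x0}) :=
      (isCompact_univ.prod isCompact_Icc).inter_right h1
    have h3 : Ej p = Prod.fst '' (((Set.univ : Set (E P)) ×ˢ Set.Icc (p.1 : ℝ) p.2) ∩ {q : E P × ℝ | q.2 ∈ S P.ε i j q.1.x0}) := by
      apply Set.ext; intro ξ
      constructor
      · rintro ⟨w, hw, hS⟩; exact ⟨(ξ, w), ⟨⟨trivial, hw⟩, hS⟩, rfl⟩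
      · rintro ⟨⟨ξ', w⟩, ⟨⟨-, hw⟩, hS⟩, rfl⟩; exact ⟨w, hw, hS⟩
    rw [h3]
    exact (h2.image continuous_fst).isClosed
  obtain ⟨δ, hδ, hsum⟩ := ENNReal.exists_pos_sum_of_countable' hη (ℚ × ℚ)
  have hC : ∀ p, ∃ C ⊆ (Ej p)ᶜ, IsClosed C ∧ μ ((Ej p)ᶜ \ C) < δ p := fun p =>
    (cE p).measurableSet.compl.exists_isClosed_sdiff_lt (measure_ne_top _ _) (hδ p).ne'
  choose C hC1 hC2 hC3 using hC
  refine ⟨⋂ p, (Ej p ∪ C p), isClosed_iInter fun p => (cE p).union (hC2 p), ?_, ?_⟩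
  · intro ζ hζ w hw d hd
    obtain ⟨a, ha1, ha2⟩ := exists_rat_btwn (show w - d < w by linarith)
    obtain ⟨b, hb1, hb2⟩ := exists_rat_btwn (show w < w + d by linarith)
    have h1 : ζ ∉ C (a, b) := fun h => hC1 (a, b) h ⟨w, ⟨ha2.le, hb1.le⟩, hw⟩
    filter_upwards [(hC2 (a, b)).isOpen_compl.mem_nhds h1] with η' h2 h3
    rcases Set.mem_iInter.1 h3 (a, b) with h4 | h4
    · obtain ⟨w', hw', hS⟩ := h4
      exact ⟨w', hS, abs_lt.2 ⟨by linarith [hw'.1], by linarith [hw'.2]⟩⟩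
    · exact absurd h4 h2
  · refine lt_of_le_of_lt ?_ hsum
    have hs : (⋂ p, (Ej p ∪ C p))ᶜ ⊆ ⋃ p, ((Ej p)ᶜ \ C p) := by
      intro ξ hξ
      rw [Set.mem_compl_iff, Set.mem_iInter] at hξ
      push Not at hξ
      obtain ⟨p, hp⟩ := hξ
      rw [Set.mem_union, not_or] at hp
      exact Set.mem_iUnion.2 ⟨p, hp⟩
    calc _ ≤ μ (⋃ p, ((Ej p)ᶜ \ C p)) := measure_mono hs
      _ ≤ ∑' p, μ ((Ej p)ᶜ \ C p) := measure_iUnion_le _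
      _ ≤ _ := ENNReal.tsum_le_tsum fun p => (hC3 p).le

structure Inv (μ : Measure (E P)) : Prop where
  tt : ∀ k l, MeasurePreserving (TT k l : E P → E P) μ μ
  te : ∀ e, MeasurePreserving (TE e : E P → E P) μ μ

lemma lusin (μ : Measure (E P)) [IsFiniteMeasure μ] (hμ : Inv μ) {η : ℝ≥0∞} (hη : η ≠ 0) (hη' : η ≠ ∞) :
    ∃ K 𝒦 : Set (E P), IsClosed K ∧ LC 0 1 K ∧ LC 0 2 K ∧ LC 2 1 K ∧ IsClosed 𝒦 ∧ 𝒦 ⊆ K ∧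
      (∀ ξ ∈ 𝒦, Rec K ξ) ∧ μ 𝒦ᶜ < η := by
  have h4 : η / 4 ≠ 0 := ENNReal.div_ne_zero.2 ⟨hη, by simp⟩
  obtain ⟨K1, c1, l1, m1⟩ := lusin1 μ 0 1 h4
  obtain ⟨K2, c2, l2, m2⟩ := lusin1 μ 0 2 h4
  obtain ⟨K3, c3, l3, m3⟩ := lusin1 μ 2 1 h4
  set K := K1 ∩ (K2 ∩ K3) with hK
  have cK : IsClosed K := c1.inter (c2.inter c3)
  have hrec : ∀ᵐ ξ ∂μ, ξ ∈ K → Rec K ξ := by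
    have r1 := ((hμ.tt 0 (-1)).conservative).ae_mem_imp_frequently_image_mem cK.measurableSet.nullMeasurableSet
    have r2 := ((hμ.tt (-1) (-1)).conservative).ae_mem_imp_frequently_image_mem cK.measurableSet.nullMeasurableSet
    filter_upwards [r1, r2] with ξ h1 h2 h
    refine ⟨(h1 h).mono fun n hn => ?_, (h2 h).mono fun n hn => ?_⟩
    · rw [TT_iter] at hn; convert hn using 2 <;> ring
    · rw [TT_iter] at hn; convert hn using 2 <;> ring
  set Z := toMeasurable μ {ξ | ¬ (ξ ∈ K → Rec K ξ)} with hZ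
  have mZ : μ Z = 0 := by rw [hZ, measure_toMeasurable]; exact ae_iff.1 hrec
  obtain ⟨𝒦, k1, k2, k3⟩ := (cK.measurableSet.diff (measurableSet_toMeasurable μ {ξ | ¬ (ξ ∈ K → Rec K ξ)})).exists_isClosed_sdiff_lt
    (measure_ne_top μ _) h4
  refine ⟨K, 𝒦, cK, l1.mono Set.inter_subset_left,
    l2.mono (Set.inter_subset_right.trans Set.inter_subset_left),
    l3.mono (Set.inter_subset_right.trans Set.inter_subset_right), k2, fun ξ h => (k1 h).1, fun ξ h => ?_, ?_⟩
  · by_contra hr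
    exact (k1 h).2 (subset_toMeasurable _ _ fun h' => hr (h' (k1 h).1))
  · have hs : 𝒦ᶜ ⊆ K1ᶜ ∪ (K2ᶜ ∪ (K3ᶜ ∪ (Z ∪ ((K \ Z) \ 𝒦)))) := by
      intro ξ hξ
      by_cases a1 : ξ ∈ K1
      · by_cases a2 : ξ ∈ K2
        · by_cases a3 : ξ ∈ K3
          · by_cases a4 : ξ ∈ Z
            · exact Or.inr (Or.inr (Or.inr (Or.inl a4)))
            · exact Or.inr (Or.inr (Or.inr (Or.inr ⟨⟨⟨a1, a2, a3⟩, a4⟩, hξ⟩)))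
          · exact Or.inr (Or.inr (Or.inl a3))
        · exact Or.inr (Or.inl a2)
      · exact Or.inl a1
    calc μ 𝒦ᶜ ≤ μ K1ᶜ + (μ K2ᶜ + (μ K3ᶜ + (μ Z + μ ((K \ Z) \ 𝒦)))) := by
          refine (measure_mono hs).trans ((measure_union_le _ _).trans ?_)
          gcongr
          refine (measure_union_le _ _).trans ?_
          gcongr
          refine (measure_union_le _ _).trans ?_
          gcongr
          exact measure_union_le _ _
      _ < η / 4 + (η / 4 + (η / 4 + (0 + η / 4))) := by
          rw [mZ]
          exact ENNReal.add_lt_add m1 (ENNReal.add_lt_add m2 (ENNReal.add_lt_add m3 (by rw [zero_add, zero_add]; exact k3)))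
      _ = η := by
          rw [zero_add]
          have : η / 4 + (η / 4 + (η / 4 + η / 4)) = 4 * (η / 4) := by ring
          rw [this, ENNReal.mul_div_cancel (by simp) (by simp)]

end LW

namespace LW
open Topology MeasureTheory Matrix
variable {P : Par}

lemma alg_num {ρ ρ' : ℝ} (T1 T2 n3 : ℤ) (h1 : 2 * ρ + ρ' = T1) (h2 : 2 * ρ ^ 2 + ρ' ^ 2 = T2)
    (h3 : ρ ^ 2 * ρ' = n3) (hn : |n3| = 1) (hint : IsIntegral ℤ ρ) (hlt : |ρ| < 1) : False := by
  have hρ0 : ρ ≠ 0 := by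
    rintro rfl
    have : (n3 : ℝ) = 0 := by rw [← h3]; ring
    have : n3 = 0 := by exact_mod_cast this
    rw [this] at hn; simp at hn
  have hne : ρ ≠ ρ' := by
    rintro rfl
    have h4 : |ρ| ^ 2 * |ρ| = 1 := by
      rw [← abs_pow, ← abs_mul, h3]; exact_mod_cast hn
    have h0 := abs_nonneg ρ
    have : |ρ| ^ 2 * |ρ| < 1 := by
      have : |ρ|^2 ≤ 1 := by nlinarith
      nlinarith
    linarith
  have hd : ((6 * T2 - 2 * T1 ^ 2 : ℤ) : ℝ) = 4 * (ρ - ρ') ^ 2 := by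
    push_cast; rw [← h1, ← h2]; ring
  have hd0 : ((6 * T2 - 2 * T1 ^ 2 : ℤ) : ℝ) ≠ 0 := by
    rw [hd]; have := sub_ne_zero.2 hne; positivity
  have hr : ρ = (((T1 ^ 3 - T1 * T2 - 18 * n3 : ℤ) / (6 * T2 - 2 * T1 ^ 2 : ℤ) : ℚ) : ℝ) := by
    rw [Rat.cast_div, Rat.cast_intCast, Rat.cast_intCast, eq_div_iff hd0]
    push_cast; rw [← h1, ← h2, ← h3]; ring
  set r : ℚ := ((T1 ^ 3 - T1 * T2 - 18 * n3 : ℤ) / (6 * T2 - 2 * T1 ^ 2 : ℤ) : ℚ)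
  rw [hr] at hint
  have hint' : IsIntegral ℤ r := by
    rw [← isIntegral_algebraMap_iff (B := ℝ) (algebraMap ℚ ℝ).injective]
    simpa using hint
  obtain ⟨z, hz⟩ := IsIntegrallyClosed.isIntegral_iff.1 hint'
  have hz' : ρ = z := by rw [hr, ← hz]; simp
  rw [hz'] at hlt hρ0
  have h5 : |z| < 1 := by exact_mod_cast hlt
  have h6 : z = 0 := Int.abs_lt_one_iff.1 h5
  exact hρ0 (by rw [h6]; simp)

lemma alg (k : ℤ) (hk : 1 ≤ k) (x g : Mat) (hx : |x.det| = 1)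
    (hrel : Rel (P.a k 0 * x) (g * x)) (h00 : |g 0 0 - 1| ≤ 1 / 2) (h11 : g 1 1 = g 0 0) (h10 : g 1 0 = 0)
    (h12 : g 1 2 = 0) (h20 : g 2 0 = 0) : False := by
  obtain ⟨-, Q, hQ, hQ2⟩ := hrel
  have hxu : IsUnit x.det := by
    rw [isUnit_iff_ne_zero]; intro h; rw [h] at hx; simp at hx
  set B : Mat := P.a (-k) 0 * g with hB
  have hBx : B * x = x * ic Q := by
    rw [hB, Matrix.mul_assoc, hQ2, ← Matrix.mul_assoc, ← Matrix.mul_assoc, P.a_add]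
    simp [P.a_zero]
  have hconj : B = x * ic Q * x⁻¹ := by
    rw [← hBx, Matrix.mul_assoc, Matrix.mul_nonsing_inv _ hxu, Matrix.mul_one]
  set ρ : ℝ := (P.M : ℝ) ^ (-k) * g 0 0 with hρ
  set ρ' : ℝ := (P.M : ℝ) ^ (2 * k) * g 2 2 with hρ'
  have hBe : B = !![ρ, (P.M : ℝ) ^ (-k) * g 0 1, (P.M : ℝ) ^ (-k) * g 0 2; 0, ρ, 0; 0, (P.M : ℝ) ^ (2 * k) * g 2 1, ρ'] := by
    rw [hB, Par.a, A]
    ext i j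
    fin_cases i <;> fin_cases j <;> simp [Matrix.diagonal_mul, h11, h10, h12, h20, hρ, hρ']
  have t1 : B.trace = ((Q.trace : ℤ) : ℝ) := by
    rw [hconj, Matrix.trace_mul_comm, ← Matrix.mul_assoc, Matrix.nonsing_inv_mul _ hxu, Matrix.one_mul]
    simp [ic, Matrix.trace]
  have t2 : (B * B).trace = (((Q * Q).trace : ℤ) : ℝ) := by
    have : B * B = x * ic (Q * Q) * x⁻¹ := by
      rw [ic_mul, hconj]
      simp only [Matrix.mul_assoc]
      rw [Matrix.nonsing_inv_mul_cancel_left x _ hxu]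
    rw [this, Matrix.trace_mul_comm, ← Matrix.mul_assoc, Matrix.nonsing_inv_mul _ hxu, Matrix.one_mul]
    simp [ic, Matrix.trace]
  have t3 : B.det = ((Q.det : ℤ) : ℝ) := by
    have h := congrArg Matrix.det hBx
    rw [det_mul B x, det_mul x, mul_comm, ic_det] at h
    exact mul_left_cancel₀ hxu.ne_zero h
  have hint : IsIntegral ℤ ρ := by
    refine ⟨Q.charpoly, Q.charpoly_monic, ?_⟩
    have e1 : Polynomial.eval₂ (algebraMap ℤ ℝ) ρ Q.charpoly = (ic Q).charpoly.eval ρ := by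
      rw [Polynomial.eval₂_eq_eval_map, ic_eq]
      rw [← Matrix.charpoly_map]; rfl
    rw [e1]
    rw [Matrix.eval_charpoly]
    have e2 : (Matrix.scalar (Fin 3) ρ - ic Q).det = (Matrix.scalar (Fin 3) ρ - B).det := by
      have h : (Matrix.scalar (Fin 3) ρ - B) * x = x * (Matrix.scalar (Fin 3) ρ - ic Q) := by
        rw [Matrix.sub_mul, Matrix.mul_sub, hBx]; congr 1
        exact Matrix.scalar_commute ρ (fun _ => mul_comm _ _) x
      have h' := congrArg Matrix.det h
      rw [det_mul, det_mul, mul_comm] at h'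
      exact (mul_left_cancel₀ hxu.ne_zero h').symm
    rw [e2, hBe, det_fin_three]
    simp
  have hM := P.M1
  have hMk : (P.M : ℝ) ^ (-k) ≤ 1 / 2 := by
    have h2 : (2 : ℝ) ≤ P.M := by exact_mod_cast P.hM
    calc (P.M : ℝ) ^ (-k) ≤ (P.M : ℝ) ^ (-1 : ℤ) := zpow_le_zpow_right₀ hM.le (by omega)
      _ = (P.M : ℝ)⁻¹ := by simp
      _ ≤ 1 / 2 := by rw [one_div]; exact inv_anti₀ (by norm_num) h2
  refine alg_num (ρ := ρ) (ρ' := ρ') Q.trace (Q * Q).trace Q.det ?_ ?_ ?_ hQ hint ?_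
  · rw [← t1, hBe]; simp [Matrix.trace, Fin.sum_univ_three]; ring
  · rw [← t2, hBe]; simp [Matrix.trace, Fin.sum_univ_three, Matrix.mul_apply]; ring
  · rw [← t3, hBe, det_fin_three]; simp; left; ring
  · rw [hρ, abs_mul, abs_of_pos (by positivity)]
    have : |g 0 0| ≤ 3 / 2 := by rw [abs_le] at h00 ⊢; constructor <;> linarith [h00.1, h00.2]
    have h0 : (0:ℝ) < (P.M : ℝ) ^ (-k) := by positivity
    nlinarith [abs_nonneg (g 0 0)]
end LW

namespace LW
open Topology MeasureTheory Matrix ENNReal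
variable {P : Par}

noncomputable def FF (m : ℕ) : Finset F := (Finset.Icc (0:ℤ) m).finsupp fun _ => Finset.univ

lemma mem_FF {m : ℕ} {f : F} : f ∈ FF m ↔ ∀ i : ℤ, ¬ (0 ≤ i ∧ i ≤ m) → f i = 0 := by
  rw [FF, Finset.mem_finsupp_iff]
  constructor
  · rintro ⟨h, -⟩ i hi
    by_contra h0
    exact hi (Finset.mem_Icc.1 (h (Finsupp.mem_support_iff.2 h0)))
  · intro h
    refine ⟨fun i hi => ?_, fun _ _ => Finset.mem_univ _⟩
    by_contra h0
    exact (Finsupp.mem_support_iff.1 hi) (h i fun h' => h0 (Finset.mem_Icc.2 h'))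

lemma FF_zero (m : ℕ) : (0 : F) ∈ FF m := mem_FF.2 fun _ _ => rfl
lemma FF_mono : Monotone FF := fun a b hab f hf => mem_FF.2 fun i hi => mem_FF.1 hf i fun h => hi ⟨h.1, by omega⟩
lemma FF_add (m : ℕ) (e : F) (he : e ∈ FF m) (f : F) : f + e ∈ FF m ↔ f ∈ FF m := by
  simp only [mem_FF] at he ⊢
  refine forall_congr' fun i => forall_congr' fun hi => ?_
  simp [he i hi]
lemma FF_single (m : ℕ) (i : ℤ) (h : 0 ≤ i) (h' : i ≤ m) (c : ZMod 3) : Finsupp.single i c ∈ FF m :=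
  mem_FF.2 fun k hk => Finsupp.single_eq_of_ne (by rintro rfl; exact hk ⟨h, h'⟩)

/-- pigeonhole for triples -/
lemma triple {m : ℕ} {e : F} (he : e ∈ FF m) (Bad Good : F → Prop)
    [DecidablePred Bad]
    (hB : 10 * ((FF m).filter Bad).card ≤ 2 * (FF m).card)
    (hG : ∀ f ∈ FF m, Good f ∨ Good (f + e) ∨ Good (f + (e + e))) : ∃ f ∈ FF m, Good f ∧ ¬ Bad f := by
  by_contra hcon
  push Not at hcon
  classical
  have hee : e + e ∈ FF m := (FF_add m e he e).2 he
  have hsub : FF m ⊆ (FF m).filter Bad ∪ ((FF m).filter (fun f => Bad (f + e)) ∪ (FF m).filter (fun f => Bad (f + (e+e)))) := by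
    intro f hf
    simp only [Finset.mem_union, Finset.mem_filter, hf, true_and]
    rcases hG f hf with h | h | h
    · exact Or.inl (hcon f hf h)
    · exact Or.inr (Or.inl (hcon _ ((FF_add m e he f).2 hf) h))
    · exact Or.inr (Or.inr (hcon _ ((FF_add m _ hee f).2 hf) h))
  have hsh : ∀ e' ∈ FF m, ((FF m).filter (fun f => Bad (f + e'))).card ≤ ((FF m).filter Bad).card := by
    intro e' he'
    refine Finset.card_le_card_of_injOn (fun f => f + e') ?_ (fun a _ b _ h => add_right_cancel h)
    intro f hf
    have hf := Finset.mem_filter.1 hf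
    exact Finset.mem_coe.2 (Finset.mem_filter.2 ⟨(FF_add m e' he' f).2 hf.1, hf.2⟩)
  have h1 := Finset.card_le_card hsub
  have h2 := Finset.card_union_le ((FF m).filter Bad) ((FF m).filter (fun f => Bad (f + e)) ∪ (FF m).filter (fun f => Bad (f + (e+e))))
  have h3 := Finset.card_union_le ((FF m).filter (fun f => Bad (f + e))) ((FF m).filter (fun f => Bad (f + (e+e))))
  have h4 := hsh e he
  have h5 := hsh (e+e) hee
  have h6 : 0 < (FF m).card := Finset.card_pos.2 ⟨0, FF_zero m⟩
  omega

def Disp (κ d e10 e12 e20 t : ℝ) : Prop := κ ≤ |t * d - t ^ 2 * e10| ∨ κ ≤ |t * e12| ∨ κ ≤ |t * e20|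

lemma disp_aux {κ s R d e t1 t2 : ℝ} (hs : 0 < s) (h1 : s / 2 ≤ |t1|) (h2 : s / 2 ≤ |t2|) (h12 : s ≤ |t1 - t2|)
    (hR : |t1| ≤ R) (k1 : |t1 * d - t1 ^ 2 * e| < κ) (k2 : |t2 * d - t2 ^ 2 * e| < κ) :
    |e| * s ^ 2 < 4 * κ ∧ |d| * s ^ 2 < 2 * κ * s + 4 * κ * R := by
  have g : ∀ t, s / 2 ≤ |t| → |t * d - t ^ 2 * e| < κ → |d - t * e| * s < 2 * κ := by
    intro t ht hk
    have : t * d - t ^ 2 * e = t * (d - t * e) := by ring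
    rw [this, abs_mul] at hk
    nlinarith [abs_nonneg (d - t * e)]
  have g1 := g t1 h1 k1
  have g2 := g t2 h2 k2
  have g3 : |t1 - t2| * |e| ≤ |d - t1 * e| + |d - t2 * e| := by
    rw [← abs_mul]
    have : (t1 - t2) * e = (d - t2 * e) - (d - t1 * e) := by ring
    rw [this]; refine (abs_sub _ _).trans (by linarith)
  have g4 : |e| * s ^ 2 < 4 * κ := by
    have : s * |e| ≤ |t1 - t2| * |e| := mul_le_mul_of_nonneg_right h12 (abs_nonneg e)
    nlinarith
  refine ⟨g4, ?_⟩
  have g5 : |d| ≤ |d - t1 * e| + |t1| * |e| := by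
    rw [← abs_mul]
    have : d = (d - t1 * e) + t1 * e := by ring
    nth_rewrite 1 [this]; exact abs_add_le _ _
  have hR0 : 0 ≤ R := (abs_nonneg _).trans hR
  have g6 : |t1| * |e| ≤ R * |e| := mul_le_mul_of_nonneg_right hR (abs_nonneg e)
  have g7 : |d| * s ^ 2 ≤ (|d - t1 * e| * s) * s + R * (|e| * s ^ 2) := by nlinarith [sq_nonneg s]
  nlinarith

lemma disp {w N c d e10 e12 e20 : ℝ} (hw : 0 < w) (hN : 1 ≤ N) (hc : 1 ≤ c)
    (h : 1 < |d| * (w * N) ∨ 1 < |e10| * (w * N) ^ 2 ∨ 1 < |e12| * (w * N) ∨ 1 < |e20| * (w * N))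
    {t1 t2 t3 : ℝ} (h12 : w / c ≤ |t1 - t2|) (h13 : w / c ≤ |t1 - t3|) (h23 : w / c ≤ |t2 - t3|)
    (b1 : |t1| ≤ w * N) (b2 : |t2| ≤ w * N) (_b3 : |t3| ≤ w * N) :
    Disp (1 / (16 * N ^ 2 * c ^ 2)) d e10 e12 e20 t1 ∨ Disp (1 / (16 * N ^ 2 * c ^ 2)) d e10 e12 e20 t2 ∨
      Disp (1 / (16 * N ^ 2 * c ^ 2)) d e10 e12 e20 t3 := by
  by_contra hcon
  unfold Disp at hcon
  push Not at hcon
  obtain ⟨⟨p1, q1, r1⟩, ⟨p2, q2, r2⟩, ⟨p3, q3, r3⟩⟩ := hcon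
  set κ := 1 / (16 * N ^ 2 * c ^ 2) with hκ
  set s := w / c with hs
  have hws : w = s * c := by rw [hs]; field_simp
  have hs0 : 0 < s := by positivity
  have hκ0 : 0 < κ := by positivity
  have hκe : κ * (16 * N ^ 2 * c ^ 2) = 1 := by rw [hκ]; field_simp
  have far : ∀ a b : ℝ, s ≤ |a - b| → s / 2 ≤ |a| ∨ s / 2 ≤ |b| := by
    intro a b hab
    by_contra hh; push Not at hh
    have := abs_sub a b
    linarith
  have lin : ∀ e : ℝ, (∃ t, s / 2 ≤ |t| ∧ |t * e| < κ) → ¬ 1 < |e| * (w * N) := by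
    rintro e ⟨t, ht, hk⟩ h1
    rw [abs_mul] at hk
    have h2 : s / 2 * |e| < κ := lt_of_le_of_lt (mul_le_mul_of_nonneg_right ht (abs_nonneg e)) hk
    have h3 : |e| * (w * N) = 2 * c * N * (s / 2 * |e|) := by rw [hws]; ring
    rw [h3] at h1
    have h4 : 2 * c * N * (s / 2 * |e|) < 2 * c * N * κ := mul_lt_mul_of_pos_left h2 (by positivity)
    have h5 : 2 * c * N * κ ≤ κ * (16 * N ^ 2 * c ^ 2) := by
      have : 2 * (c * N) ≤ 16 * (c * N) ^ 2 := by nlinarith [mul_le_mul hc hN zero_le_one (by linarith)]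
      nlinarith
    linarith
  have quad : ∀ a b : ℝ, s / 2 ≤ |a| → s / 2 ≤ |b| → s ≤ |a - b| → |a| ≤ w * N → |a * d - a ^ 2 * e10| < κ →
      |b * d - b ^ 2 * e10| < κ → ¬ (1 < |d| * (w * N)) ∧ ¬ 1 < |e10| * (w * N) ^ 2 := by
    intro a b ha hb hab hR k1 k2
    obtain ⟨u1, u2⟩ := disp_aux hs0 ha hb hab hR k1 k2
    constructor
    · intro h1
      have h2 : |d| * (w * N) * s = (|d| * s ^ 2) * (c * N) := by rw [hws]; ring
      have h3 : |d| * (w * N) * s < (2 * κ * s + 4 * κ * (w * N)) * (c * N) := by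
        rw [h2]; exact mul_lt_mul_of_pos_right u2 (by positivity)
      have h4 : (2 * κ * s + 4 * κ * (w * N)) * (c * N) ≤ (κ * (16 * N ^ 2 * c ^ 2)) * s := by
        rw [hws]
        have : 2 * (c * N) ≤ 2 * (c * N) ^ 2 := by nlinarith [mul_le_mul hc hN zero_le_one (by linarith)]
        have h0 : 0 < κ * s := by positivity
        have h0' : 0 ≤ (c * N) ^ 2 := by positivity
        have e1 : (2 * κ * s + 4 * κ * (s * c * N)) * (c * N) = (κ * s) * (2 * (c * N) + 4 * (c * N) ^ 2) := by ring
        have e2 : (κ * (16 * N ^ 2 * c ^ 2)) * s = (κ * s) * (16 * (c * N) ^ 2) := by ring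
        rw [e1, e2]
        exact mul_le_mul_of_nonneg_left (by linarith) h0.le
      rw [hκe] at h4
      have h5 := mul_lt_mul_of_pos_right h1 hs0
      linarith
    · intro h1
      have h2 : |e10| * (w * N) ^ 2 = (|e10| * s ^ 2) * (c * N) ^ 2 := by rw [hws]; ring
      rw [h2] at h1
      have h3 : (|e10| * s ^ 2) * (c * N) ^ 2 < 4 * κ * (c * N) ^ 2 := mul_lt_mul_of_pos_right u1 (by positivity)
      have : 4 * κ * (c * N) ^ 2 = κ * (16 * N ^ 2 * c ^ 2) / 4 := by ring
      rw [this, hκe] at h3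
      linarith
  have L1 : ∀ e, |t1 * e| < κ → |t2 * e| < κ → ¬ 1 < |e| * (w * N) := by
    intro e k1 k2
    rcases far _ _ h12 with h' | h'
    · exact lin e ⟨t1, h', k1⟩
    · exact lin e ⟨t2, h', k2⟩
  have L2 : ¬ (1 < |d| * (w * N)) ∧ ¬ 1 < |e10| * (w * N) ^ 2 := by
    by_cases a1 : s / 2 ≤ |t1|
    · rcases far _ _ h23 with h' | h'
      · exact quad t1 t2 a1 h' h12 b1 p1 p2
      · exact quad t1 t3 a1 h' h13 b1 p1 p3
    · have a2 := (far _ _ h12).resolve_left a1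
      have a3 := (far _ _ h13).resolve_left a1
      exact quad t2 t3 a2 a3 h23 b2 p2 p3
  rcases h with h | h | h | h
  · exact L2.1 h
  · exact L2.2 h
  · exact L1 _ q1 q2 h
  · exact L1 _ r1 r2 h

end LW

namespace LW
open Topology MeasureTheory Matrix ENNReal
variable {P : Par}

def Phi (P : Par) (d A B C : ℝ) (j n : ℕ) : Prop :=
  d * P.q (n - 2 * j) ≤ 1 ∧ A * P.q (2 * n - 2 * j) ≤ 1 ∧ B * P.q (n - j) ≤ 1 ∧ C * P.q (n - j) ≤ 1

lemma q_big (P : Par) {c : ℝ} (hc : 0 < c) (K : ℤ) : ∃ n : ℕ, ∀ n' : ℕ, n ≤ n' → 1 < c * P.q (n' + K) := by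
  have h8 := P.q_one
  obtain ⟨n, hn⟩ := pow_unbounded_of_one_lt (1 / (c * P.q K)) (show (1:ℝ) < P.q 1 by linarith)
  refine ⟨n, fun n' hn' => ?_⟩
  have hK := P.q_pos K
  rw [div_lt_iff₀ (by positivity), ← P.q_nat] at hn
  have := P.q_mono (show (n:ℤ) ≤ n' by exact_mod_cast hn')
  rw [P.q_add]
  calc 1 < P.q n * (c * P.q K) := hn
    _ ≤ P.q n' * (c * P.q K) := by gcongr
    _ = _ := by ring

lemma levels {d A B C : ℝ} (hd : 0 ≤ d) (hA : 0 ≤ A) (hB : 0 ≤ B) (hC : 0 ≤ C)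
    (hne : ¬ (d = 0 ∧ A = 0 ∧ B = 0 ∧ C = 0)) (n0 : ℕ) (h0 : Phi P d A B C 0 n0) :
    ∃ n : ℕ → ℕ, (∀ j, Phi P d A B C j (n j) ∧ ¬ Phi P d A B C j (n j + 1)) ∧
      (∀ j, n j + 1 ≤ n (j + 1) ∧ n (j + 1) ≤ n j + 2) ∧ n0 ≤ n 0 := by
  have mono : ∀ {a : ℝ} {x y : ℤ}, 0 ≤ a → x ≤ y → a * P.q y ≤ 1 → a * P.q x ≤ 1 := by
    intro a x y ha hxy h
    exact (mul_le_mul_of_nonneg_left (P.q_mono hxy) ha).trans h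
  have anti : ∀ j n n', n ≤ n' → Phi P d A B C j n' → Phi P d A B C j n := by
    rintro j n n' h ⟨h1, h2, h3, h4⟩
    exact ⟨mono hd (by omega) h1, mono hA (by omega) h2, mono hB (by omega) h3, mono hC (by omega) h4⟩
  have up : ∀ j n, Phi P d A B C j n → Phi P d A B C (j + 1) (n + 1) := by
    rintro j n ⟨h1, h2, h3, h4⟩
    exact ⟨mono hd (by push_cast; omega) h1, mono hA (by push_cast; omega) h2, mono hB (by push_cast; omega) h3, mono hC (by push_cast; omega) h4⟩
  have dn : ∀ j n, Phi P d A B C (j + 1) (n + 3) → Phi P d A B C j (n + 1) := by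
    rintro j n ⟨h1, h2, h3, h4⟩
    exact ⟨mono hd (by push_cast; omega) h1, mono hA (by push_cast; omega) h2, mono hB (by push_cast; omega) h3, mono hC (by push_cast; omega) h4⟩
  have ex1 : ∀ j, ∃ n, Phi P d A B C j n := by
    intro j
    induction j with
    | zero => exact ⟨n0, h0⟩
    | succ j ih => obtain ⟨n, hn⟩ := ih; exact ⟨n + 1, up j n hn⟩
  have ex2 : ∀ j, ∃ n, ∀ n', n ≤ n' → ¬ Phi P d A B C j n' := by
    intro j
    have key : ∀ c : ℝ, 0 ≤ c → c ≠ 0 → ∃ n : ℕ, ∀ n' : ℕ, n ≤ n' → ∀ z : ℤ, (n' : ℤ) - 2 * j ≤ z → ¬ c * P.q z ≤ 1 := by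
      intro c h1 h2
      obtain ⟨n, hn⟩ := q_big P (lt_of_le_of_ne h1 (Ne.symm h2)) (-(2 * j))
      refine ⟨n, fun n' hn' z hz hle => ?_⟩
      have := mono h1 (show (n' : ℤ) + -(2 * j) ≤ z by omega) hle
      linarith [hn n' hn']
    by_cases a1 : d = 0
    · by_cases a2 : A = 0
      · by_cases a3 : B = 0
        · obtain ⟨n, hn⟩ := key C hC (fun h => hne ⟨a1, a2, a3, h⟩)
          exact ⟨n, fun n' h hP => hn n' h _ (by omega) hP.2.2.2⟩
        · obtain ⟨n, hn⟩ := key B hB a3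
          exact ⟨n, fun n' h hP => hn n' h _ (by omega) hP.2.2.1⟩
      · obtain ⟨n, hn⟩ := key A hA a2
        exact ⟨n, fun n' h hP => hn n' h _ (by omega) hP.2.1⟩
    · obtain ⟨n, hn⟩ := key d hd a1
      exact ⟨n, fun n' h hP => hn n' h _ (by omega) hP.1⟩
  have ex : ∀ j, ∃ n, Phi P d A B C j n ∧ ¬ Phi P d A B C j (n + 1) := by
    intro j
    by_contra hcon
    push Not at hcon
    obtain ⟨a, ha⟩ := ex1 j
    obtain ⟨b, hb⟩ := ex2 j
    have : ∀ k, Phi P d A B C j (a + k) := by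
      intro k
      induction k with
      | zero => exact ha
      | succ k ih => exact hcon _ ih
    exact hb (a + b) (by omega) (this b)
  choose n hn using ex
  refine ⟨n, hn, fun j => ⟨?_, ?_⟩, ?_⟩
  · by_contra h
    exact (hn (j+1)).2 (anti _ _ _ (by omega) (up j _ (hn j).1))
  · by_contra h
    exact (hn j).2 (dn j _ (anti _ _ _ (by omega) (hn (j+1)).1))
  · by_contra h
    exact (hn 0).2 (anti _ _ _ (by omega) h0)

open Classical in
def GdP (𝒦 : Set (E P)) (ξ : E P) : Prop :=
  ∀ m, 10 * ((FF m).filter (fun f => ¬ TE f ξ ∈ 𝒦)).card ≤ (FF m).card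
def YJ (J : ℕ) (ξ : E P) : Prop := ∃ i : ℤ, -(J:ℤ) ≤ i ∧ i ≤ 0 ∧ ξ.β i = true
open Classical in
def GhP (𝒦 : Set (E P)) (J : ℕ) (ξ : E P) : Prop :=
  (∀ l : ℕ, 9 * ((Finset.range l).filter fun j => ¬ GdP 𝒦 ((TT (-1) (-2))^[j] ξ)).card ≤ l) ∧
  (∀ l : ℕ, 9 * ((Finset.range l).filter fun j => ¬ YJ J ((TT 0 (-1))^[j] ξ)).card ≤ l)

lemma pick_j (p1 p2 p3 : ℕ → Prop) [DecidablePred p1] [DecidablePred p2] [DecidablePred p3]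
    (h1 : ∀ l : ℕ, 9 * ((Finset.range l).filter fun j => ¬ p1 j).card ≤ l)
    (h2 : ∀ l : ℕ, 9 * ((Finset.range l).filter fun j => ¬ p2 j).card ≤ l)
    (h3 : ∀ l : ℕ, 9 * ((Finset.range l).filter fun j => ¬ p3 j).card ≤ l)
    (n : ℕ → ℕ) (hn : ∀ j, n j + 1 ≤ n (j + 1) ∧ n (j + 1) ≤ n j + 2) (h0 : 1 ≤ n 0) :
    ∃ j, 3 * j + 1 ≤ n 0 ∧ n 0 + j ≤ n j ∧ p1 j ∧ p2 j ∧ p3 (n j) := by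
  have b1 : ∀ j, n 0 + j ≤ n j := fun j => by
    induction j with
    | zero => simp
    | succ j ih => have := hn j; omega
  have b2 : ∀ j, n j ≤ n 0 + 2 * j := fun j => by
    induction j with
    | zero => simp
    | succ j ih => have := hn j; omega
  have hinj : StrictMono n := strictMono_nat_of_lt_succ fun j => by have := hn j; omega
  by_contra hcon
  push Not at hcon
  set L := (n 0 + 2) / 3 with hL
  have hsub : Finset.range L ⊆ (Finset.range L).filter (fun j => ¬ p1 j) ∪
      ((Finset.range L).filter (fun j => ¬ p2 j) ∪ (Finset.range L).filter (fun j => ¬ p3 (n j))) := by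
    intro j hj
    have hj' := Finset.mem_range.1 hj
    simp only [Finset.mem_union, Finset.mem_filter, hj, true_and]
    by_contra hh
    push Not at hh
    exact hcon j (by omega) (b1 j) hh.1 hh.2.1 hh.2.2
  have hc : ((Finset.range L).filter (fun j => ¬ p3 (n j))).card ≤ ((Finset.range (2 * n 0)).filter fun j => ¬ p3 j).card := by
    refine Finset.card_le_card_of_injOn n ?_ hinj.injective.injOn
    intro j hj
    have hj' := Finset.mem_filter.1 (Finset.mem_coe.1 hj)
    have h4 := Finset.mem_range.1 hj'.1
    have := b2 j
    exact Finset.mem_coe.2 (Finset.mem_filter.2 ⟨Finset.mem_range.2 (by omega), hj'.2⟩)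
  have e1 := Finset.card_le_card hsub
  have e2 := Finset.card_union_le ((Finset.range L).filter (fun j => ¬ p1 j))
      ((Finset.range L).filter (fun j => ¬ p2 j) ∪ (Finset.range L).filter (fun j => ¬ p3 (n j)))
  have e3 := Finset.card_union_le ((Finset.range L).filter (fun j => ¬ p2 j)) ((Finset.range L).filter (fun j => ¬ p3 (n j)))
  have e4 := h1 L
  have e5 := h2 L
  have e6 := h3 (2 * n 0)
  rw [Finset.card_range] at e1
  omega

lemma S_TT (k : ℤ) (υ : E P) : S P.ε 0 1 υ.x0 = S P.ε 0 1 (TT k 0 υ).x0 := by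
  have key : ∀ (k : ℤ) (υ : E P) (w : ℝ), w ∈ S P.ε 0 1 υ.x0 → w ∈ S P.ε 0 1 (TT k 0 υ).x0 := by
    intro k υ w hw
    have h1 : Rel (P.a k 0 * υ.x0) (TT k 0 υ).x0 := by rw [TT_x0]; exact υ.rel0 _ _
    apply S_rel h01 h1
    have := P.a_mem hw k 0
    rw [← Matrix.mul_assoc, P.a_U01, P.q_zero, one_mul, Matrix.mul_assoc] at this
    exact this
  ext w
  refine ⟨key k υ w, fun h => ?_⟩
  have := key (-k) _ w h
  rwa [TT_TT, neg_add_cancel, add_zero, TT_zero] at this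

structure Out (𝒦 : Set (E P)) (κ δ w : ℝ) (υ υ' : E P) (f : F) (g : Mat) : Prop where
  m1 : υ ∈ 𝒦
  m2 : υ' ∈ 𝒦
  m3 : TE f υ ∈ 𝒦
  m4 : TE f υ' ∈ 𝒦
  tt : υ.t f = υ'.t f
  hS : S P.ε 0 1 υ.x0 = S P.ε 0 1 υ'.x0
  rel : Rel (g * υ.x0) υ'.x0
  dg : ∀ i, |g i i - 1| ≤ δ
  o1 : |g 0 1| ≤ δ
  o2 : |g 0 2| ≤ δ
  o3 : |g 2 1| ≤ δ
  w0 : |g 1 1 - g 0 0| * w ≤ 1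
  w1 : |g 1 0| * w ^ 2 ≤ 1
  w2 : |g 1 2| * w ≤ 1
  w3 : |g 2 0| * w ≤ 1
  tb : |υ.t f| ≤ w * P.q 1
  di : Disp κ (g 1 1 - g 0 0) (g 1 0) (g 1 2) (g 2 0) (υ.t f)

lemma step {𝒦 : Set (E P)} {ξ : E P} {k : ℤ} (hk : 1 ≤ k) (J n0 : ℕ) (hJ : 2 * J ≤ n0) (hn0 : 1 ≤ n0)
    (h : GhP 𝒦 J ξ) (h' : GhP 𝒦 J (TT k 0 ξ)) (g : Mat) (hg : g * ξ.x0 = (TT k 0 ξ).x0) {δ : ℝ} (hδ0 : 0 ≤ δ)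
    (hδ : ∀ i j, |g i j - (1 : Mat) i j| ≤ δ) (hδ' : 2 * δ * P.q (2 * n0) ≤ 1) :
    ∃ υ υ' f g' m, (n0 : ℤ) ≤ 2 * m ∧ Out 𝒦 (1 / (16 * P.q 1 ^ 2 * P.q J ^ 2)) δ (P.q m) υ υ' f g' := by
  classical
  have hq0 : (1:ℝ) ≤ P.q (2 * n0) := by rw [← P.q_zero]; exact P.q_mono (by omega)
  have hδ2 : δ ≤ 1 / 2 := by nlinarith
  have hoff : ∀ i j, i ≠ j → |g i j| ≤ δ := fun i j hij => by
    have := hδ i j; rwa [Matrix.one_apply_ne hij, sub_zero] at this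
  have hdg : ∀ i, |g i i - 1| ≤ δ := fun i => by
    have := hδ i i; rwa [Matrix.one_apply_eq] at this
  have hx1 : |ξ.x0.det| = 1 := ξ.x0_mem.1.1
  have hx2 : |(TT k 0 ξ).x0.det| = 1 := (TT k 0 ξ).x0_mem.1.1
  have hgdet : |g.det| = 1 := by
    rw [← hg, det_mul, abs_mul, hx1, mul_one] at hx2; exact hx2
  have hne : ¬ (|g 1 1 - g 0 0| = 0 ∧ |g 1 0| = 0 ∧ |g 1 2| = 0 ∧ |g 2 0| = 0) := by
    rintro ⟨a1, a2, a3, a4⟩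
    rw [abs_eq_zero] at a1 a2 a3 a4
    refine alg (P := P) k hk ξ.x0 g hx1 ?_ ((hdg 0).trans hδ2) (by linarith) a2 a3 a4
    rw [hg, TT_x0]; exact ξ.rel0 _ _
  have hd2 : |g 1 1 - g 0 0| ≤ 2 * δ := by
    have : g 1 1 - g 0 0 = (g 1 1 - 1) - (g 0 0 - 1) := by ring
    rw [this]; refine (abs_sub _ _).trans ?_
    linarith [hdg 1, hdg 0]
  have hsm : ∀ a : ℝ, 0 ≤ a → a ≤ 2 * δ → ∀ z : ℤ, z ≤ 2 * n0 → a * P.q z ≤ 1 := by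
    intro a ha ha2 z hz
    calc a * P.q z ≤ 2 * δ * P.q (2 * n0) := mul_le_mul ha2 (P.q_mono hz) (P.q_pos _).le (by linarith)
      _ ≤ 1 := hδ'
  have hphi0 : Phi P |g 1 1 - g 0 0| |g 1 0| |g 1 2| |g 2 0| 0 n0 :=
    ⟨hsm _ (abs_nonneg _) hd2 _ (by push_cast; omega), hsm _ (abs_nonneg _) (by linarith [hoff 1 0 (by decide)]) _ (by push_cast; omega),
      hsm _ (abs_nonneg _) (by linarith [hoff 1 2 (by decide)]) _ (by push_cast; omega),
      hsm _ (abs_nonneg _) (by linarith [hoff 2 0 (by decide)]) _ (by push_cast; omega)⟩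
  obtain ⟨n, hn1, hn2, hn3⟩ := levels (P := P) (abs_nonneg _) (abs_nonneg _) (abs_nonneg _) (abs_nonneg _) hne n0 hphi0
  obtain ⟨j, j1, j2, j3, j4, j5⟩ := pick_j _ _ _ h.1 h'.1 h.2 n hn2 (by omega)
  obtain ⟨m, hm⟩ : ∃ m : ℕ, n j = m + 2 * j := ⟨n j - 2 * j, by omega⟩
  set υ : E P := (TT (-1) (-2))^[j] ξ with hυ
  set υ' : E P := (TT (-1) (-2))^[j] (TT k 0 ξ) with hυ'
  have eυ : υ = TT (-j) (-(2 * j)) ξ := by rw [hυ, TT_iter]; congr 1 <;> ring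
  have eυ'0 : υ' = TT (-j) (-(2 * j)) (TT k 0 ξ) := by rw [hυ', TT_iter]; congr 1 <;> ring
  have eυ' : υ' = TT k 0 υ := by rw [eυ'0, eυ, TT_TT, TT_TT]; congr 1 <;> ring
  have ht : ∀ f, υ'.t f = υ.t f := fun f => by rw [eυ', TT_t, P.q_zero, one_mul]; simp
  have hz : ∀ ζ : E P, GdP 𝒦 ζ → ζ ∈ 𝒦 := by
    intro ζ hζ
    by_contra hc
    have h1 := hζ 0
    have h2 : (FF 0).card ≤ 3 := by
      rw [FF, Finset.card_finsupp]
      simp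
    have h3 : 0 < ((FF 0).filter (fun f => ¬ TE f ζ ∈ 𝒦)).card :=
      Finset.card_pos.2 ⟨0, Finset.mem_filter.2 ⟨FF_zero 0, by rwa [TE_zero]⟩⟩
    omega
  -- level
  obtain ⟨i, i1, i2, i3⟩ := j5
  rw [TT_iter, TT_β] at i3
  set i0 : ℤ := i + m with hi0
  have hβ : υ.β i0 = true := by
    rw [eυ, TT_β, ← i3]; congr 1
    rw [hi0]; push_cast [hm]; ring
  have hi0a : 0 ≤ i0 := by omega
  have hi0b : i0 ≤ m := by omega
  set e : F := Finsupp.single i0 1 with he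
  have heF : e ∈ FF m := FF_single m i0 hi0a hi0b 1
  have heeF : e + e ∈ FF m := (FF_add m e heF e).2 heF
  set a' := P.a (-j) (-(2 * j)) with ha'
  set g' : Mat := !![g 0 0, P.q (-(2 * j)) * g 0 1, P.q (-j) * g 0 2;
       P.q (2 * j) * g 1 0, g 1 1, P.q j * g 1 2;
       P.q j * g 2 0, P.q (-j) * g 2 1, g 2 2] with hg'
  have hag : a' * g = g' * a' := by
    rw [ha', P.a_conj, hg']
    congr! 5
    all_goals ring_nf
  have hg'det : |g'.det| = 1 := by
    have := congrArg (fun z : Mat => |z.det|) hag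
    simp only [det_mul, abs_mul, ha', P.a_absdet, hgdet] at this
    simpa using this.symm
  have hrel : Rel (g' * υ.x0) υ'.x0 := by
    have r1 : Rel (a' * ξ.x0) υ.x0 := by rw [eυ, TT_x0]; exact ξ.rel0 _ _
    have r2 : Rel (a' * (TT k 0 ξ).x0) υ'.x0 := by rw [eυ'0, TT_x0 _ _ (TT k 0 ξ)]; exact (TT k 0 ξ).rel0 _ _
    rw [← hg, ← Matrix.mul_assoc, hag, Matrix.mul_assoc] at r2
    exact ((r1.lmul hg'det).symm).trans r2
  obtain ⟨⟨f1, f2, f3, f4⟩, hnot⟩ := hn1 j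
  have ez : ∀ (c x : ℝ) (y z : ℤ), 0 < c → ∀ s : ℤ, c = P.q s → s + y = z → |c * x| * P.q y = |x| * P.q z := by
    intro c x y z hc s hs hyz
    rw [abs_mul, abs_of_pos hc, hs, ← hyz, P.q_add]; ring
  have E10 : ∀ y z : ℤ, 2 * j + y = z → |P.q (2 * j) * g 1 0| * P.q y = |g 1 0| * P.q z :=
    fun y z hyz => ez _ _ _ _ (P.q_pos _) (2 * j) rfl hyz
  have E12 : ∀ y z : ℤ, j + y = z → |P.q j * g 1 2| * P.q y = |g 1 2| * P.q z :=
    fun y z hyz => ez _ _ _ _ (P.q_pos _) j rfl hyz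
  have E20 : ∀ y z : ℤ, j + y = z → |P.q j * g 2 0| * P.q y = |g 2 0| * P.q z :=
    fun y z hyz => ez _ _ _ _ (P.q_pos _) j rfl hyz
  have hsq : ∀ z : ℤ, P.q z ^ 2 = P.q (2 * z) := fun z => by rw [sq, ← P.q_add]; congr 1; ring
  have hfail : 1 < |g 1 1 - g 0 0| * (P.q m * P.q 1) ∨ 1 < |P.q (2 * j) * g 1 0| * (P.q m * P.q 1) ^ 2 ∨
      1 < |P.q j * g 1 2| * (P.q m * P.q 1) ∨ 1 < |P.q j * g 2 0| * (P.q m * P.q 1) := by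
    by_contra hc
    push Not at hc
    rw [← P.q_add, hsq] at hc
    obtain ⟨c1, c2, c3, c4⟩ := hc
    refine hnot ⟨?_, ?_, ?_, ?_⟩
    · have : ((n j + 1 : ℕ) : ℤ) - 2 * j = m + 1 := by push_cast [hm]; ring
      rw [this]; exact c1
    · rw [E10 _ (2 * ((n j + 1 : ℕ) : ℤ) - 2 * j) (by push_cast [hm]; ring)] at c2; exact c2
    · rw [E12 _ (((n j + 1 : ℕ) : ℤ) - j) (by push_cast [hm]; ring)] at c3; exact c3
    · rw [E20 _ (((n j + 1 : ℕ) : ℤ) - j) (by push_cast [hm]; ring)] at c4; exact c4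
  have htb : ∀ f ∈ FF m, |υ.t f| ≤ P.q m * P.q 1 := by
    intro f hf
    have := υ.2.up m f 0 (fun k hk => by rw [mem_FF.1 hf k (by omega)]; rfl)
    rw [P.q_add] at this
    change |υ.t f - υ.t 0| ≤ _ at this
    rwa [υ.t0, sub_zero] at this
  have hsep : ∀ f f' : F, (∀ k, i0 < k → f k = f' k) → f i0 ≠ f' i0 → P.q m / P.q J ≤ |υ.t f - υ.t f'| := by
    intro f f' h1 h2
    have h3 : P.q i0 ≤ |υ.t f - υ.t f'| := υ.2.lo i0 f f' h1 h2 hβ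
    refine le_trans ?_ h3
    rw [div_le_iff₀ (P.q_pos _), ← P.q_add]
    exact P.q_mono (by omega)
  have hGood : ∀ f ∈ FF m, Disp (1 / (16 * P.q 1 ^ 2 * P.q J ^ 2)) (g 1 1 - g 0 0) (P.q (2 * j) * g 1 0) (P.q j * g 1 2) (P.q j * g 2 0) (υ.t f) ∨
      Disp (1 / (16 * P.q 1 ^ 2 * P.q J ^ 2)) (g 1 1 - g 0 0) (P.q (2 * j) * g 1 0) (P.q j * g 1 2) (P.q j * g 2 0) (υ.t (f + e)) ∨
      Disp (1 / (16 * P.q 1 ^ 2 * P.q J ^ 2)) (g 1 1 - g 0 0) (P.q (2 * j) * g 1 0) (P.q j * g 1 2) (P.q j * g 2 0) (υ.t (f + (e + e))) := by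
    intro f hf
    have e1 : ∀ k, i0 < k → e k = 0 := fun k hk => Finsupp.single_eq_of_ne (by omega)
    have e2 : e i0 = 1 := Finsupp.single_eq_same
    have z1 : (1 : ZMod 3) ≠ 0 := by decide
    have z2 : (1 + 1 : ZMod 3) ≠ 0 := by decide
    refine disp (P.q_pos m) (by linarith [P.q_one]) ?_ hfail (hsep _ _ ?_ ?_) (hsep _ _ ?_ ?_) (hsep _ _ ?_ ?_) (htb _ hf)
      (htb _ ((FF_add m e heF f).2 hf)) (htb _ ((FF_add m _ heeF f).2 hf))
    · rw [← P.q_zero]; exact P.q_mono (by omega)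
    · intro k hk; simp [e1 k hk]
    · simp [e2]
    · intro k hk; simp [e1 k hk]
    · rw [Finsupp.add_apply, Finsupp.add_apply, e2]
      intro hh; exact z2 (by simpa using hh.symm)
    · intro k hk; simp [e1 k hk]
    · rw [Finsupp.add_apply, Finsupp.add_apply, Finsupp.add_apply, e2]
      intro hh; exact z1 (by simpa using hh.symm)
  obtain ⟨f, hf, hfG, hfB⟩ := triple heF (fun f => ¬ TE f υ ∈ 𝒦 ∨ ¬ TE f υ' ∈ 𝒦) _ (by
    have c1 := j3 m
    have c2 := j4 m
    have c3 : ((FF m).filter fun f => ¬ TE f υ ∈ 𝒦 ∨ ¬ TE f υ' ∈ 𝒦).card ≤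
        ((FF m).filter (fun f => ¬ TE f υ ∈ 𝒦)).card + ((FF m).filter (fun f => ¬ TE f υ' ∈ 𝒦)).card := by
      rw [Finset.filter_or]; exact Finset.card_union_le _ _
    omega) hGood
  push Not at hfB
  have hle : ∀ (c x : ℝ), 0 < c → c ≤ 1 → |x| ≤ δ → |c * x| ≤ δ := by
    intro c x h1 h2 h3
    rw [abs_mul, abs_of_pos h1]
    nlinarith [abs_nonneg x]
  have hq1 : ∀ z : ℤ, z ≤ 0 → P.q z ≤ 1 := fun z hz => by rw [← P.q_zero]; exact P.q_mono hz
  refine ⟨υ, υ', f, g', m, by omega, hz _ j3, hz _ j4, hfB.1, hfB.2, (ht f).symm, by rw [eυ']; exact S_TT k υ, hrel,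
    ?_, hle _ _ (P.q_pos _) (hq1 _ (by omega)) (hoff 0 1 (by decide)),
    hle _ _ (P.q_pos _) (hq1 _ (by omega)) (hoff 0 2 (by decide)),
    hle _ _ (P.q_pos _) (hq1 _ (by omega)) (hoff 2 1 (by decide)), ?_, ?_, ?_, ?_, htb f hf, hfG⟩
  · intro i; fin_cases i
    · exact hdg 0
    · exact hdg 1
    · exact hdg 2
  · have : ((n j : ℕ) : ℤ) - 2 * j = m := by rw [hm]; push_cast; ring
    rw [this] at f1; exact f1
  · rw [hsq]; exact (E10 _ _ (by push_cast [hm]; ring)).trans_le f2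
  · exact (E12 _ _ (by push_cast [hm]; ring)).trans_le f3
  · exact (E20 _ _ (by push_cast [hm]; ring)).trans_le f4

end LW

namespace LW
open Topology MeasureTheory Matrix ENNReal
variable {P : Par}

lemma sum_lt_iff {X ι : Type*} (B : Set X) (s : Finset ι) (φ : ι → X) [DecidablePred fun i => ¬ φ i ∈ B] (k a : ℕ) :
    (a : ℝ≥0∞) < k * ∑ i ∈ s, ind Bᶜ (φ i) ↔ ¬ k * (s.filter fun i => ¬ φ i ∈ B).card ≤ a := by
  have : DecidablePred fun i => φ i ∈ Bᶜ := fun i => (inferInstance : Decidable (¬ φ i ∈ B))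
  rw [ind_sum, not_le, ← Nat.cast_mul, Nat.cast_lt]
  simp only [Set.mem_compl_iff]

lemma gd_eq (𝒦 : Set (E P)) : {ξ : E P | GdP 𝒦 ξ}ᶜ =
    {x | ∃ m, ((FF m).card : ℝ≥0∞) < (10 : ℕ) * ∑ f ∈ FF m, ind 𝒦ᶜ (TE f x)} := by
  classical
  ext ξ
  simp only [Set.mem_compl_iff, Set.mem_ofPred_eq, GdP, not_forall]
  exact exists_congr fun m => (sum_lt_iff _ _ _ _ _).symm

lemma gz_eq (B : Set (E P)) (T : E P → E P) [∀ ξ, DecidablePred fun j => ¬ T^[j] ξ ∈ B] :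
    {ξ : E P | ∀ l : ℕ, 9 * ((Finset.range l).filter fun j => ¬ T^[j] ξ ∈ B).card ≤ l}ᶜ =
    {x | ∃ l : ℕ, (l : ℝ≥0∞) < (9 : ℕ) * ∑ j ∈ Finset.range l, ind Bᶜ (T^[j] x)} := by
  ext ξ
  simp only [Set.mem_compl_iff, Set.mem_ofPred_eq, not_forall]
  exact exists_congr fun m => (sum_lt_iff _ _ _ _ _).symm

lemma meas_bad {X ι : Type*} [MeasurableSpace X] {B : Set X} (hB : MeasurableSet B) (s : ℕ → Finset ι) (a : ℕ → ℝ≥0∞)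
    (k : ℝ≥0∞) (φ : ι → X → X) (hφ : ∀ i, Measurable (φ i)) :
    MeasurableSet {x | ∃ l : ℕ, a l < k * ∑ j ∈ s l, ind B (φ j x)} := by
  have : {x | ∃ l : ℕ, a l < k * ∑ j ∈ s l, ind B (φ j x)} = ⋃ l : ℕ, {x | a l < k * ∑ j ∈ s l, ind B (φ j x)} := by
    ext x; simp
  rw [this]
  exact MeasurableSet.iUnion fun l => measurableSet_lt measurable_const
    ((Finset.measurable_sum _ fun j _ => (ind_meas hB).comp (hφ j)).const_mul k)

lemma meas_YJ (J : ℕ) : MeasurableSet {ξ : E P | YJ J ξ} := by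
  have : {ξ : E P | YJ J ξ} = ⋃ i : ℤ, {ξ : E P | (-(J:ℤ) ≤ i ∧ i ≤ 0) ∧ ξ.β i = true} := by
    ext x; simp [YJ, and_assoc]
  rw [this]
  refine MeasurableSet.iUnion fun i => ?_
  by_cases h : -(J:ℤ) ≤ i ∧ i ≤ 0
  · simp only [h, true_and, and_self]
    exact ((isClosed_singleton (x := true)).preimage (E.cont_β i)).measurableSet
  · simp [h]

lemma gh_pos (μ : Measure (E P)) [IsFiniteMeasure μ] (hμ : Inv μ) (h0 : μ ≠ 0)
    (hβ : μ {ξ : E P | ∀ i ≤ 0, ξ.β i = false} = 0) :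
    ∃ K 𝒦 : Set (E P), IsClosed K ∧ LC 0 1 K ∧ LC 0 2 K ∧ LC 2 1 K ∧ IsClosed 𝒦 ∧ 𝒦 ⊆ K ∧
      (∀ ξ ∈ 𝒦, Rec K ξ) ∧ ∃ J, MeasurableSet {ξ : E P | GhP 𝒦 J ξ} ∧ μ {ξ : E P | GhP 𝒦 J ξ} ≠ 0 := by
  classical
  set a := μ Set.univ with ha
  have ha0 : a ≠ 0 := by rwa [ha, Ne, Measure.measure_univ_eq_zero]
  have ha1 : a ≠ ∞ := measure_ne_top _ _
  have hη : a / 200 ≠ 0 := ENNReal.div_ne_zero.2 ⟨ha0, by simp⟩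
  have hη' : a / 200 ≠ ∞ := ENNReal.div_ne_top ha1 (by simp)
  obtain ⟨K, 𝒦, k1, k2, k3, k4, k5, k6, k7, k8⟩ := lusin μ hμ hη hη'
  have hJ : ∃ J, μ {ξ : E P | YJ J ξ}ᶜ < a / 200 := by
    have ht := tendsto_measure_iInter_atTop (μ := μ) (s := fun J : ℕ => {ξ : E P | YJ J ξ}ᶜ)
      (fun J => (meas_YJ J).compl.nullMeasurableSet) (fun J J' hJ => Set.compl_subset_compl.2 fun ξ ⟨i, h1, h2⟩ => ⟨i, by omega, h2⟩)
      ⟨0, measure_ne_top _ _⟩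
    have hz : μ (⋂ J : ℕ, {ξ : E P | YJ J ξ}ᶜ) = 0 := by
      refine measure_mono_null ?_ hβ
      intro ξ hξ i hi
      rw [Set.mem_iInter] at hξ
      have := hξ i.natAbs
      by_contra hc
      exact this ⟨i, by omega, hi, by simpa using hc⟩
    rw [hz] at ht
    exact (ht.eventually (gt_mem_nhds (pos_iff_ne_zero.2 hη))).exists
  obtain ⟨J, hJ⟩ := hJ
  refine ⟨K, 𝒦, k1, k2, k3, k4, k5, k6, k7, J, ?_⟩
  have mG : MeasurableSet {ξ : E P | GdP 𝒦 ξ} := by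
    rw [← MeasurableSet.compl_iff, gd_eq]
    exact meas_bad k5.measurableSet.compl _ _ _ _ fun e => (hμ.te e).measurable
  have bG : μ {ξ : E P | GdP 𝒦 ξ}ᶜ ≤ (10 : ℕ) * (a / 200) := by
    rw [gd_eq]
    refine (max_F μ TE hμ.te (fun e f x => TE_TE _ _ _) FF FF_mono FF_zero FF_add k5.measurableSet.compl _).trans ?_
    gcongr
  have z1 := gz_eq (P := P) {ξ : E P | GdP 𝒦 ξ} (TT (-1) (-2))
  have z2 := gz_eq (P := P) {ξ : E P | YJ J ξ} (TT 0 (-1))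
  have b1 := max_Z μ _ (hμ.tt (-1) (-2)) mG.compl (9 : ℕ) (by simp)
  have b2 := max_Z μ _ (hμ.tt 0 (-1)) (meas_YJ J).compl (9 : ℕ) (by simp)
  have m1 := meas_bad mG.compl Finset.range (fun l => l) (9 : ℕ) (fun j => (TT (-1) (-2))^[j]) fun j => (hμ.tt _ _).measurable.iterate j
  have m2 := meas_bad (meas_YJ (P := P) J).compl Finset.range (fun l => l) (9 : ℕ) (fun j => (TT 0 (-1))^[j]) fun j => (hμ.tt _ _).measurable.iterate j
  rw [← z1] at b1 m1
  rw [← z2] at b2 m2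
  have e : {ξ : E P | GhP 𝒦 J ξ} = {ξ : E P | ∀ l : ℕ, 9 * ((Finset.range l).filter fun j => ¬ (TT (-1) (-2))^[j] ξ ∈ {ξ : E P | GdP 𝒦 ξ}).card ≤ l} ∩
      {ξ : E P | ∀ l : ℕ, 9 * ((Finset.range l).filter fun j => ¬ (TT 0 (-1))^[j] ξ ∈ {ξ : E P | YJ J ξ}).card ≤ l} := rfl
  have mm := (m1.of_compl).inter m2.of_compl
  rw [← e] at mm
  refine ⟨mm, fun hcon => ?_⟩
  have h1 : a ≤ (9:ℕ) * ((10:ℕ) * (a / 200)) + (9:ℕ) * (a / 200) := by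
    calc a ≤ μ {ξ : E P | GhP 𝒦 J ξ} + μ {ξ : E P | GhP 𝒦 J ξ}ᶜ := by
          rw [measure_add_measure_compl mm]
      _ = μ {ξ : E P | GhP 𝒦 J ξ}ᶜ := by rw [hcon, zero_add]
      _ ≤ _ := by
          rw [e, Set.compl_inter]
          refine (measure_union_le _ _).trans (add_le_add (b1.trans ?_) (b2.trans ?_))
          · gcongr
          · gcongr
  clear_value a
  lift a to NNReal using ha1
  have h2 : (9:ℕ) * ((10:ℕ) * ((a:ℝ≥0∞) / 200)) + (9:ℕ) * ((a:ℝ≥0∞) / 200) = ((99 * (a / 200) : NNReal) : ℝ≥0∞) := by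
    push_cast; rw [ENNReal.coe_div (by norm_num)]; push_cast; ring
  rw [h2, ENNReal.coe_le_coe] at h1
  have h3 : (0:ℝ) < a := by exact_mod_cast (pos_iff_ne_zero.2 ha0)
  have h4 : (a:ℝ) ≤ 99 * (a / 200) := by exact_mod_cast h1
  linarith

lemma ret (μ : Measure (E P)) [IsFiniteMeasure μ] (hμ : Inv μ) {G : Set (E P)} (mG : MeasurableSet G) (hG : μ G ≠ 0)
    {δ : ℝ} (hδ : 0 < δ) : ∃ ξ ∈ G, ∃ k : ℤ, 1 ≤ k ∧ TT k 0 ξ ∈ G ∧ ∃ g : Mat, g * ξ.x0 = (TT k 0 ξ).x0 ∧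
      ∀ i j, |g i j - (1 : Mat) i j| ≤ δ := by
  set R : E P × E P → Mat := fun p => p.1.x0.det • (p.2.x0 * p.1.x0.adjugate) with hR
  have hd : ∀ ξ : E P, ξ.x0.det * ξ.x0.det = 1 := fun ξ => by
    rw [← sq, ← sq_abs, ξ.x0_mem.1.1, one_pow]
  have R1 : ∀ ξ, R (ξ, ξ) = 1 := fun ξ => by
    simp only [hR]; rw [mul_adjugate, smul_smul, hd, one_smul]
  have R2 : ∀ ξ ζ, R (ξ, ζ) * ξ.x0 = ζ.x0 := fun ξ ζ => by
    simp only [hR]; rw [smul_mul, Matrix.mul_assoc, adjugate_mul, Matrix.mul_smul, smul_smul, hd, one_smul, Matrix.mul_one]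
  have Rc : Continuous R := by
    have c1 : Continuous fun p : E P × E P => p.1.x0 := E.cont_x0.comp continuous_fst
    have c2 : Continuous fun p : E P × E P => p.2.x0 := E.cont_x0.comp continuous_snd
    exact c1.matrix_det.smul (c2.matrix_mul c1.matrix_adjugate)
  obtain ⟨ζ, hζ, hpos⟩ := exists_mem_forall_mem_nhdsWithin_pos_measure (μ := μ) hG
  have hW : {p : E P × E P | ∀ i j, |R p i j - (1 : Mat) i j| < δ} ∈ 𝓝 (ζ, ζ) := by
    have : IsOpen {p : E P × E P | ∀ i j, |R p i j - (1 : Mat) i j| < δ} := by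
      simp only [Set.ofPred_forall]
      refine isOpen_iInter_of_finite fun i => isOpen_iInter_of_finite fun j => ?_
      exact isOpen_lt (((Rc.matrix_elem i j).sub continuous_const).abs) continuous_const
    refine this.mem_nhds ?_
    intro i j; rw [R1]; simpa using hδ
  obtain ⟨V, V', oV, mV, oV', mV', hVV⟩ := mem_nhds_prod_iff'.1 hW
  have hs := hpos (G ∩ (V ∩ V')) (inter_mem_nhdsWithin G (inter_mem (oV.mem_nhds mV) (oV'.mem_nhds mV')))
  obtain ⟨k, hk, hk2⟩ := (hμ.tt 1 0).conservative.exists_gt_measure_inter_ne_zero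
    (mG.inter (oV.inter oV').measurableSet).nullMeasurableSet hs.ne' 0
  obtain ⟨ξ, h1, h2⟩ := nonempty_of_measure_ne_zero hk2
  rw [Set.mem_preimage, TT_iter, mul_one, mul_zero] at h2
  exact ⟨ξ, h1.1, k, by omega, h2.1, R (ξ, TT k 0 ξ), R2 _ _, fun i j => (hVV (Set.mk_mem_prod h1.2.1 h2.2.2) i j).le⟩

lemma conj_entries (t : ℝ) (g : Mat) : U 0 1 t * g * U 0 1 (-t) =
    !![g 0 0 + t * g 1 0, g 0 1 + (t * (g 1 1 - g 0 0) - t ^ 2 * g 1 0), g 0 2 + t * g 1 2;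
       g 1 0, g 1 1 - t * g 1 0, g 1 2; g 2 0, g 2 1 - t * g 2 0, g 2 2] := by
  ext i j
  fin_cases i <;> fin_cases j <;>
    simp [U, transvection, Matrix.mul_apply, Fin.sum_univ_three, Matrix.single_apply, Matrix.one_apply] <;> ring

lemma lim_abs_le {ι : Type*} {u : Filter ι} {f : ι → ℝ} {a : ℝ} {e : ι → ℝ} (he : Tendsto e u (𝓝 0)) (h : ∀ n, |f n - a| ≤ e n) :
    Tendsto f u (𝓝 a) := by
  rw [tendsto_iff_dist_tendsto_zero]
  exact squeeze_zero (fun n => dist_nonneg) (fun n => by rw [Real.dist_eq]; exact h n) he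

theorem no_measure (μ : Measure (E P)) [IsFiniteMeasure μ] (hμ : Inv μ) (h0 : μ ≠ 0)
    (hβ : μ {ξ : E P | ∀ i ≤ 0, ξ.β i = false} = 0) : False := by
  obtain ⟨K, 𝒦, k1, k2, k3, k4, k5, k6, k7, J, mG, hG⟩ := gh_pos μ hμ h0 hβ
  have hq8 := P.q_one
  have hdom : ∀ r : ℕ, ∃ υ υ' f g m, ((2 * (J + r + 1) : ℕ) : ℤ) ≤ 2 * m ∧
      Out 𝒦 (1 / (16 * P.q 1 ^ 2 * P.q J ^ 2)) (1 / (2 * P.q (2 * (2 * (J + r + 1) : ℕ)))) (P.q m) υ υ' f g := by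
    intro r
    have hq := P.q_pos (2 * (2 * (J + r + 1) : ℕ))
    obtain ⟨ξ, h1, k, hk, h2, g, hg, hgd⟩ := ret μ hμ mG hG (δ := 1 / (2 * P.q (2 * (2 * (J + r + 1) : ℕ)))) (by positivity)
    exact step hk J (2 * (J + r + 1)) (by omega) (by omega) h1 h2 g hg (by positivity) hgd (by field_simp; rfl)
  choose υ υ' f g m hm ho using hdom
  set κ := 1 / (16 * P.q 1 ^ 2 * P.q J ^ 2) with hκ
  have hκ0 : 0 < κ := by have := P.q_pos J; positivity
  set e : ℕ → ℝ := fun r => P.q (-(r:ℤ)) with he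
  have he0 : Tendsto e atTop (𝓝 0) := P.q_tendsto
  have hδe : ∀ r, 1 / (2 * P.q (2 * (2 * (J + r + 1) : ℕ))) ≤ e r := by
    intro r
    have h1 : P.q r ≤ P.q (2 * (2 * (J + r + 1) : ℕ)) := P.q_mono (by omega)
    have h2 := P.q_neg r
    have h3 := P.q_pos r
    have h4 := P.q_pos (-r)
    rw [div_le_iff₀ (by linarith), he]
    simp only
    nlinarith
  have hwe : ∀ r, 1 ≤ e r * P.q (m r) := by
    intro r
    simp only [he]
    rw [← P.q_add, ← P.q_zero]; exact P.q_mono (by have := hm r; omega)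
  have small : ∀ r x, |x| * P.q (m r) ≤ 1 → |x| ≤ e r := by
    intro r x hx
    have := hwe r
    have h3 := P.q_pos (m r)
    by_contra hc
    push Not at hc
    nlinarith
  have w1 : ∀ r, 1 ≤ P.q (m r) := fun r => by rw [← P.q_zero]; exact P.q_mono (by have := hm r; omega)
  have hte : ∀ r, |(υ r).t (f r) * (g r) 1 0| ≤ P.q 1 * e r := by
    intro r
    have h1 := (ho r).tb
    have h2 := (ho r).w1
    have h3 : |(g r) 1 0| * P.q (m r) ≤ e r := by
      have h4 := hwe r
      have h3 := P.q_pos (m r)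
      have h5 : (|(g r) 1 0| * P.q (m r)) * P.q (m r) ≤ e r * P.q (m r) := by nlinarith
      exact le_of_mul_le_mul_right h5 h3
    rw [abs_mul]
    calc _ ≤ P.q (m r) * P.q 1 * |(g r) 1 0| := by gcongr
      _ = P.q 1 * (|(g r) 1 0| * P.q (m r)) := by ring
      _ ≤ _ := by gcongr
  have g10 : ∀ r, |(g r) 1 0| ≤ e r := fun r => small r _ (by
    have h2 := (ho r).w1
    have := w1 r
    have : |(g r) 1 0| * P.q (m r) ≤ |(g r) 1 0| * P.q (m r) ^ 2 := by gcongr; nlinarith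
    linarith)
  have tbd : ∀ r x, |x| * P.q (m r) ≤ 1 → |(υ r).t (f r) * x| ≤ P.q 1 := by
    intro r x hx
    rw [abs_mul]
    calc _ ≤ P.q (m r) * P.q 1 * |x| := by gcongr; exact (ho r).tb
      _ = P.q 1 * (|x| * P.q (m r)) := by ring
      _ ≤ P.q 1 * 1 := by gcongr
      _ = _ := mul_one _
  have t2bd : ∀ r, |(υ r).t (f r) ^ 2 * (g r) 1 0| ≤ P.q 1 ^ 2 := by
    intro r
    have h1 := (ho r).tb
    have h2 := (ho r).w1
    rw [abs_mul, abs_pow]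
    calc _ ≤ (P.q (m r) * P.q 1) ^ 2 * |(g r) 1 0| := by gcongr
      _ = P.q 1 ^ 2 * (|(g r) 1 0| * P.q (m r) ^ 2) := by ring
      _ ≤ P.q 1 ^ 2 * 1 := by gcongr
      _ = _ := mul_one _
  have lim : ∀ (u : Ultrafilter ℕ) (φ : ℕ → ℝ) (B : ℝ), (∀ r, |φ r| ≤ B) → ∃ s, Tendsto φ u (𝓝 s) := by
    intro u φ B hB
    obtain ⟨s, -, hs⟩ := ultra_limK (isCompact_Icc (a := -B) (b := B)) u φ (Eventually.of_forall fun r => abs_le.1 (hB r))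
    exact ⟨s, hs⟩
  set u : Ultrafilter ℕ := Ultrafilter.of atTop with hu
  have hule : (u : Filter ℕ) ≤ atTop := Ultrafilter.of_le atTop
  obtain ⟨y, hy⟩ := ultra_lim u υ
  obtain ⟨y', hy'⟩ := ultra_lim u υ'
  obtain ⟨z, hz⟩ := ultra_lim u fun n => TE (f n) (υ n)
  obtain ⟨z', hz'⟩ := ultra_lim u fun n => TE (f n) (υ' n)
  obtain ⟨s, hs⟩ := lim u (fun r => (υ r).t (f r) * (g r 1 1 - g r 0 0) - (υ r).t (f r) ^ 2 * g r 1 0) (P.q 1 + P.q 1 ^ 2) fun r =>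
    (abs_sub _ _).trans (add_le_add (tbd r _ (ho r).w0) (t2bd r))
  obtain ⟨b, hb⟩ := lim u (fun r => (υ r).t (f r) * g r 1 2) (P.q 1) fun r => tbd r _ (ho r).w2
  obtain ⟨c, hc⟩ := lim u (fun r => (υ r).t (f r) * g r 2 0) (P.q 1) fun r => tbd r _ (ho r).w3
  have heu := he0.mono_left hule
  have L : ∀ {φ : ℕ → ℝ} {a : ℝ}, (∀ n, |φ n - a| ≤ e n) → Tendsto φ u (𝓝 a) := fun h => lim_abs_le heu h
  have L0 : ∀ {φ : ℕ → ℝ}, (∀ n, |φ n| ≤ e n) → Tendsto φ u (𝓝 0) := fun h => L fun n => by simpa using h n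
  have d0 : ∀ i, Tendsto (fun r => g r i i) u (𝓝 1) := fun i => L fun n => ((ho n).dg i).trans (hδe n)
  have a01 : Tendsto (fun r => g r 0 1) u (𝓝 0) := L0 fun n => ((ho n).o1).trans (hδe n)
  have a02 : Tendsto (fun r => g r 0 2) u (𝓝 0) := L0 fun n => ((ho n).o2).trans (hδe n)
  have a21 : Tendsto (fun r => g r 2 1) u (𝓝 0) := L0 fun n => ((ho n).o3).trans (hδe n)
  have a10 : Tendsto (fun r => g r 1 0) u (𝓝 0) := L0 g10
  have a12 : Tendsto (fun r => g r 1 2) u (𝓝 0) := L0 fun n => small n _ (ho n).w2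
  have a20 : Tendsto (fun r => g r 2 0) u (𝓝 0) := L0 fun n => small n _ (ho n).w3
  have te : Tendsto (fun r => (υ r).t (f r) * g r 1 0) u (𝓝 0) := by
    have : Tendsto (fun r => P.q 1 * e r) u (𝓝 0) := by simpa using heu.const_mul (P.q 1)
    exact lim_abs_le this fun n => by simpa using hte n
  refine contra (u : Filter ℕ) k1 k2 k3 k4 k5 k6 k7 υ υ' f y y' z z' hy hy' hz hz' (fun n => (ho n).m1) (fun n => (ho n).m2)
    (fun n => (ho n).m3) (fun n => (ho n).m4) (fun n => (ho n).tt) (fun n => (ho n).hS) g ?_ (fun n => (ho n).rel) s b (-c) ?_ ?_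
  · refine tendsto_pi_nhds.2 fun i => tendsto_pi_nhds.2 fun j => ?_
    fin_cases i <;> fin_cases j
    · exact d0 0
    · exact a01
    · exact a02
    · exact a10
    · exact d0 1
    · exact a12
    · exact a20
    · exact a21
    · exact d0 2
  · simp only [conj_entries]
    refine tendsto_pi_nhds.2 fun i => tendsto_pi_nhds.2 fun j => ?_
    fin_cases i <;> fin_cases j
    · simpa [Hm] using (d0 0).add te
    · simpa [Hm] using a01.add hs
    · simpa [Hm] using a02.add hb
    · simpa [Hm] using a10
    · simpa [Hm] using (d0 1).sub te
    · simpa [Hm] using a12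
    · simpa [Hm] using a20
    · simpa [Hm] using a21.sub hc
    · simpa [Hm] using d0 2
  · rintro ⟨rfl, rfl, h3⟩
    have h3 : c = 0 := by linarith
    subst h3
    have cl : ∀ {φ : ℕ → ℝ}, Tendsto φ u (𝓝 0) → ∀ᶠ n in (u : Filter ℕ), |φ n| < κ := fun {φ} h => by
      have := h.abs; rw [abs_zero] at this
      exact this.eventually (gt_mem_nhds hκ0)
    obtain ⟨n, ⟨n1, n2⟩, n3⟩ := (((cl hs).and (cl hb)).and (cl hc)).exists
    rcases (ho n).di with h | h | h <;> linarith

end LW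

namespace LW
open Topology MeasureTheory Matrix ENNReal
variable {P : Par}

lemma tele (G : ℕ → ℝ) (b : ℝ) (h : ∀ i, |G i| ≤ b) (n : ℕ) :
    |∑ i ∈ Finset.range n, G (i + 1) - ∑ i ∈ Finset.range n, G i| ≤ 2 * b := by
  rw [← Finset.sum_sub_distrib, Finset.sum_range_sub]
  refine (abs_sub _ _).trans ?_
  linarith [h n, h 0]

lemma abs_sum_card {ι : Type*} (s : Finset ι) (G : ι → ℝ) (b : ℝ) (h : ∀ i ∈ s, |G i| ≤ b) :
    |∑ i ∈ s, G i| ≤ s.card * b := by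
  refine (Finset.abs_sum_le_sum_abs _ _).trans ?_
  rw [← nsmul_eq_mul]; exact Finset.sum_le_card_nsmul _ _ _ h

noncomputable def Sm (ξ : E P) (n : ℕ) (h : E P → ℝ) : ℝ :=
  ∑ i ∈ Finset.range n, ∑ j ∈ Finset.range n, ∑ f ∈ FF n, h (TT i (-j) (TE f ξ))

lemma Sm1 (ξ : E P) (n : ℕ) (h : E P → ℝ) (B : ℝ) (hB : ∀ x, |h x| ≤ B) :
    |Sm ξ n (fun x => h (TT 1 0 x)) - Sm ξ n h| ≤ 2 * (n * ((FF n).card * B)) := by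
  have := tele (fun i : ℕ => ∑ j ∈ Finset.range n, ∑ f ∈ FF n, h (TT i (-j) (TE f ξ))) (n * ((FF n).card * B)) (fun i => by
    have := abs_sum_card (Finset.range n) (fun j : ℕ => ∑ f ∈ FF n, h (TT i (-j) (TE f ξ))) _ fun j _ => abs_sum_card _ _ B fun f _ => hB _
    rwa [Finset.card_range] at this) n
  refine le_of_eq_of_le ?_ this
  unfold Sm
  congr 2
  refine Finset.sum_congr rfl fun i _ => Finset.sum_congr rfl fun j _ => Finset.sum_congr rfl fun f _ => ?_
  simp only [TT_TT]; congr 2 <;> push_cast <;> ring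

lemma Sm2 (ξ : E P) (n : ℕ) (h : E P → ℝ) (B : ℝ) (hB : ∀ x, |h x| ≤ B) :
    |Sm ξ n (fun x => h (TT 0 (-1) x)) - Sm ξ n h| ≤ 2 * (n * ((FF n).card * B)) := by
  have := tele (fun j : ℕ => ∑ i ∈ Finset.range n, ∑ f ∈ FF n, h (TT i (-j) (TE f ξ))) (n * ((FF n).card * B)) (fun j => by
    have := abs_sum_card (Finset.range n) (fun i : ℕ => ∑ f ∈ FF n, h (TT i (-j) (TE f ξ))) _ fun j _ => abs_sum_card _ _ B fun f _ => hB _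
    rwa [Finset.card_range] at this) n
  refine le_of_eq_of_le ?_ this
  unfold Sm
  rw [Finset.sum_comm]
  nth_rw 2 [Finset.sum_comm]
  congr 2
  refine Finset.sum_congr rfl fun i _ => Finset.sum_congr rfl fun j _ => Finset.sum_congr rfl fun f _ => ?_
  simp only [TT_TT]; congr 2 <;> push_cast <;> ring

lemma Sm3 (e : F) : ∃ C : ℝ, ∀ (ξ : E P) (n : ℕ) (h : E P → ℝ) (B : ℝ) (_ : ∀ x, |h x| ≤ B),
    |Sm ξ n (fun x => h (TE e x)) - Sm ξ n h| ≤ C * (n * ((FF n).card * B)) := by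
  obtain ⟨c, hc⟩ : ∃ c : ℕ, ∀ k : ℤ, e k ≠ 0 → |k| ≤ c := by
    refine ⟨e.support.sup Int.natAbs, fun k hk => ?_⟩
    rw [Int.abs_eq_natAbs]
    exact_mod_cast Finset.le_sup (f := Int.natAbs) (Finsupp.mem_support_iff.2 hk)
  refine ⟨2 * (c + c), fun ξ n h B hB => ?_⟩
  have hB0 : 0 ≤ B := (abs_nonneg _).trans (hB ξ)
  unfold Sm
  rw [← Finset.sum_sub_distrib]
  have key : ∀ i : ℕ, |∑ j ∈ Finset.range n, ∑ f ∈ FF n, h (TE e (TT i (-j) (TE f ξ))) - ∑ j ∈ Finset.range n, ∑ f ∈ FF n, h (TT i (-j) (TE f ξ))|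
      ≤ 2 * (c + c) * ((FF n).card * B) := by
    intro i
    rw [← Finset.sum_sub_distrib]
    have hgood : ∀ j ∈ Finset.range n, j ∉ (Finset.range n).filter (fun j => j < c ∨ n < j + c) →
        ∑ f ∈ FF n, h (TE e (TT i (-j) (TE f ξ))) - ∑ f ∈ FF n, h (TT i (-j) (TE f ξ)) = 0 := by
      intro j hj hj'
      simp only [Finset.mem_filter, hj, true_and, not_or, not_lt] at hj'
      have hs : sh j e ∈ FF n := mem_FF.2 fun k hk => by
        rw [sh_apply]
        by_contra h0
        have := abs_le.1 (hc _ h0)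
        omega
      rw [sub_eq_zero]
      refine Finset.sum_bij (fun f _ => f + sh j e) (fun f hf => (FF_add n _ hs f).2 hf) (fun a _ b _ hab => add_right_cancel hab)
        (fun b hb => ⟨b - sh j e, (FF_add n _ hs _).1 (by simpa using hb), by simp⟩) fun f _ => ?_
      rw [TE_TT, TE_TE, neg_neg, add_comm]
    rw [← Finset.sum_subset (Finset.filter_subset (fun j => j < c ∨ n < j + c) _) hgood]
    refine (abs_sum_card _ _ (2 * ((FF n).card * B)) fun j _ => ?_).trans ?_
    · refine (abs_sub _ _).trans ?_
      have a1 := abs_sum_card (FF n) (fun f => h (TE e (TT i (-j) (TE f ξ)))) B fun _ _ => hB _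
      have a2 := abs_sum_card (FF n) (fun f => h (TT i (-j) (TE f ξ))) B fun _ _ => hB _
      linarith
    · have hcard : ((Finset.range n).filter (fun j => j < c ∨ n < j + c)).card ≤ c + c := by
        have : (Finset.range n).filter (fun j => j < c ∨ n < j + c) ⊆ Finset.range c ∪ Finset.Ico (n - c) n := by
          intro j hj
          simp only [Finset.mem_filter, Finset.mem_range, Finset.mem_union, Finset.mem_Ico] at hj ⊢
          omega
        refine (Finset.card_le_card this).trans ((Finset.card_union_le _ _).trans ?_)
        rw [Finset.card_range, Nat.card_Ico]; omega
      have : (((Finset.range n).filter (fun j => j < c ∨ n < j + c)).card : ℝ) ≤ c + c := by exact_mod_cast hcard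
      calc _ ≤ (c + c : ℝ) * (2 * ((FF n).card * B)) := by gcongr
        _ = _ := by ring
  refine (abs_sum_card _ _ _ fun i _ => key i).trans (le_of_eq ?_)
  rw [Finset.card_range]; ring

noncomputable def cd (n : ℕ) : ℝ := n * (n * (FF n).card)
lemma FF_card_pos (n : ℕ) : 0 < (FF n).card := Finset.card_pos.2 ⟨0, FF_zero n⟩

lemma emp (ξ : E P) (n : ℕ) (hn : 0 < n) : ∃ μ : ProbabilityMeasure (E P), ∀ h : BoundedContinuousFunction (E P) ℝ,
    ∫ x, h x ∂(μ : Measure (E P)) = (cd n)⁻¹ * Sm ξ n h := by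
  set c : ℝ≥0∞ := ((n * (n * (FF n).card) : ℕ) : ℝ≥0∞) with hc
  have hc0 : c ≠ 0 := by
    have := FF_card_pos n
    rw [hc]; exact_mod_cast (by positivity : 0 < n * (n * (FF n).card)).ne'
  have hct : c ≠ ∞ := by rw [hc]; exact ENNReal.natCast_ne_top _
  set μ : Measure (E P) := c⁻¹ • ∑ i ∈ Finset.range n, ∑ j ∈ Finset.range n, ∑ f ∈ FF n, Measure.dirac (TT i (-j) (TE f ξ)) with hμ
  have hp : IsProbabilityMeasure μ := ⟨by
    rw [hμ]
    simp only [Measure.smul_apply, Measure.finsetSum_apply, measure_univ, Finset.sum_const, Finset.card_range, smul_eq_mul, nsmul_eq_mul, mul_one]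
    rw [hc] at hc0 hct ⊢
    push_cast at hc0 hct ⊢
    exact ENNReal.inv_mul_cancel hc0 hct⟩
  refine ⟨⟨μ, hp⟩, fun h => ?_⟩
  have hi : ∀ (ζ : E P), Integrable (fun x => h x) (Measure.dirac ζ) := fun ζ => h.integrable _
  have h3 : ∀ (i j : ℕ), Integrable (fun x => h x) (∑ f ∈ FF n, Measure.dirac (TT i (-j) (TE f ξ))) := fun i j =>
    integrable_finsetSum_measure.2 fun f _ => hi _
  have h2 : ∀ (i : ℕ), Integrable (fun x => h x) (∑ j ∈ Finset.range n, ∑ f ∈ FF n, Measure.dirac (TT i (-j) (TE f ξ))) := fun i =>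
    integrable_finsetSum_measure.2 fun f _ => h3 _ _
  change ∫ x, h x ∂μ = _
  rw [hμ, integral_smul_measure, integral_finsetSum_measure fun i _ => h2 i]
  unfold Sm
  have : c⁻¹.toReal = (cd n)⁻¹ := by rw [hc, cd, ENNReal.toReal_inv, ENNReal.toReal_natCast]; push_cast; rfl
  rw [this, smul_eq_mul]
  congr 1
  refine Finset.sum_congr rfl fun i _ => ?_
  rw [integral_finsetSum_measure fun j _ => h3 i j]
  refine Finset.sum_congr rfl fun j _ => ?_
  rw [integral_finsetSum_measure fun f _ => hi _]
  exact Finset.sum_congr rfl fun f _ => integral_dirac _ _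

lemma inv_gen (μ : Measure (E P)) (h1 : MeasurePreserving (TT 1 0 : E P → E P) μ μ) (h2 : MeasurePreserving (TT 0 (-1) : E P → E P) μ μ) (k l : ℤ) :
    MeasurePreserving (TT k l : E P → E P) μ μ := by
  have neg : ∀ k l, MeasurePreserving (TT k l : E P → E P) μ μ → MeasurePreserving (TT (-k) (-l) : E P → E P) μ μ := by
    intro k l h
    refine ⟨(cont_TT _ _).measurable, ?_⟩
    conv_lhs => rw [← h.map_eq]
    rw [Measure.map_map (cont_TT _ _).measurable (cont_TT _ _).measurable]
    have : (TT (-k) (-l) ∘ TT k l : E P → E P) = id := by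
      funext ξ; simp [TT_TT, TT_zero]
    rw [this, Measure.map_id]
  have a1 : ∀ k : ℤ, MeasurePreserving (TT k 0 : E P → E P) μ μ := by
    have p : ∀ n : ℕ, MeasurePreserving (TT (n:ℤ) 0 : E P → E P) μ μ := fun n => by
      have := h1.iterate n
      have e : (TT 1 0 : E P → E P)^[n] = TT (n:ℤ) 0 := by funext ξ; rw [TT_iter]; simp
      rwa [e] at this
    intro k
    obtain ⟨n, rfl | rfl⟩ := k.eq_nat_or_neg
    · exact p n
    · have := neg _ _ (p n); rwa [neg_zero] at this
  have a2 : ∀ k : ℤ, MeasurePreserving (TT 0 k : E P → E P) μ μ := by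
    have p : ∀ n : ℕ, MeasurePreserving (TT 0 (-(n:ℤ)) : E P → E P) μ μ := fun n => by
      have := h2.iterate n
      have e : (TT 0 (-1) : E P → E P)^[n] = TT 0 (-(n:ℤ)) := by funext ξ; rw [TT_iter]; simp
      rwa [e] at this
    intro k
    obtain ⟨n, rfl | rfl⟩ := k.eq_nat_or_neg
    · have := neg _ _ (p n); rwa [neg_zero, neg_neg] at this
    · exact p n
  have := (a1 k).comp (a2 l)
  have e : (TT k 0 ∘ TT 0 l : E P → E P) = TT k l := by funext ξ; simp [TT_TT]
  rwa [e] at this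

noncomputable def hb : BoundedContinuousFunction (E P) ℝ :=
  BoundedContinuousFunction.ofNormedAddCommGroup (fun ξ : E P => bif ξ.β 0 then (1:ℝ) else 0)
    ((continuous_of_discreteTopology (f := fun b : Bool => bif b then (1:ℝ) else 0)).comp (E.cont_β 0)) 1
    (fun ξ => by cases ξ.β 0 <;> simp)
lemma hb_apply (ξ : E P) : hb ξ = bif ξ.β 0 then (1:ℝ) else 0 := rfl

lemma exists_inv {ρ : ℝ} (hρ : 0 < ρ) (ξ : ℕ → E P)
    (hf : ∃ᶠ n in atTop, ρ * n ≤ (((Finset.range n).filter fun j : ℕ => (ξ n).β j = true).card : ℝ)) :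
    ∃ Q : Measure (E P), IsProbabilityMeasure Q ∧ Inv Q ∧ Q {ζ : E P | ζ.β 0 = true} ≠ 0 := by
  have hne : (atTop ⊓ 𝓟 {n : ℕ | ρ * n ≤ (((Finset.range n).filter fun j : ℕ => (ξ n).β j = true).card : ℝ)}).NeBot :=
    frequently_mem_iff_neBot.1 hf
  set u : Ultrafilter ℕ := Ultrafilter.of (atTop ⊓ 𝓟 {n : ℕ | ρ * n ≤ (((Finset.range n).filter fun j : ℕ => (ξ n).β j = true).card : ℝ)}) with hu
  have hu1 : (u : Filter ℕ) ≤ atTop := (Ultrafilter.of_le _).trans inf_le_left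
  have hu2 : ∀ᶠ n in (u : Filter ℕ), ρ * n ≤ (((Finset.range n).filter fun j : ℕ => (ξ n).β j = true).card : ℝ) :=
    ((Ultrafilter.of_le _).trans inf_le_right) (mem_principal_self _)
  choose μ hμ using fun n : ℕ => emp (ξ (n + 1)) (n + 1) n.succ_pos
  have hev : ∀ᶠ n in (u : Filter ℕ), 1 ≤ n := hu1 (eventually_ge_atTop 1)
  obtain ⟨Q, hQ⟩ := ultra_lim u fun n => μ (n - 1)
  have hlim : ∀ h : BoundedContinuousFunction (E P) ℝ, Tendsto (fun n => (cd n)⁻¹ * Sm (ξ n) n h) u (𝓝 (∫ x, h x ∂(Q : Measure (E P)))) := by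
    intro h
    refine ((ProbabilityMeasure.tendsto_iff_forall_integral_tendsto.1 hQ) h).congr' ?_
    filter_upwards [hev] with n hn
    rw [hμ, Nat.sub_add_cancel hn]
  have cdpos : ∀ n : ℕ, 1 ≤ n → 0 < cd n := fun n hn => by
    have := FF_card_pos n
    have : (0:ℝ) < n := by exact_mod_cast hn
    unfold cd; positivity
  have pres : ∀ (T : E P → E P), Continuous T → (∃ C : ℝ, ∀ (ξ : E P) (n : ℕ) (h : E P → ℝ) (B : ℝ) (_ : ∀ x, |h x| ≤ B),
      |Sm ξ n (fun x => h (T x)) - Sm ξ n h| ≤ C * (n * ((FF n).card * B))) → MeasurePreserving T (Q : Measure (E P)) Q := by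
    rintro T cT ⟨C, hC⟩
    refine ⟨cT.measurable, ?_⟩
    have : IsFiniteMeasure (Measure.map T (Q : Measure (E P))) := inferInstance
    refine ext_of_forall_integral_eq_of_IsFiniteMeasure fun h => ?_
    rw [integral_map cT.measurable.aemeasurable h.continuous.aestronglyMeasurable]
    have l1 := hlim (h.compContinuous ⟨T, cT⟩)
    have l2 := (hlim h).sub l1
    have l3 : Tendsto (fun n : ℕ => (cd n)⁻¹ * Sm (ξ n) n h - (cd n)⁻¹ * Sm (ξ n) n (h.compContinuous ⟨T, cT⟩)) u (𝓝 0) := by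
      have e0 : Tendsto (fun n : ℕ => |C| * ‖h‖ * (1 / (n:ℝ))) u (𝓝 0) := by
        have := (tendsto_one_div_atTop_nhds_zero_nat (𝕜 := ℝ)).const_mul (|C| * ‖h‖)
        rw [mul_zero] at this
        exact this.mono_left hu1
      refine squeeze_zero_norm' ?_ e0
      filter_upwards [hev] with n hn
      have hn' : (0:ℝ) < n := by exact_mod_cast hn
      have hF : (0:ℝ) < (FF n).card := by exact_mod_cast FF_card_pos n
      have b := hC (ξ n) n h ‖h‖ fun x => h.norm_coe_le_norm x
      rw [← mul_sub, norm_mul, norm_inv, Real.norm_eq_abs, abs_of_pos (cdpos n hn), Real.norm_eq_abs, abs_sub_comm]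
      rw [inv_mul_le_iff₀ (cdpos n hn)]
      refine b.trans ?_
      have : cd n * (|C| * ‖h‖ * (1 / (n:ℝ))) = |C| * (n * ((FF n).card * ‖h‖)) := by
        unfold cd; field_simp
      rw [this]
      gcongr
      exact le_abs_self C
    exact (sub_eq_zero.1 (tendsto_nhds_unique l2 l3)).symm
  refine ⟨Q, inferInstance, ⟨?_, fun e => pres _ (cont_TE e) (Sm3 e)⟩, ?_⟩
  · exact inv_gen _ (pres _ (cont_TT _ _) ⟨2, Sm1⟩) (pres _ (cont_TT _ _) ⟨2, Sm2⟩)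
  · have l1 := hlim hb
    have l2 : ρ ≤ ∫ x, hb x ∂(Q : Measure (E P)) := by
      refine ge_of_tendsto l1 ?_
      filter_upwards [hev, hu2] with n hn hn2
      have hn' : (0:ℝ) < n := by exact_mod_cast hn
      have hF : (0:ℝ) < (FF n).card := by exact_mod_cast FF_card_pos n
      have : Sm (ξ n) n hb = n * ((FF n).card * ((Finset.range n).filter fun j : ℕ => (ξ n).β j = true).card) := by
        unfold Sm
        simp only [hb_apply, TT_β, TE_β, Finset.sum_const, Finset.card_range, nsmul_eq_mul, ← Finset.mul_sum]
        rw [Finset.card_filter]; push_cast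
        congr 2
        refine Finset.sum_congr rfl fun j _ => ?_
        simp only [zero_sub, neg_neg]
        cases (ξ n).β j <;> simp
      rw [this, le_inv_mul_iff₀ (cdpos n hn)]
      unfold cd
      calc _ = n * ((FF n).card * (ρ * n)) := by ring
        _ ≤ _ := by gcongr
    intro h0
    have : ∫ x, hb x ∂(Q : Measure (E P)) = 0 := by
      refine integral_eq_zero_of_ae ?_
      have : ∀ᵐ ζ ∂(Q : Measure (E P)), ¬ ζ.β 0 = true := by
        rw [ae_iff]; simpa using h0
      filter_upwards [this] with ζ hζ
      rw [hb_apply]; simp [hζ]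
    linarith

theorem no_tree {ρ : ℝ} (hρ : 0 < ρ) (ξ : ℕ → E P)
    (hf : ∃ᶠ n in atTop, ρ * n ≤ (((Finset.range n).filter fun j : ℕ => (ξ n).β j = true).card : ℝ)) : False := by
  obtain ⟨Q, hQ, hI, h0⟩ := exists_inv hρ ξ hf
  have mβ : ∀ i (b : Bool), MeasurableSet {ζ : E P | ζ.β i = b} := fun i b =>
    ((isClosed_singleton (x := b)).preimage (E.cont_β i)).measurableSet
  set W : Set (E P) := {ζ : E P | ∃ i, ζ.β i = true} with hW
  have mW : MeasurableSet W := by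
    have : W = ⋃ i, {ζ : E P | ζ.β i = true} := by ext; simp [hW]
    rw [this]; exact MeasurableSet.iUnion fun i => mβ i _
  have wT : ∀ k l, (TT k l : E P → E P) ⁻¹' W = W := by
    intro k l; ext ζ
    simp only [hW, Set.mem_preimage, Set.mem_ofPred_eq, TT_β]
    exact ⟨fun ⟨i, h⟩ => ⟨_, h⟩, fun ⟨i, h⟩ => ⟨i + l, by simpa using h⟩⟩
  have wE : ∀ e, (TE e : E P → E P) ⁻¹' W = W := by
    intro e; ext ζ
    simp only [hW, Set.mem_preimage, Set.mem_ofPred_eq, TE_β]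
  have hI' : Inv (Q.restrict W) := by
    refine ⟨fun k l => ?_, fun e => ?_⟩
    · have := (hI.tt k l).restrict_preimage mW; rwa [wT] at this
    · have := (hI.te e).restrict_preimage mW; rwa [wE] at this
  set Z : ℕ → Set (E P) := fun m => {ζ : E P | ∀ i ≤ (m:ℤ), ζ.β i = false} with hZ
  have mZ : ∀ m, MeasurableSet (Z m) := fun m => by
    have : Z m = ⋂ i : ℤ, ⋂ _ : i ≤ m, {ζ : E P | ζ.β i = false} := by ext; simp [hZ]
    rw [this]; exact MeasurableSet.iInter fun i => MeasurableSet.iInter fun _ => mβ i _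
  refine no_measure (Q.restrict W) hI' ?_ ?_
  · intro h
    apply h0
    have := congrArg (fun μ => μ {ζ : E P | ζ.β 0 = true}) h
    simp only [Measure.restrict_apply (mβ 0 true), Measure.coe_zero, Pi.zero_apply] at this
    have hs : {ζ : E P | ζ.β 0 = true} ⊆ W := fun ζ h => ⟨0, h⟩
    rwa [Set.inter_eq_left.2 hs] at this
  · have hc : ∀ m : ℕ, (Q.restrict W) (Z m) = (Q.restrict W) (Z 0) := by
      intro m
      rw [← (hI'.tt 0 m).measure_preimage (mZ m).nullMeasurableSet]
      congr 1
      ext ζ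
      simp only [hZ, Set.mem_preimage, Set.mem_ofPred_eq, TT_β]
      exact ⟨fun h i hi => by simpa using h (i + m) (by push_cast at hi; omega), fun h i hi => h _ (by push_cast; omega)⟩
    have ht := tendsto_measure_iInter_atTop (μ := Q.restrict W) (s := Z) (fun m => (mZ m).nullMeasurableSet)
      (fun m m' hm ζ h i hi => h i (by omega)) ⟨0, measure_ne_top _ _⟩
    have hz : (Q.restrict W) (⋂ m, Z m) = 0 := by
      rw [Measure.restrict_apply (MeasurableSet.iInter mZ)]
      convert measure_empty (μ := Q)
      rw [Set.eq_empty_iff_forall_notMem]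
      rintro ζ ⟨h1, i, hi⟩
      rw [Set.mem_iInter] at h1
      have := h1 i.toNat i (Int.self_le_toNat i)
      rw [hi] at this; cases this
    rw [hz] at ht
    have h2 : Tendsto (Q.restrict W ∘ Z) atTop (𝓝 ((Q.restrict W) (Z 0))) := by
      refine tendsto_const_nhds.congr fun m => (hc m).symm
    have := tendsto_nhds_unique h2 ht
    simpa [hZ] using this

end LW

namespace LW
open Topology MeasureTheory Matrix ENNReal

def Emb (N : ℤ) (n : ℕ) (β : Finset ℕ) (Z : Finset ℤ) : Prop :=
  ∃ τ : (ℕ → ZMod 3) → ℤ, (∀ f, τ f ∈ Z) ∧ (∀ f f', (∀ k < n, f k = f' k) → τ f = τ f') ∧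
    ∀ l < n, ∀ f f', (∀ k, l < k → k < n → f k = f' k) →
      |τ f - τ f'| < N ^ (l + 1) ∧ (l ∈ β → f l ≠ f' l → N ^ l < |τ f - τ f'|)

lemma fib_lt {N : ℤ} (hN : 1 ≤ N) {n : ℕ} {z z' c : ℤ} (h : z / N ^ n = c) (h' : z' / N ^ n = c) : |z - z'| < N ^ n := by
  have hp : 0 < N ^ n := by positivity
  have a1 := Int.ediv_mul_le z hp.ne'
  have a2 := Int.lt_ediv_add_one_mul_self z hp
  have b1 := Int.ediv_mul_le z' hp.ne'
  have b2 := Int.lt_ediv_add_one_mul_self z' hp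
  rw [h] at a1 a2; rw [h'] at b1 b2
  rw [abs_lt]; constructor <;> linarith

lemma fib_gt {N : ℤ} (hN : 1 ≤ N) {n : ℕ} {z z' c c' : ℤ} (h : z / N ^ n = c) (h' : z' / N ^ n = c') (hc : 2 ≤ |c - c'|) :
    N ^ n < |z - z'| := by
  have hp : 0 < N ^ n := by positivity
  have a1 := Int.ediv_mul_le z hp.ne'
  have a2 := Int.lt_ediv_add_one_mul_self z hp
  have b1 := Int.ediv_mul_le z' hp.ne'
  have b2 := Int.lt_ediv_add_one_mul_self z' hp
  rw [h] at a1 a2; rw [h'] at b1 b2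
  rw [lt_abs]
  rcases le_abs.1 hc with h | h
  · left; nlinarith
  · right; nlinarith

lemma emb_succ {N : ℤ} (hN : 1 ≤ N) {n : ℕ} {β γ : Finset ℕ} {Z : Finset ℤ} {c : ℤ} (hZ : ∀ z ∈ Z, z / N ^ (n + 1) = c)
    (b : ZMod 3 → ℤ) (hb : ∀ x, Emb N n β (Z.filter fun z => z / N ^ n = b x)) (h1 : ∀ l ∈ γ, l < n → l ∈ β)
    (h2 : n ∈ γ → ∀ x y, x ≠ y → 2 ≤ |b x - b y|) : Emb N (n + 1) γ Z := by
  choose τ t1 t2 t3 using hb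
  have tm : ∀ x f, τ x f ∈ Z ∧ τ x f / N ^ n = b x := fun x f => Finset.mem_filter.1 (t1 x f)
  refine ⟨fun f => τ (f n) f, fun f => (tm _ f).1, fun f f' h => ?_, fun l hl f f' h => ?_⟩
  · simp only [h n (by omega)]
    exact t2 _ f f' fun k hk => h k (by omega)
  · rcases Nat.lt_succ_iff_lt_or_eq.1 hl with hl | rfl
    · have e : f n = f' n := h n hl (by omega)
      simp only [e]
      obtain ⟨a1, a2⟩ := t3 (f' n) l hl f f' fun k hk hk' => h k hk (by omega)
      exact ⟨a1, fun hg => a2 (h1 l hg hl)⟩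
    · refine ⟨fib_lt hN (hZ _ (tm _ _).1) (hZ _ (tm _ _).1), fun hg hne => ?_⟩
      exact fib_gt hN (tm _ _).2 (tm _ _).2 (h2 hg _ _ hne)

lemma three_of_five (s : Finset ℤ) (h : 5 ≤ s.card) : ∃ b : ZMod 3 → ℤ, (∀ x, b x ∈ s) ∧ ∀ x y, x ≠ y → 2 ≤ |b x - b y| := by
  obtain ⟨t, ht, hc⟩ := Finset.exists_subset_card_eq h
  set e := t.orderEmbOfFin hc
  have m : ∀ i j : Fin 5, i < j → e i < e j := fun i j h => e.strictMono h
  have m1 := m 0 1 (by decide)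
  have m2 := m 1 2 (by decide)
  have m3 := m 2 3 (by decide)
  have m4 := m 3 4 (by decide)
  have em : ∀ i, e i ∈ s := fun i => ht (t.orderEmbOfFin_mem hc i)
  refine ⟨![e 0, e 2, e 4], fun x => ?_, fun x y hxy => ?_⟩
  · fin_cases x <;> exact em _
  · rw [le_abs]
    fin_cases x <;> fin_cases y <;> first | exact absurd rfl hxy | (simp; omega)

open Classical in
theorem tree_count {N : ℤ} (hN : 1 ≤ N) : ∀ (n : ℕ) (Z : Finset ℤ) (c : ℤ), (∀ z ∈ Z, z / N ^ n = c) →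
    (Z.card : ℤ) ≤ 4 ^ n * ∑ β ∈ (Finset.range n).powerset, if Emb N n β Z then N ^ β.card else 0 := by
  intro n
  induction n with
  | zero =>
    intro Z c hZ
    rcases Z.eq_empty_or_nonempty with rfl | ⟨z, hz⟩
    · simp; split_ifs <;> simp
    · have h1 : Z.card ≤ 1 := Finset.card_le_one.2 fun a ha b hb => by
        have := hZ a ha; have := hZ b hb; simp at *; omega
      have h2 : Emb N 0 ∅ Z := ⟨fun _ => z, fun _ => hz, fun _ _ _ => rfl, fun l hl => by omega⟩
      simp [h2]; exact_mod_cast h1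
  | succ n ih =>
    intro Z c hZ
    set A := Z.image fun z => z / N ^ n with hA
    have hdiv : ∀ z ∈ Z, z / N ^ n / N = c := fun z hz => by
      rw [Int.ediv_ediv_of_nonneg (by positivity), ← pow_succ, hZ z hz]
    have hAc : (A.card : ℤ) ≤ N := by
      have : A ⊆ Finset.Ico (c * N) (c * N + N) := by
        intro a ha
        obtain ⟨z, hz, rfl⟩ := Finset.mem_image.1 ha
        have h1 := hdiv z hz
        have h2 := Int.ediv_mul_le (z / N ^ n) (b := N) (by omega)
        have h3 := Int.lt_ediv_add_one_mul_self (z / N ^ n) (b := N) (by omega)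
        rw [h1] at h2 h3
        rw [Finset.mem_Ico]; constructor <;> linarith
      have := Finset.card_le_card this
      rw [Int.card_Ico] at this
      omega
    set Y : ℤ → Finset ℤ := fun a => Z.filter fun z => z / N ^ n = a with hY
    have hcard : Z.card = ∑ a ∈ A, (Y a).card := Finset.card_eq_sum_card_image _ _
    set mm : Finset ℕ → Finset ℤ := fun β => A.filter fun a => Emb N n β (Y a) with hmm
    have e1 : (Z.card : ℤ) ≤ 4 ^ n * ∑ β ∈ (Finset.range n).powerset, (mm β).card * N ^ β.card := by
      rw [hcard]; push_cast
      calc _ ≤ ∑ a ∈ A, 4 ^ n * ∑ β ∈ (Finset.range n).powerset, (if Emb N n β (Y a) then N ^ β.card else 0) :=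
            Finset.sum_le_sum fun a _ => ih (Y a) a fun z hz => (Finset.mem_filter.1 hz).2
        _ = _ := by
            rw [← Finset.mul_sum, Finset.sum_comm]
            congr 1
            refine Finset.sum_congr rfl fun β _ => ?_
            rw [← Finset.sum_filter, Finset.sum_const, nsmul_eq_mul]
    rw [Finset.range_add_one, Finset.sum_powerset_insert Finset.notMem_range_self, ← Finset.sum_add_distrib]
    refine e1.trans ?_
    rw [pow_succ, mul_assoc, Finset.mul_sum _ _ (4:ℤ)]
    refine mul_le_mul_of_nonneg_left (Finset.sum_le_sum fun β hβ => ?_) (by positivity)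
    have hβ' : n ∉ β := fun h => Finset.notMem_range_self (Finset.mem_powerset.1 hβ h)
    rw [Finset.card_insert_of_notMem hβ', pow_succ]
    have hNp : 0 ≤ N ^ β.card := by positivity
    have hmA : ((mm β).card : ℤ) ≤ N := le_trans (by exact_mod_cast Finset.card_filter_le _ _) hAc
    have hme : ∀ a ∈ mm β, Emb N n β (Z.filter fun z => z / N ^ n = a) := fun a ha => (Finset.mem_filter.1 ha).2
    have hY0 : 0 ≤ (if Emb N (n+1) (insert n β) Z then N ^ β.card * N else 0) := by split_ifs <;> positivity
    have hX0 : 0 ≤ (if Emb N (n+1) β Z then N ^ β.card else 0) := by split_ifs <;> positivity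
    by_cases h5 : 5 ≤ (mm β).card
    · obtain ⟨b, hb1, hb2⟩ := three_of_five _ h5
      have : Emb N (n+1) (insert n β) Z := emb_succ hN hZ b (fun x => hme _ (hb1 x))
        (fun l hl hln => by rcases Finset.mem_insert.1 hl with rfl | h; omega; exact h) fun _ => hb2
      rw [if_pos this]
      nlinarith
    · rcases (mm β).eq_empty_or_nonempty with h0 | ⟨a, ha⟩
      · rw [h0]; simp only [Finset.card_empty, Nat.cast_zero, zero_mul]; linarith
      · have : Emb N (n+1) β Z := emb_succ hN hZ (fun _ => a) (fun x => hme _ ha)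
          (fun l hl hln => hl) fun h => absurd h hβ'
        rw [if_pos this]
        have : ((mm β).card : ℤ) ≤ 4 := by omega
        nlinarith

end LW

namespace LW
open Topology MeasureTheory Matrix ENNReal

lemma mk_cfg (P : Par) (g : Mat) (Z : Finset ℤ) (s : ℤ → ℝ)
    (hs : ∀ z ∈ Z, z ≤ s z ∧ s z ≤ z + 1 ∧ U 0 1 (s z) * g ∈ XX P.ε) (n : ℕ) (β : Finset ℕ)
    (hE : Emb ((P.M : ℤ) ^ 3) n β Z) : ∃ ξ : E P, ∀ j < n, j ∈ β → ξ.β j = true := by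
  obtain ⟨τ, t1, t2, t3⟩ := hE
  have hq : ∀ m : ℕ, (((P.M : ℤ) ^ 3) ^ m : ℤ) = P.q m := fun m => by
    unfold Par.q; push_cast; rw [_root_.zpow_mul]; norm_cast
  let bt : F → ℕ → ZMod 3 := fun f k => f (k : ℤ)
  let t : F → ℝ := fun f => s (τ (bt f)) - s (τ (bt 0))
  have ht : ∀ f f', |t f - t f' - ((τ (bt f) - τ (bt f') : ℤ) : ℝ)| ≤ 1 := fun f f' => by
    have h1 := hs _ (t1 (bt f)); have h2 := hs _ (t1 (bt f'))
    simp only [t]; push_cast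
    rw [abs_le]; constructor <;> linarith [h1.1, h1.2.1, h2.1, h2.2.1]
  have hup : ∀ (f f') (m : ℕ), |τ (bt f) - τ (bt f')| < ((P.M : ℤ) ^ 3) ^ m → |t f - t f'| ≤ P.q m := by
    intro f f' m h
    have h1 : ((|τ (bt f) - τ (bt f')| + 1 : ℤ) : ℝ) ≤ P.q m := by rw [← hq]; exact_mod_cast h
    have h2 := ht f f'
    have h3 := abs_sub_abs_le_abs_sub (t f - t f') ((τ (bt f) - τ (bt f') : ℤ) : ℝ)
    push_cast at *
    linarith
  have hlo : ∀ (f f') (m : ℕ), ((P.M : ℤ) ^ 3) ^ m < |τ (bt f) - τ (bt f')| → P.q m ≤ |t f - t f'| := by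
    intro f f' m h
    have h1 : P.q m + 1 ≤ ((|τ (bt f) - τ (bt f')| : ℤ) : ℝ) := by rw [← hq]; exact_mod_cast h
    have h2 := ht f f'
    have h3 := abs_sub_abs_le_abs_sub ((τ (bt f) - τ (bt f') : ℤ) : ℝ) (t f - t f')
    rw [abs_sub_comm] at h2
    push_cast at *
    linarith
  have heq : ∀ f f' : F, (∀ k : ℕ, k < n → f k = f' k) → t f - t f' = 0 := fun f f' h => by
    simp only [t]; rw [t2 (bt f) (bt f') h]; ring
  have hg0 : U 0 1 (s (τ (bt 0))) * g ∈ XX P.ε := (hs _ (t1 _)).2.2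
  obtain ⟨x0, hx0, hr0⟩ := P.red' hg0
  have hx : ∀ c : ℤ × ℤ × F, ∃ x ∈ P.D, Rel (P.a c.1 c.2.1 * (U 0 1 (t c.2.2) * x0)) x ∧ (c = 0 → x = x0) := by
    intro c
    by_cases hc : c = 0
    · subst hc
      refine ⟨x0, hx0, ?_, fun _ => rfl⟩
      simp only [Prod.fst_zero, Prod.snd_zero, t, sub_self, P.a_zero, U_zero, Matrix.one_mul]
      exact Rel.refl hr0.det
    · have h1 : Rel (U 0 1 (s (τ (bt c.2.2))) * g) (U 0 1 (t c.2.2) * x0) := by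
        have := hr0.lmul (U_absdet h01 (t c.2.2))
        rw [← Matrix.mul_assoc, U_add h01] at this
        simpa [t] using this
      obtain ⟨x, hx, hr⟩ := P.red' (P.a_mem (h1.mem (hs _ (t1 _)).2.2) c.1 c.2.1)
      exact ⟨x, hx, hr, fun h => absurd h hc⟩
  choose X hXD hXr hX0 using hx
  refine ⟨⟨(X, t, fun l => decide (0 ≤ l ∧ l.toNat < n ∧ l.toNat ∈ β)), ?_⟩, ?_⟩
  · refine ⟨hXD, fun i j f => ?_, by simp [t], ?_, ?_⟩
    · simp only [hX0 0 rfl]; exact hXr (i, j, f)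
    · intro l f f' h
      show |t f - t f'| ≤ _
      by_cases hl : l < 0
      · rw [heq f f' fun k _ => h k (by omega), abs_zero]; exact (P.q_pos _).le
      · lift l to ℕ using by omega
        by_cases hn : l < n
        · have := hup f f' (l + 1) (t3 l hn _ _ fun k hk _ => h k (by exact_mod_cast hk)).1
          exact_mod_cast this
        · rcases Nat.eq_zero_or_pos n with h0 | h0
          · rw [heq f f' fun k hk => by omega, abs_zero]; exact (P.q_pos _).le
          · have h1 := (t3 (n - 1) (by omega) (bt f) (bt f') fun k hk _ => by omega).1
            have := hup f f' (n - 1 + 1) h1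
            exact this.trans (P.q_mono (by omega))
    · intro l f f' h hne hb
      simp only [decide_eq_true_eq] at hb
      obtain ⟨h0, hn, hb⟩ := hb
      lift l to ℕ using h0
      exact hlo f f' l ((t3 l hn _ _ fun k hk _ => h k (by exact_mod_cast hk)).2 hb hne)
  · intro j hj hb
    show decide _ = true
    simp [hj, hb]

open Classical in
theorem core {ε d : ℝ} (hε : 0 < ε) (hd : 0 < d) (K : ℕ) : ∃ L : ℕ, K ≤ L ∧ 2 ≤ L ∧ ∀ (Z : Finset ℤ) (g : Mat),
    (∀ z ∈ Z, 0 ≤ z ∧ z < L) → (∀ z ∈ Z, ∃ s : ℝ, z ≤ s ∧ s ≤ z + 1 ∧ U 0 1 s * g ∈ XX ε) →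
    (Z.card : ℝ) ≤ (L : ℝ) ^ d := by
  obtain ⟨K0, C, hred⟩ := reduction ε hε
  obtain ⟨M, hM2, hM8⟩ : ∃ M : ℕ, 2 ≤ M ∧ (8:ℝ) ≤ ((M:ℝ) ^ 3) ^ (d / 2) := by
    have h1 : Tendsto (fun M : ℕ => ((M:ℝ) ^ 3) ^ (d / 2)) atTop atTop :=
      (tendsto_rpow_atTop (by positivity)).comp ((tendsto_pow_atTop (by norm_num)).comp tendsto_natCast_atTop_atTop)
    obtain ⟨M, h⟩ := ((h1.eventually_ge_atTop 8).and (eventually_ge_atTop 2)).exists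
    exact ⟨M, h.2, h.1⟩
  let P : Par := ⟨ε, C, M, hε, hM2, fun g hg => hred g hg.1 fun v hv _ => hg.2 v hv⟩
  by_contra hcon
  push Not at hcon
  have hN1 : 2 ≤ M ^ 3 := le_trans (by norm_num : 2 ≤ 2 ^ 3) (Nat.pow_le_pow_left hM2 3)
  have key : ∀ n ≥ K + 1, ∃ ξ : E P, d / 2 * n ≤
      (((Finset.range n).filter fun j : ℕ => ξ.β j = true).card : ℝ) := by
    intro n hn
    have hnn : n < (M ^ 3) ^ n := Nat.lt_pow_self (by omega)
    obtain ⟨Z, g, hZ, hs, hc⟩ := hcon ((M ^ 3) ^ n) (by omega) (le_trans hN1 (Nat.le_self_pow (by omega) _))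
    have hs' : ∀ z : ℤ, ∃ s : ℝ, z ∈ Z → z ≤ s ∧ s ≤ z + 1 ∧ U 0 1 s * g ∈ XX ε := fun z => by
      by_cases h : z ∈ Z
      · obtain ⟨s, h⟩ := hs z h; exact ⟨s, fun _ => h⟩
      · exact ⟨0, fun h' => absurd h' h⟩
    choose s hs' using hs'
    have ht := tree_count (N := (M:ℤ) ^ 3) (by exact_mod_cast (by omega : 1 ≤ M ^ 3)) n Z 0 (fun z hz => by
      obtain ⟨h1, h2⟩ := hZ z hz
      exact Int.ediv_eq_zero_of_lt h1 (by exact_mod_cast h2))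
    have hb : ∃ β ∈ (Finset.range n).powerset, Emb ((M:ℤ) ^ 3) n β Z ∧ d / 2 * n ≤ (β.card : ℝ) := by
      by_contra hno
      push Not at hno
      set W : ℝ := (M:ℝ) ^ 3 with hW
      have hW1 : 1 < W := by rw [hW]; exact_mod_cast (by omega : 1 < M ^ 3)
      have h1 : (Z.card : ℝ) ≤ 4 ^ n * ∑ β ∈ (Finset.range n).powerset, W ^ (d / 2 * n) := by
        have : (Z.card : ℝ) ≤ 4 ^ n * ∑ β ∈ (Finset.range n).powerset,
            if Emb ((M:ℤ) ^ 3) n β Z then W ^ β.card else 0 := by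
          rw [hW]; exact_mod_cast ht
        refine this.trans (mul_le_mul_of_nonneg_left (Finset.sum_le_sum fun β hβ => ?_) (by positivity))
        split_ifs with hE
        · rw [← Real.rpow_natCast]
          exact Real.rpow_le_rpow_of_exponent_le hW1.le (hno β hβ hE).le
        · positivity
      rw [Finset.sum_const, Finset.card_powerset, Finset.card_range, nsmul_eq_mul] at h1
      have h2 : W ^ (d / 2 * n) = (W ^ (d / 2)) ^ n := by rw [Real.rpow_mul (by positivity), Real.rpow_natCast]
      have h3 : (((M ^ 3) ^ n : ℕ) : ℝ) ^ d = (W ^ (d / 2)) ^ n * (W ^ (d / 2)) ^ n := by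
        push_cast
        rw [← hW, ← h2, ← Real.rpow_add (by positivity), ← Real.rpow_natCast, ← Real.rpow_mul (by positivity)]
        congr 1; ring
      have h4 : (8:ℝ) ^ n ≤ (W ^ (d / 2)) ^ n := pow_le_pow_left₀ (by norm_num) hM8 n
      have h5 : (4:ℝ) ^ n * (2 ^ n) = 8 ^ n := by rw [← mul_pow]; norm_num
      rw [h3] at hc
      rw [h2] at h1
      push_cast at h1
      rw [← mul_assoc, h5] at h1
      have := mul_le_mul_of_nonneg_right h4 (by positivity : 0 ≤ (W ^ (d / 2)) ^ n)
      linarith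
    obtain ⟨β, hβ, hE, hcard⟩ := hb
    obtain ⟨ξ, hξ⟩ := mk_cfg P g Z s (fun z hz => hs' z hz) n β hE
    refine ⟨ξ, hcard.trans ?_⟩
    exact_mod_cast Finset.card_le_card fun j hj => Finset.mem_filter.2
      ⟨Finset.mem_powerset.1 hβ hj, hξ j (Finset.mem_range.1 (Finset.mem_powerset.1 hβ hj)) hj⟩
  have key' : ∀ n, ∃ ξ : E P, K + 1 ≤ n → d / 2 * n ≤
      (((Finset.range n).filter fun j : ℕ => ξ.β j = true).card : ℝ) := fun n => by
    by_cases h : K + 1 ≤ n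
    · obtain ⟨ξ, h⟩ := key n h; exact ⟨ξ, fun _ => h⟩
    · obtain ⟨ξ, _⟩ := key (K + 1) le_rfl; exact ⟨ξ, fun h' => absurd h' h⟩
  choose ξ hξ using key'
  exact no_tree (by positivity : 0 < d / 2) ξ
    ((eventually_ge_atTop (K + 1)).mono fun n hn => hξ n hn).frequently

end LW

namespace LW
open Topology MeasureTheory Matrix ENNReal

def V (s t : ℝ) : Mat := !![1, s, 0; 0, 1, 0; 0, t, 1]
lemma V_eq (s t : ℝ) : V s t = U 0 1 s * U 2 1 t := by
  ext i j
  fin_cases i <;> fin_cases j <;>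
    simp [V, U, transvection, Matrix.mul_apply, Fin.sum_univ_three, Matrix.single_apply]
lemma V_add (s t s' t' : ℝ) : V s t * V s' t' = V (s + s') (t + t') := by
  ext i j
  fin_cases i <;> fin_cases j <;> simp [V, Matrix.mul_apply, Fin.sum_univ_three, add_comm]
lemma V_z (s : ℝ) : V s 0 = U 0 1 s := by rw [V_eq, U_zero, Matrix.mul_one]
lemma V_det (s t : ℝ) : |(V s t).det| = 1 := by simp [V, det_fin_three]
lemma V_lim {ι : Type*} {u : Filter ι} {s t : ι → ℝ} {a b : ℝ} (hs : Tendsto s u (𝓝 a))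
    (ht : Tendsto t u (𝓝 b)) : Tendsto (fun k => V (s k) (t k)) u (𝓝 (V a b)) := by
  simp only [V_eq]
  exact mul_lim (((U_cont 0 1).tendsto a).comp hs) (((U_cont 2 1).tendsto b).comp ht)

lemma proj {ε : ℝ} (hε : 0 < ε) {Z : Finset ℤ} {g : Mat}
    (h : ∀ z ∈ Z, ∃ s t : ℝ, z ≤ s ∧ s ≤ z + 1 ∧ V s t * g ∈ XX ε) :
    ∃ g' : Mat, ∀ z ∈ Z, ∃ s : ℝ, z ≤ s ∧ s ≤ z + 1 ∧ U 0 1 s * g' ∈ XX ε := by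
  rcases Z.eq_empty_or_nonempty with rfl | ⟨z0, hz0⟩
  · exact ⟨1, by simp⟩
  obtain ⟨K0, C, hred⟩ := reduction ε hε
  let P : Par := ⟨ε, C, 2, hε, le_rfl, fun g hg => hred g hg.1 fun v hv _ => hg.2 v hv⟩
  obtain ⟨s0, t0, -, -, h0⟩ := h z0 hz0
  have hx : ∀ n : ℕ, ∃ x ∈ P.D, Rel (P.a n 0 * (V s0 t0 * g)) x := fun n => P.red' (Par.a_mem P h0 n 0)
  choose x hxD hx using hx
  let u := hyperfilter ℕ
  obtain ⟨y, hyD, hy⟩ := ultra_limK P.isCompact_D u x (Eventually.of_forall hxD)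
  refine ⟨U 0 1 (-s0) * y, fun z hz => ?_⟩
  obtain ⟨s, t, h1, h2, h3⟩ := h z hz
  refine ⟨s, h1, h2, ?_⟩
  rw [← Matrix.mul_assoc, U_add h01, ← V_z]
  have hu : (u : Filter ℕ) ≤ atTop := Nat.hyperfilter_le_atTop
  have hl : Tendsto (fun n : ℕ => V (s + -s0) (P.q (-(n:ℤ)) * (t - t0)) * x n) u (𝓝 (V (s + -s0) 0 * y)) := by
    refine mul_lim (V_lim tendsto_const_nhds ?_) hy
    have := (P.q_tendsto.mono_left hu).mul_const (t - t0)
    rwa [zero_mul] at this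
  refine (isClosed_XX ε).mem_of_tendsto hl (Eventually.of_forall fun n => ?_)
  have r := (hx n).lmul (V_det (s + -s0) (P.q (-(n:ℤ)) * (t - t0)))
  refine r.mem ?_
  have e : P.a n 0 * V (s - s0) (t - t0) = V (s + -s0) (P.q (-(n:ℤ)) * (t - t0)) * P.a n 0 := by
    rw [V_eq, V_eq, ← Matrix.mul_assoc, P.a_U01, Matrix.mul_assoc, P.a_U21, Matrix.mul_assoc, P.q_zero, one_mul,
      zero_sub]; rfl
  rw [← Matrix.mul_assoc, ← e, Matrix.mul_assoc, ← Matrix.mul_assoc (V _ _), V_add, sub_add_cancel, sub_add_cancel]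
  exact Par.a_mem P h3 n 0

def sw : Mat := !![0, 0, 1; 0, 1, 0; 1, 0, 0]
lemma sw_V (s t : ℝ) : sw * V s t = V t s * sw := by
  ext i j
  fin_cases i <;> fin_cases j <;> simp [V, sw, Matrix.mul_apply, Fin.sum_univ_three]
lemma sw_mem {ε : ℝ} {g : Mat} (hg : g ∈ XX ε) : sw * g ∈ XX ε := by
  refine ⟨by rw [det_mul, abs_mul, hg.1]; simp [sw, det_fin_three], fun v hv => ?_⟩
  have := hg.2 v hv
  rw [← Matrix.mulVec_mulVec]
  set w := g *ᵥ cst v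
  have e : ∏ i, (sw *ᵥ w) i = ∏ i, w i := by
    simp [Fin.prod_univ_three, sw, Matrix.mulVec, dotProduct, Fin.sum_univ_three]; ring
  rwa [e]

theorem core2 {ε d : ℝ} (hε : 0 < ε) (hd : 0 < d) : ∃ L : ℕ, 2 ≤ L ∧ ∀ (W : Finset (ℤ × ℤ)) (g : Mat),
    (∀ w ∈ W, 0 ≤ w.1 ∧ w.1 < L ∧ 0 ≤ w.2 ∧ w.2 < L) →
    (∀ w ∈ W, ∃ s t : ℝ, w.1 ≤ s ∧ s ≤ w.1 + 1 ∧ w.2 ≤ t ∧ t ≤ w.2 + 1 ∧ V s t * g ∈ XX ε) →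
    (W.card : ℝ) ≤ (L : ℝ) ^ d := by
  obtain ⟨L, -, hL, H⟩ := core hε (half_pos hd) 0
  refine ⟨L, hL, fun W g hW hs => ?_⟩
  have b1 : ((W.image Prod.fst).card : ℝ) ≤ (L:ℝ) ^ (d / 2) := by
    obtain ⟨g', hg'⟩ := proj (Z := W.image Prod.fst) (g := g) hε fun z hz => by
      obtain ⟨w, hw, rfl⟩ := Finset.mem_image.1 hz
      obtain ⟨s, t, h⟩ := hs w hw
      exact ⟨s, t, h.1, h.2.1, h.2.2.2.2⟩
    refine H _ g' (fun z hz => ?_) hg'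
    obtain ⟨w, hw, rfl⟩ := Finset.mem_image.1 hz
    exact ⟨(hW w hw).1, (hW w hw).2.1⟩
  have b2 : ((W.image Prod.snd).card : ℝ) ≤ (L:ℝ) ^ (d / 2) := by
    obtain ⟨g', hg'⟩ := proj (Z := W.image Prod.snd) (g := sw * g) hε fun z hz => by
      obtain ⟨w, hw, rfl⟩ := Finset.mem_image.1 hz
      obtain ⟨s, t, h⟩ := hs w hw
      refine ⟨t, s, h.2.2.1, h.2.2.2.1, ?_⟩
      rw [← Matrix.mul_assoc, ← sw_V, Matrix.mul_assoc]
      exact sw_mem h.2.2.2.2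
    refine H _ g' (fun z hz => ?_) hg'
    obtain ⟨w, hw, rfl⟩ := Finset.mem_image.1 hz
    exact (hW w hw).2.2
  have hsub : W ⊆ W.image Prod.fst ×ˢ W.image Prod.snd := fun w hw =>
    Finset.mem_product.2 ⟨Finset.mem_image_of_mem _ hw, Finset.mem_image_of_mem _ hw⟩
  have hc := Finset.card_le_card hsub
  rw [Finset.card_product] at hc
  have hL0 : (0:ℝ) < L := by exact_mod_cast (by omega : 0 < L)
  calc (W.card : ℝ) ≤ (W.image Prod.fst).card * (W.image Prod.snd).card := by exact_mod_cast hc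
    _ ≤ (L:ℝ) ^ (d / 2) * (L:ℝ) ^ (d / 2) := by gcongr
    _ = _ := by rw [← Real.rpow_add hL0, add_halves]

def EE (ε : ℝ) : Set (ℝ × ℝ) := {p | ∀ v : Fin 3 → ℤ, v 1 ≠ 0 →
  ε ≤ |(v 0 + p.1 * v 1) * v 1 * (v 2 + p.2 * v 1)|}

noncomputable def H (σ a b : ℝ) : Mat := !![σ⁻¹, σ⁻¹ * a, 0; 0, σ ^ 2, 0; 0, σ⁻¹ * b, σ⁻¹]
lemma H_det {σ : ℝ} (hσ : 0 < σ) (a b : ℝ) : |(H σ a b).det| = 1 := by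
  have : (H σ a b).det = 1 := by simp [H, det_fin_three]; field_simp
  rw [this, abs_one]
lemma V_H {σ : ℝ} (hσ : 0 < σ) (s t a b : ℝ) : V s t * H σ a b = H σ (a + σ ^ 3 * s) (b + σ ^ 3 * t) := by
  ext i j
  fin_cases i <;> fin_cases j <;> simp [V, H, Matrix.mul_apply, Fin.sum_univ_three] <;> field_simp <;> ring
lemma H_vec {ε σ a b : ℝ} (hσ : 0 < σ) (h : (a, b) ∈ EE ε) (v : Fin 3 → ℤ) (hv : v ≠ 0) :
    ε ≤ |∏ i, (H σ a b *ᵥ cst v) i| ∨ ∃ i, σ⁻¹ ≤ |(H σ a b *ᵥ cst v) i| := by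
  by_cases h1 : v 1 = 0
  · right
    have hp : ∀ z : ℤ, z ≠ 0 → σ⁻¹ ≤ |σ⁻¹ * (z : ℝ)| := fun z hz => by
      have : (1:ℝ) ≤ |(z:ℝ)| := by exact_mod_cast Int.one_le_abs hz
      rw [abs_mul, abs_of_pos (inv_pos.2 hσ)]
      exact le_mul_of_one_le_right (inv_pos.2 hσ).le this
    by_cases h0 : v 0 = 0
    · refine ⟨2, ?_⟩
      have h2 : v 2 ≠ 0 := fun h2 => hv (by ext i; fin_cases i <;> assumption)
      have := hp _ h2
      simpa [H, Matrix.mulVec, dotProduct, Fin.sum_univ_three, cst, h1] using this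
    · refine ⟨0, ?_⟩
      have := hp _ h0
      simpa [H, Matrix.mulVec, dotProduct, Fin.sum_univ_three, cst, h1] using this
  · left
    have e : ∏ i, (H σ a b *ᵥ cst v) i = (v 0 + a * v 1) * v 1 * (v 2 + b * v 1) := by
      simp [H, Matrix.mulVec, dotProduct, Fin.sum_univ_three, cst, Fin.prod_univ_three]
      field_simp; ring
    rw [e]; exact h v h1
end LW

namespace LW
open Topology MeasureTheory Matrix ENNReal

lemma zoom_lim {ε : ℝ} {u : Filter ℕ} [u.NeBot] {y : ℕ → Mat} {Y : Mat} (hy : Tendsto y u (𝓝 Y)) {σ a b : ℕ → ℝ}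
    (hσ : ∀ k, 0 < σ k) (hσ' : Tendsto (fun k => (σ k)⁻¹) u atTop)
    (h : ∀ᶠ k in u, (a k, b k) ∈ EE ε ∧ Rel (H (σ k) (a k) (b k)) (y k)) : Y ∈ XX ε := by
  have hent : ∀ v : Fin 3 → ℤ, ∀ i, Tendsto (fun k => (y k *ᵥ cst v) i) u (𝓝 ((Y *ᵥ cst v) i)) := fun v i => by
    have hc : Continuous fun g : Mat => (g *ᵥ cst v) i :=
      (continuous_apply i).comp (Continuous.matrix_mulVec continuous_id continuous_const)
    exact (hc.tendsto Y).comp hy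
  refine ⟨?_, fun v hv => ?_⟩
  · have h1 : Tendsto (fun k => |(y k).det|) u (𝓝 |Y.det|) :=
      ((continuous_id.matrix_det.abs : Continuous fun g : Mat => |g.det|).tendsto Y).comp hy
    refine tendsto_nhds_unique h1 (tendsto_const_nhds.congr' ?_)
    filter_upwards [h] with k hk
    exact hk.2.det.symm
  · have h1 : Tendsto (fun k => |∏ i, (y k *ᵥ cst v) i|) u (𝓝 |∏ i, (Y *ᵥ cst v) i|) :=
      (tendsto_finsetProd _ fun i _ => hent v i).abs
    refine ge_of_tendsto h1 ?_
    have hb : ∀ᶠ k in u, ∀ i, |(y k *ᵥ cst v) i| < (σ k)⁻¹ := by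
      rw [eventually_all]
      intro i
      filter_upwards [(hent v i).abs.eventually (gt_mem_nhds (lt_add_one _)),
        hσ'.eventually_ge_atTop (|(Y *ᵥ cst v) i| + 1)] with k h1 h2
      exact h1.trans_le h2
    filter_upwards [h, hb] with k hk hbk
    obtain ⟨he, -, P, hP, hyk⟩ := hk
    have hPv : P *ᵥ v ≠ 0 := fun h0 => hv (by
      obtain ⟨Q, -, -, hQ⟩ := int_inv hP
      rw [← Matrix.one_mulVec v, ← hQ, ← Matrix.mulVec_mulVec, h0, Matrix.mulVec_zero])
    have e : y k *ᵥ cst v = H (σ k) (a k) (b k) *ᵥ cst (P *ᵥ v) := by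
      rw [hyk, ← Matrix.mulVec_mulVec, ic_mulVec]
    rcases H_vec (hσ k) he _ hPv with h | ⟨i, hi⟩
    · rwa [← e] at h
    · rw [← e] at hi
      exact absurd (hbk i) (not_lt.2 hi)

theorem zoom {ε B : ℝ} (hε : 0 < ε) (hB : 0 ≤ B) (L : ℕ)
    (hH : ∀ (W : Finset (ℤ × ℤ)) (g : Mat), (∀ w ∈ W, 0 ≤ w.1 ∧ w.1 < L ∧ 0 ≤ w.2 ∧ w.2 < L) →
      (∀ w ∈ W, ∃ s t : ℝ, w.1 ≤ s ∧ s ≤ w.1 + 1 ∧ w.2 ≤ t ∧ t ≤ w.2 + 1 ∧ V s t * g ∈ XX ε) → (W.card : ℝ) ≤ B) :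
    ∃ σ0 > 0, ∀ σ : ℝ, 0 < σ → σ ≤ σ0 → ∀ (a b : ℝ) (W : Finset (ℤ × ℤ)),
      (∀ w ∈ W, 0 ≤ w.1 ∧ w.1 < L ∧ 0 ≤ w.2 ∧ w.2 < L) →
      (∀ w ∈ W, ∃ s t : ℝ, w.1 ≤ s ∧ s ≤ w.1 + 1 ∧ w.2 ≤ t ∧ t ≤ w.2 + 1 ∧ (a + σ ^ 3 * s, b + σ ^ 3 * t) ∈ EE ε) →
      (W.card : ℝ) ≤ B := by
  by_contra hcon
  push Not at hcon
  have hk : ∀ k : ℕ, (0:ℝ) < 1 / ((k:ℝ) + 1) := fun k => Nat.one_div_pos_of_nat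
  choose! σ hσ hσk a b W hW hs hc using fun k : ℕ => hcon _ (hk k)
  let u := hyperfilter ℕ
  have hu : (u : Filter ℕ) ≤ atTop := Nat.hyperfilter_le_atTop
  have hσ' : Tendsto (fun k => (σ k)⁻¹) u atTop := by
    refine Tendsto.mono_left ?_ hu
    refine tendsto_atTop_mono (fun k => ?_) (tendsto_natCast_atTop_atTop (R := ℝ))
    have h1 := inv_anti₀ (hσ k) (hσk k)
    rw [one_div, inv_inv] at h1
    linarith
  obtain ⟨W0, hW0⟩ : ∃ W0, ∀ᶠ k in (u : Filter ℕ), W k = W0 := by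
    have hfin : ((Finset.Ico (0:ℤ) L ×ˢ Finset.Ico (0:ℤ) L).powerset : Set (Finset (ℤ × ℤ))).Finite :=
      Finset.finite_toSet _
    have := (Ultrafilter.eventually_exists_mem_iff (f := u) (P := fun W0 k => W k = W0) hfin).1
      (Eventually.of_forall fun k => ⟨W k, ?_, rfl⟩)
    · obtain ⟨W0, -, h⟩ := this; exact ⟨W0, h⟩
    · simp only [Finset.coe_powerset, Set.mem_preimage, Set.mem_powerset_iff]
      intro w hw
      have := hW k w hw
      simp only [Finset.coe_product, Finset.coe_Ico, Set.mem_prod, Set.mem_Ico]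
      tauto
  obtain ⟨k0, hk0⟩ := hW0.exists
  have hne : W0.Nonempty := by
    rw [← hk0, ← Finset.card_pos]
    exact_mod_cast hB.trans_lt (hc k0)
  obtain ⟨w0, hw0⟩ := hne
  have hs' : ∀ (w : ℤ × ℤ) (k : ℕ), ∃ s t : ℝ, w ∈ W k → w.1 ≤ s ∧ s ≤ w.1 + 1 ∧ w.2 ≤ t ∧ t ≤ w.2 + 1 ∧
      (a k + σ k ^ 3 * s, b k + σ k ^ 3 * t) ∈ EE ε := fun w k => by
    by_cases h : w ∈ W k
    · obtain ⟨s, t, h⟩ := hs k w h; exact ⟨s, t, fun _ => h⟩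
    · exact ⟨0, 0, fun h' => absurd h' h⟩
  choose s t hst using hs'
  have ev : ∀ w ∈ W0, ∀ᶠ k in (u : Filter ℕ), w.1 ≤ s w k ∧ s w k ≤ w.1 + 1 ∧ w.2 ≤ t w k ∧ t w k ≤ w.2 + 1 ∧
      (a k + σ k ^ 3 * s w k, b k + σ k ^ 3 * t w k) ∈ EE ε := fun w hw => by
    filter_upwards [hW0] with k hk
    exact hst w k (hk ▸ hw)
  have lim : ∀ w : ℤ × ℤ, ∃ S T : ℝ, w ∈ W0 → w.1 ≤ S ∧ S ≤ w.1 + 1 ∧ w.2 ≤ T ∧ T ≤ w.2 + 1 ∧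
      Tendsto (s w) u (𝓝 S) ∧ Tendsto (t w) u (𝓝 T) := fun w => by
    by_cases hw : w ∈ W0
    · obtain ⟨S, hS, hS'⟩ := ultra_limK (isCompact_Icc (a := (w.1:ℝ)) (b := w.1 + 1)) u (s w)
        ((ev w hw).mono fun k h => ⟨h.1, h.2.1⟩)
      obtain ⟨T, hT, hT'⟩ := ultra_limK (isCompact_Icc (a := (w.2:ℝ)) (b := w.2 + 1)) u (t w)
        ((ev w hw).mono fun k h => ⟨h.2.2.1, h.2.2.2.1⟩)
      exact ⟨S, T, fun _ => ⟨hS.1, hS.2, hT.1, hT.2, hS', hT'⟩⟩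
    · exact ⟨0, 0, fun h' => absurd h' hw⟩
  choose S T hST using lim
  obtain ⟨K0, C, hred⟩ := reduction ε hε
  have hx : ∀ᶠ k in (u : Filter ℕ), ∃ x, Rel (H (σ k) (a k + σ k ^ 3 * s w0 k) (b k + σ k ^ 3 * t w0 k)) x ∧
      ∀ i j, |x i j| ≤ C := by
    filter_upwards [ev w0 hw0, hσ'.eventually_gt_atTop K0] with k hk hK
    refine hred _ (H_det (hσ k) _ _) fun v hv hvK => ?_
    rcases H_vec (hσ k) hk.2.2.2.2 v hv with h | ⟨i, hi⟩
    · exact h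
    · exact absurd (hi.trans (hvK i)) (not_le.2 hK)
  obtain ⟨x, hx⟩ := hx.choice
  have hcpt : IsCompact {g : Mat | ∀ i j, |g i j| ≤ C} := by
    have h1 : IsCompact (Set.univ.pi fun _ : Fin 3 => Set.univ.pi fun _ : Fin 3 => Set.Icc (-C) C) :=
      isCompact_univ_pi fun _ => isCompact_univ_pi fun _ => isCompact_Icc
    have : {g : Mat | ∀ i j, |g i j| ≤ C} =
      (Set.univ.pi fun _ : Fin 3 => Set.univ.pi fun _ : Fin 3 => Set.Icc (-C) C) := by
      apply Set.ext; intro g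
      constructor
      · intro h i _ j _; exact abs_le.1 (h i j)
      · intro h i j; exact abs_le.2 (h i trivial j trivial)
    rw [this]; exact h1
  obtain ⟨X, -, hX⟩ := ultra_limK hcpt u x (hx.mono fun k h => h.2)
  have hfin := hH W0 (V (-S w0) (-T w0) * X) (by rw [← hk0]; exact hW k0) fun w hw => by
    obtain ⟨h1, h2, h3, h4, h5, h6⟩ := hST w hw
    obtain ⟨-, -, -, -, h5', h6'⟩ := hST w0 hw0
    refine ⟨S w, T w, h1, h2, h3, h4, ?_⟩
    rw [← Matrix.mul_assoc, V_add, ← sub_eq_add_neg, ← sub_eq_add_neg]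
    refine zoom_lim (mul_lim (V_lim (h5.sub h5') (h6.sub h6')) hX) hσ hσ'
      (a := fun k => a k + σ k ^ 3 * s w k) (b := fun k => b k + σ k ^ 3 * t w k) ?_
    filter_upwards [ev w hw, hx] with k h7 h8
    refine ⟨h7.2.2.2.2, ?_⟩
    have := h8.1.lmul (V_det (s w k - s w0 k) (t w k - t w0 k))
    rw [V_H (hσ k)] at this
    convert this using 2 <;> ring
  rw [← hk0] at hfin
  exact absurd hfin (not_le.2 (hc k0))

end LW

namespace LW
open Topology MeasureTheory Matrix ENNReal

noncomputable def gr (x : ℝ) (p : ℝ × ℝ) : ℤ × ℤ := (⌊x * p.1⌋, ⌊x * p.2⌋)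

lemma gr_finite (x R : ℝ) (hx : 0 ≤ x) : (gr x '' {p : ℝ × ℝ | |p.1| ≤ R ∧ |p.2| ≤ R}).Finite := by
  refine ((Set.finite_Icc (⌊-(x * R)⌋) (⌊x * R⌋)).prod (Set.finite_Icc (⌊-(x * R)⌋) (⌊x * R⌋))).subset ?_
  rintro _ ⟨p, ⟨h1, h2⟩, rfl⟩
  rw [abs_le] at h1 h2
  refine ⟨⟨Int.floor_mono ?_, Int.floor_mono ?_⟩, ⟨Int.floor_mono ?_, Int.floor_mono ?_⟩⟩ <;> nlinarith

open Classical in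
lemma gr_step {ε B : ℝ} {L : ℕ} (hL : 2 ≤ L) {σ : ℝ} (hσ : 0 < σ) {x : ℝ} (hσx : σ ^ 3 * (x * L) = 1)
    (hz : ∀ (a b : ℝ) (W : Finset (ℤ × ℤ)), (∀ w ∈ W, 0 ≤ w.1 ∧ w.1 < L ∧ 0 ≤ w.2 ∧ w.2 < L) →
      (∀ w ∈ W, ∃ s t : ℝ, w.1 ≤ s ∧ s ≤ w.1 + 1 ∧ w.2 ≤ t ∧ t ≤ w.2 + 1 ∧ (a + σ ^ 3 * s, b + σ ^ 3 * t) ∈ EE ε) →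
      (W.card : ℝ) ≤ B) (F : Set (ℝ × ℝ)) (hF : F ⊆ EE ε) (O O' : Finset (ℤ × ℤ)) (hO : (O : Set (ℤ × ℤ)) = gr x '' F)
    (hO' : (O' : Set (ℤ × ℤ)) = gr (x * L) '' F) : (O'.card : ℝ) ≤ O.card * B := by
  have hL0 : (L:ℝ) ≠ 0 := by positivity
  let f : ℤ × ℤ → ℤ × ℤ := fun o => (o.1 / L, o.2 / L)
  have hmap : ∀ o ∈ O', f o ∈ O := by
    intro o ho
    rw [← Finset.mem_coe, hO'] at ho
    obtain ⟨p, hp, rfl⟩ := ho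
    rw [← Finset.mem_coe, hO]
    refine ⟨p, hp, ?_⟩
    have : ∀ y : ℝ, ⌊x * y⌋ = ⌊x * L * y⌋ / L := fun y => by
      rw [← Int.floor_div_natCast]; congr 1; field_simp
    simp only [gr, f, this]
  rw [Finset.card_eq_sum_card_fiberwise (f := f) (t := O) hmap]
  push_cast
  rw [← nsmul_eq_mul]
  refine Finset.sum_le_card_nsmul _ _ _ fun o _ => ?_
  let W := (O'.filter fun o' => f o' = o).image fun o' => (o'.1 - L * o.1, o'.2 - L * o.2)
  have hWc : (O'.filter fun o' => f o' = o).card = W.card := by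
    refine (Finset.card_image_of_injective _ fun a b h => ?_).symm
    simp only [Prod.mk.injEq, sub_left_inj] at h
    exact Prod.ext h.1 h.2
  rw [hWc]
  refine hz (σ ^ 3 * (L * o.1)) (σ ^ 3 * (L * o.2)) W (fun w hw => ?_) fun w hw => ?_
  · obtain ⟨o', ho', rfl⟩ := Finset.mem_image.1 hw
    have hf := (Finset.mem_filter.1 ho').2
    have h1 : o'.1 / L = o.1 := congrArg Prod.fst hf
    have h2 : o'.2 / L = o.2 := congrArg Prod.snd hf
    have hLz : (0:ℤ) < L := by omega
    have e1 := Int.emod_add_mul_ediv o'.1 L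
    have e2 := Int.emod_add_mul_ediv o'.2 L
    have a1 := Int.emod_nonneg o'.1 hLz.ne'
    have a2 := Int.emod_nonneg o'.2 hLz.ne'
    have b1 := Int.emod_lt_of_pos o'.1 hLz
    have b2 := Int.emod_lt_of_pos o'.2 hLz
    rw [h1] at e1; rw [h2] at e2
    refine ⟨?_, ?_, ?_, ?_⟩ <;> dsimp only <;> linarith
  · obtain ⟨o', ho', rfl⟩ := Finset.mem_image.1 hw
    have hm := (Finset.mem_filter.1 ho').1
    rw [← Finset.mem_coe, hO'] at hm
    obtain ⟨p, hp, rfl⟩ := hm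
    refine ⟨x * L * p.1 - L * o.1, x * L * p.2 - L * o.2, ?_, ?_, ?_, ?_, ?_⟩
    · push_cast; simpa [gr] using Int.floor_le (x * L * p.1)
    · push_cast; have := (Int.lt_floor_add_one (x * L * p.1)).le; simp only [gr]; linarith
    · push_cast; simpa [gr] using Int.floor_le (x * L * p.2)
    · push_cast; have := (Int.lt_floor_add_one (x * L * p.2)).le; simp only [gr]; linarith
    · have e : ∀ c y : ℝ, σ ^ 3 * c + σ ^ 3 * (x * L * y - c) = y := fun c y => by
        linear_combination y * hσx
      rw [e, e]; exact hF hp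

theorem dim_box {ε : ℝ} (hε : 0 < ε) (R : ℝ) {d : NNReal} (hd : 0 < d) :
    dimH (EE ε ∩ {p : ℝ × ℝ | |p.1| ≤ R ∧ |p.2| ≤ R}) ≤ d := by
  obtain ⟨L, hL, hH⟩ := core2 hε (d := (d : ℝ)) (by exact_mod_cast hd)
  obtain ⟨σ0, hσ0, hz⟩ := zoom hε (by positivity) L hH
  have hL0 : (0:ℝ) < L := by exact_mod_cast (by omega : 0 < L)
  have hL1 : (1:ℝ) < L := by exact_mod_cast (by omega : 1 < L)
  set F := EE ε ∩ {p : ℝ × ℝ | |p.1| ≤ R ∧ |p.2| ≤ R} with hF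
  have hfin : ∀ q : ℕ, (gr ((L:ℝ) ^ q) '' F).Finite := fun q =>
    (gr_finite _ R (by positivity)).subset (Set.image_mono Set.inter_subset_right)
  let O : ℕ → Finset (ℤ × ℤ) := fun q => (hfin q).toFinset
  have hO : ∀ q, (O q : Set (ℤ × ℤ)) = gr ((L:ℝ) ^ q) '' F := fun q => (hfin q).coe_toFinset
  have hlim : Tendsto (fun q : ℕ => (L:ℝ)⁻¹ ^ q) atTop (𝓝 0) :=
    tendsto_pow_atTop_nhds_zero_of_lt_one (by positivity) (inv_lt_one_of_one_lt₀ hL1)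
  obtain ⟨q0, hq0⟩ := (hlim.eventually (ge_mem_nhds (by positivity : (0:ℝ) < σ0 ^ 3))).exists_forall_of_atTop
  have step : ∀ q ≥ q0, ((O (q + 1)).card : ℝ) ≤ (O q).card * (L:ℝ) ^ (d:ℝ) := by
    intro q hq
    set σ : ℝ := ((L:ℝ)⁻¹ ^ (q + 1)) ^ ((1:ℝ) / 3) with hσd
    have hσ : 0 < σ := by positivity
    have h3 : σ ^ 3 = (L:ℝ)⁻¹ ^ (q + 1) := by
      rw [hσd, ← Real.rpow_natCast, ← Real.rpow_mul (by positivity)]; norm_num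
    have hle : σ ≤ σ0 := by
      refine le_of_pow_le_pow_left₀ three_ne_zero hσ0.le ?_
      rw [h3]; exact hq0 (q + 1) (by omega)
    refine gr_step hL hσ (x := (L:ℝ) ^ q) ?_ (hz σ hσ hle) F Set.inter_subset_left (O q) (O (q + 1)) (hO q) ?_
    · rw [h3, ← pow_succ, ← mul_pow, inv_mul_cancel₀ hL0.ne', one_pow]
    · rw [hO, pow_succ]
  have hcard : ∀ m : ℕ, ((O (q0 + m)).card : ℝ) ≤ (O q0).card * ((L:ℝ) ^ (d:ℝ)) ^ m := by
    intro m
    induction m with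
    | zero => simp
    | succ m ih =>
      refine (step (q0 + m) (by omega)).trans ?_
      rw [pow_succ, ← mul_assoc]
      exact mul_le_mul_of_nonneg_right ih (by positivity)
  refine dimH_le_of_hausdorffMeasure_ne_top (ne_top_of_le_ne_top (ENNReal.natCast_ne_top (O q0).card) ?_)
  have hdiam : ∀ (m : ℕ) (o : O (q0 + m)), Metric.ediam {p ∈ F | gr ((L:ℝ) ^ (q0 + m)) p = o} ≤
      ENNReal.ofReal ((L:ℝ)⁻¹ ^ (q0 + m)) := by
    intro m o
    refine Metric.ediam_le fun p hp p' hp' => ?_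
    have hg : gr ((L:ℝ) ^ (q0 + m)) p = gr ((L:ℝ) ^ (q0 + m)) p' := hp.2.trans hp'.2.symm
    have hpos : 0 < (L:ℝ) ^ (q0 + m) := by positivity
    have key : ∀ y y' : ℝ, ⌊(L:ℝ) ^ (q0 + m) * y⌋ = ⌊(L:ℝ) ^ (q0 + m) * y'⌋ →
        edist y y' ≤ ENNReal.ofReal ((L:ℝ)⁻¹ ^ (q0 + m)) := fun y y' h => by
      have := Int.abs_sub_lt_one_of_floor_eq_floor h
      rw [← mul_sub, abs_mul, abs_of_pos hpos] at this
      rw [edist_dist, Real.dist_eq]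
      refine ENNReal.ofReal_le_ofReal ?_
      rw [inv_pow, ← one_div, le_div_iff₀ hpos]; linarith
    rw [Prod.edist_eq]
    exact max_le (key _ _ (congrArg Prod.fst hg)) (key _ _ (congrArg Prod.snd hg))
  have hlim2 : Tendsto (fun m : ℕ => ENNReal.ofReal ((L:ℝ)⁻¹ ^ (q0 + m))) atTop (𝓝 0) := by
    rw [← ENNReal.ofReal_zero]
    exact ENNReal.tendsto_ofReal (hlim.comp (tendsto_atTop_mono (fun m => Nat.le_add_left m q0) tendsto_id))
  refine (Measure.hausdorffMeasure_le_liminf_sum (d:ℝ) F _ hlim2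
    (fun m (o : O (q0 + m)) => {p ∈ F | gr ((L:ℝ) ^ (q0 + m)) p = o}) (Eventually.of_forall hdiam)
    (Eventually.of_forall fun m p hp => ?_)).trans ?_
  · have : gr ((L:ℝ) ^ (q0 + m)) p ∈ O (q0 + m) := by
      rw [← Finset.mem_coe, hO]; exact ⟨p, hp, rfl⟩
    exact Set.mem_iUnion.2 ⟨⟨_, this⟩, hp, rfl⟩
  · refine liminf_le_of_le (by isBoundedDefault) fun b hb => ?_
    obtain ⟨m, hm⟩ := hb.exists
    refine hm.trans ?_
    refine (Finset.sum_le_card_nsmul _ _ (ENNReal.ofReal (((L:ℝ)⁻¹ ^ (q0 + m)) ^ (d:ℝ))) fun o _ => ?_).trans ?_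
    · rw [← ENNReal.ofReal_rpow_of_nonneg (by positivity) (by positivity)]
      exact ENNReal.rpow_le_rpow (hdiam m o) (by positivity)
    · rw [nsmul_eq_mul, Finset.card_univ, Fintype.card_coe, ← ENNReal.ofReal_natCast, ← ENNReal.ofReal_mul (by positivity),
        ← ENNReal.ofReal_natCast]
      refine ENNReal.ofReal_le_ofReal ?_
      refine (mul_le_mul_of_nonneg_right (hcard m) (by positivity)).trans ?_
      rw [mul_assoc]
      refine mul_le_of_le_one_right (by positivity) ?_
      have e : ((L:ℝ) ^ (d:ℝ)) ^ m = ((L:ℝ) ^ m) ^ (d:ℝ) := by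
        rw [← Real.rpow_natCast, ← Real.rpow_natCast, ← Real.rpow_mul hL0.le, ← Real.rpow_mul hL0.le, mul_comm]
      rw [e, ← Real.mul_rpow (by positivity) (by positivity)]
      refine Real.rpow_le_one (by positivity) ?_ (by positivity)
      rw [pow_add, inv_pow, inv_pow, mul_left_comm, mul_inv_cancel₀ (by positivity), mul_one]
      exact inv_le_one_of_one_le₀ (one_le_pow₀ hL1.le)

lemma exc_mem (p : ℝ × ℝ) (h : 0 < Filter.atTop.liminf (fun n : ℕ =>
    ENNReal.ofReal ((n : ℝ) * distToInt (n * p.1) * distToInt (n * p.2)))) : ∃ m : ℕ, p ∈ EE (1 / (m + 1)) := by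
  obtain ⟨c, hc0, hc⟩ := ENNReal.lt_iff_exists_nnreal_btwn.1 h
  obtain ⟨n0, hn0⟩ := (eventually_lt_of_lt_liminf hc).exists_forall_of_atTop
  have hc0' : (0:ℝ) < c := by exact_mod_cast hc0
  have hpos : 0 < (c:ℝ) / ((n0:ℝ) + 1) ^ 3 := by positivity
  obtain ⟨m, hm⟩ := exists_nat_one_div_lt hpos
  refine ⟨m, fun v hv => hm.le.trans ?_⟩
  have hb : 0 < (v 1).natAbs := Int.natAbs_pos.2 hv
  have h1 := hn0 ((n0 + 1) * (v 1).natAbs) (by nlinarith)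
  rw [ENNReal.lt_ofReal_iff_toReal_lt (by simp), ENNReal.coe_toReal] at h1
  have hab : ((v 1).natAbs : ℝ) = |(v 1 : ℝ)| := by rw [Nat.cast_natAbs, Int.cast_abs]
  have key : ∀ (y : ℝ) (k : ℤ), distToInt ((((n0 + 1) * (v 1).natAbs : ℕ) : ℝ) * y) ≤ (n0 + 1) * |k + y * v 1| := by
    intro y k
    have e : ((n0:ℝ) + 1) * |k + y * v 1| = |((n0:ℝ) + 1) * (k + y * v 1)| := by
      rw [abs_mul, abs_of_pos (by positivity : (0:ℝ) < n0 + 1)]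
    rw [e, distToInt]
    push_cast
    rw [hab]
    rcases lt_or_ge (v 1 : ℝ) 0 with hs | hs
    · rw [abs_of_neg hs]
      refine (round_le _ ((n0 + 1) * k : ℤ)).trans (le_of_eq ?_)
      rw [← abs_neg]; push_cast; congr 1; ring
    · rw [abs_of_nonneg hs]
      refine (round_le _ (-((n0 + 1) * k) : ℤ)).trans (le_of_eq ?_)
      push_cast; congr 1; ring
  have k0 := key p.1 (v 0)
  have k2 := key p.2 (v 2)
  have hd : ∀ y, 0 ≤ distToInt y := fun y => abs_nonneg _
  rw [div_le_iff₀ (by positivity)]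
  refine h1.le.trans ?_
  refine (mul_le_mul (mul_le_mul_of_nonneg_left k0 (by positivity)) k2 (hd _) (by positivity)).trans (le_of_eq ?_)
  rw [abs_mul, abs_mul]; push_cast; rw [hab]; ring
end LW

/-- Einsiedler–Katok–Lindenstrauss: the set of exceptions `(α, β)` to
Littlewood's conjecture, i.e. of pairs with `liminf_{n→∞} n‖nα‖‖nβ‖ > 0`, has Hausdorff
dimension zero. -/
theorem littlewood_exceptions_hausdorff_dimension_zero :
    dimH {p : ℝ × ℝ |
      0 < Filter.atTop.liminf (fun n : ℕ =>
        ENNReal.ofReal ((n : ℝ) * distToInt (n * p.1) * distToInt (n * p.2)))} = 0 := by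
  have hsub : {p : ℝ × ℝ | 0 < Filter.atTop.liminf (fun n : ℕ =>
        ENNReal.ofReal ((n : ℝ) * distToInt (n * p.1) * distToInt (n * p.2)))} ⊆
      ⋃ m : ℕ, ⋃ R : ℕ, (LW.EE (1 / (m + 1)) ∩ {p : ℝ × ℝ | |p.1| ≤ R ∧ |p.2| ≤ R}) := by
    intro p hp
    obtain ⟨m, hm⟩ := LW.exc_mem p hp
    obtain ⟨R, hR⟩ := exists_nat_ge (max |p.1| |p.2|)
    exact Set.mem_iUnion.2 ⟨m, Set.mem_iUnion.2 ⟨R, hm, (le_max_left _ _).trans hR, (le_max_right _ _).trans hR⟩⟩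
  refine le_antisymm ((dimH_mono hsub).trans ?_) zero_le
  rw [dimH_iUnion]
  refine iSup_le fun m => ?_
  rw [dimH_iUnion]
  refine iSup_le fun R => ?_
  refine ENNReal.le_of_forall_pos_le_add fun d hd _ => ?_
  rw [zero_add]
  exact LW.dim_box (by positivity) R hd
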